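/- arXiv:0704.0347 — 2 statements merged into one kernel-verified Lean document; each statement's English description precedes it below -/
import Mathlib

section
/- Let n ≥ 2 and 1 < m < n. There exists a constant C > 0 such that for every Schwartz function φ on ℝⁿ, ‖⟨x⟩^{-m/2} ⟨D_x⟩^{(m-1)/2} e^{itp(D_x)} φ‖_{L²(ℝ^{1+n}_{t,x})} ≤ C ‖φ‖_{L²(ℝⁿ)}. -/
open MeasureTheory Real Complex RealInnerProductSpace

noncomputable section

/-- Fourier transform with convention `(2π)^(-n/2) ∫ e^(-ix·ξ) f(x) dx`. -/
def FT (n : ℕ) (f : EuclideanSpace ℝ (Fin n) → ℂ) (ξ : EuclideanSpace ℝ (Fin n)) : ℂ :=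
  ((2 * π) ^ (-(n : ℝ) / 2) : ℝ) •
    ∫ x : EuclideanSpace ℝ (Fin n), Complex.exp (-Complex.I * ((⟪x, ξ⟫ : ℝ) : ℂ)) * f x

/-- Inverse Fourier transform. -/
def IFT (n : ℕ) (F : EuclideanSpace ℝ (Fin n) → ℂ) (x : EuclideanSpace ℝ (Fin n)) : ℂ :=
  ((2 * π) ^ (-(n : ℝ) / 2) : ℝ) •
    ∫ ξ : EuclideanSpace ℝ (Fin n), Complex.exp (Complex.I * ((⟪x, ξ⟫ : ℝ) : ℂ)) * F ξ

/-- Fourier multiplier with symbol `q`: `q(D_x) f = IFT (q · FT f)`. -/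
def mult (n : ℕ) (q : EuclideanSpace ℝ (Fin n) → ℂ) (f : EuclideanSpace ℝ (Fin n) → ℂ) :
    EuclideanSpace ℝ (Fin n) → ℂ :=
  IFT n fun ξ => q ξ * FT n f ξ

open scoped ENNReal

theorem lintegral_polar {E : Type*} [NormedAddCommGroup E] [NormedSpace ℝ E]
    [FiniteDimensional ℝ E] [Nontrivial E] [MeasurableSpace E] [BorelSpace E]
    (μ : Measure E) [μ.IsAddHaarMeasure] {f : E → ℝ≥0∞} (hf : Measurable f) :
    ∫⁻ x, f x ∂μ = ∫⁻ θ : Metric.sphere (0 : E) 1, (∫⁻ r in Set.Ioi (0 : ℝ),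
      ENNReal.ofReal (r ^ (Module.finrank ℝ E - 1)) * f (r • (θ : E))) ∂μ.toSphere := by
  have h1 : ∫⁻ x, f x ∂μ = ∫⁻ x : ({0}ᶜ : Set E), f x ∂(μ.comap (↑)) := by
    rw [lintegral_subtype_comap (measurableSet_singleton _).compl, restrict_compl_singleton]
  have h2 := μ.measurePreserving_homeomorphUnitSphereProd.symm
    (homeomorphUnitSphereProd E).toMeasurableEquiv
  rw [h1, ← h2.lintegral_comp_emb (MeasurableEquiv.measurableEmbedding _), lintegral_prod]
  · refine lintegral_congr fun θ => ?_
    rw [Measure.volumeIoiPow, lintegral_withDensity_eq_lintegral_mul _ (by fun_prop)]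
    · rw [← lintegral_subtype_comap measurableSet_Ioi]
      refine lintegral_congr fun r => ?_
      simp [Homeomorph.toMeasurableEquiv]
    · refine hf.comp (measurable_subtype_coe.comp ?_)
      exact (MeasurableEquiv.measurable _).comp (by fun_prop)
  · exact (hf.comp (measurable_subtype_coe.comp (MeasurableEquiv.measurable _))).aemeasurable

theorem lintegral_gaussian {E : Type*} [NormedAddCommGroup E] [InnerProductSpace ℝ E]
    [FiniteDimensional ℝ E] [MeasurableSpace E] [BorelSpace E] {b : ℝ} (hb : 0 < b) (w : E) :
    ∫⁻ x : E, ENNReal.ofReal (rexp (-b * ‖x - w‖ ^ 2)) =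
      ENNReal.ofReal ((π / b) ^ (Module.finrank ℝ E / 2 : ℝ)) := by
  rw [lintegral_sub_right_eq_self (fun x : E => ENNReal.ofReal (rexp (-b * ‖x‖ ^ 2))) w,
    ← GaussianFourier.integral_rexp_neg_mul_sq_norm hb, ofReal_integral_eq_lintegral_ofReal]
  · refine Integrable.of_integral_ne_zero ?_
    rw [GaussianFourier.integral_rexp_neg_mul_sq_norm hb]
    positivity
  · exact .of_forall fun x => (exp_pos _).le

theorem lintegral_sphere_gaussian_le (E : Type*) [NormedAddCommGroup E] [InnerProductSpace ℝ E]
    [FiniteDimensional ℝ E] [Nontrivial E] [MeasurableSpace E] [BorelSpace E] :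
    ∃ C : ℝ, 0 < C ∧ ∀ ω : E, ∀ L : ℝ, 0 < L →
      ∫⁻ θ : Metric.sphere (0 : E) 1, ENNReal.ofReal (rexp (-(L ^ 2 * ‖(θ : E) - ω‖ ^ 2)))
        ∂(volume : Measure E).toSphere ≤
      ENNReal.ofReal (C * (L ^ (Module.finrank ℝ E - 1))⁻¹) := by
  have hd : 1 ≤ Module.finrank ℝ E := Module.finrank_pos
  refine ⟨rexp 1 * (2 * π) ^ (Module.finrank ℝ E / 2 : ℝ), by positivity, fun ω L hL => ?_⟩
  set d := Module.finrank ℝ E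
  have key : ENNReal.ofReal (rexp (-1) * L⁻¹) *
      ∫⁻ θ : Metric.sphere (0 : E) 1, ENNReal.ofReal (rexp (-(L ^ 2 * ‖(θ : E) - ω‖ ^ 2)))
        ∂(volume : Measure E).toSphere ≤
      ∫⁻ x : E, ENNReal.ofReal (rexp (-(L ^ 2 / 2) * ‖x - ω‖ ^ 2)) := by
    rw [lintegral_polar volume (by fun_prop), ← lintegral_const_mul _ (by fun_prop)]
    refine lintegral_mono fun θ => ?_
    have hsub : Set.Icc 1 (1 + L⁻¹) ⊆ Set.Ioi (0 : ℝ) := fun r hr => lt_of_lt_of_le one_pos hr.1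
    refine le_trans ?_ (lintegral_mono_set hsub)
    have : ∫⁻ r in Set.Icc (1 : ℝ) (1 + L⁻¹),
        ENNReal.ofReal (rexp (-1) * rexp (-(L ^ 2 * ‖(θ : E) - ω‖ ^ 2))) =
        ENNReal.ofReal (rexp (-1) * L⁻¹) *
          ENNReal.ofReal (rexp (-(L ^ 2 * ‖(θ : E) - ω‖ ^ 2))) := by
      rw [setLIntegral_const, Real.volume_Icc, ← ENNReal.ofReal_mul (by positivity),
        ← ENNReal.ofReal_mul (by positivity)]
      ring_nf
    rw [← this]
    refine setLIntegral_mono (by fun_prop) fun r hr => ?_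
    rw [← ENNReal.ofReal_mul (by have := hsub hr; simp at this; positivity)]
    refine ENNReal.ofReal_le_ofReal ?_
    rw [← Real.exp_add]
    refine le_trans ?_ (le_mul_of_one_le_left (exp_pos _).le (one_le_pow₀ hr.1))
    refine Real.exp_le_exp.2 ?_
    have h1 : ‖r • (θ : E) - ω‖ ≤ ‖(θ : E) - ω‖ + (r - 1) := by
      have : r • (θ : E) - ω = ((θ : E) - ω) + (r - 1) • (θ : E) := by module
      rw [this]
      refine (norm_add_le _ _).trans ?_
      rw [norm_smul, norm_eq_of_mem_sphere θ, Real.norm_eq_abs, abs_of_nonneg (by linarith [hr.1])]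
      simp
    have h2 : L * (r - 1) ≤ 1 := by
      have : L * (r - 1) ≤ L * L⁻¹ := by gcongr; linarith [hr.2]
      rwa [mul_inv_cancel₀ hL.ne'] at this
    have h3 : 0 ≤ L * (r - 1) := mul_nonneg hL.le (by linarith [hr.1])
    have h4 : L * ‖r • (θ : E) - ω‖ ≤ L * ‖(θ : E) - ω‖ + L * (r - 1) := by
      rw [← mul_add]; gcongr
    have h5 : 0 ≤ L * ‖r • (θ : E) - ω‖ := by positivity
    nlinarith [sq_nonneg (L * ‖(θ : E) - ω‖ - L * (r - 1))]
  rw [lintegral_gaussian (by positivity)] at key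
  have hc : (π / (L ^ 2 / 2)) ^ (d / 2 : ℝ) = (2 * π) ^ (d / 2 : ℝ) * (L ^ d)⁻¹ := by
    rw [show π / (L ^ 2 / 2) = 2 * π * (L ^ 2)⁻¹ by field_simp,
      Real.mul_rpow (by positivity) (by positivity), Real.inv_rpow (by positivity),
      ← Real.rpow_natCast L 2, ← Real.rpow_mul hL.le, ← Real.rpow_natCast L d]
    congr 3
    push_cast; ring
  have hpow : L ^ d = L ^ (d - 1) * L := by rw [← pow_succ, Nat.sub_add_cancel hd]
  rw [hc, hpow] at key
  have hpos : 0 < rexp (-1) * L⁻¹ := by positivity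
  have : ∀ X : ℝ≥0∞, X = ENNReal.ofReal (rexp 1 * L) * (ENNReal.ofReal (rexp (-1) * L⁻¹) * X) := by
    intro X
    rw [← mul_assoc, ← ENNReal.ofReal_mul (by positivity)]
    have : rexp 1 * L * (rexp (-1) * L⁻¹) = 1 := by
      rw [Real.exp_neg]; field_simp
    rw [this]; simp
  rw [this (lintegral _ _)]
  grw [key]
  rw [← ENNReal.ofReal_mul (by positivity)]
  refine ENNReal.ofReal_le_ofReal (le_of_eq ?_)
  field_simp

theorem lintegral_rpow_mul_gaussian_comp_rpow_le {m : ℝ} (hm : 0 < m) {ε : ℝ} (hε : 0 < ε) (q : ℝ) :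
    ∫⁻ ρ in Set.Ioi (0 : ℝ), ENNReal.ofReal (ρ ^ (m - 1) * rexp (-(q - ρ ^ m) ^ 2 / (4 * ε))) ≤
      ENNReal.ofReal (m⁻¹ * √(4 * π * ε)) := by
  have hsub := lintegral_image_eq_lintegral_abs_deriv_mul (s := Set.Ioi (0 : ℝ))
    (f := fun ρ => ρ ^ m) (f' := fun ρ => m * ρ ^ (m - 1)) measurableSet_Ioi
    (fun x hx => (Real.hasDerivAt_rpow_const (Or.inl (ne_of_gt hx))).hasDerivWithinAt)
    (fun x hx y hy h => (Real.rpow_left_inj (le_of_lt hx) (le_of_lt hy) hm.ne').1 h)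
    (fun τ => ENNReal.ofReal (m⁻¹ * rexp (-(q - τ) ^ 2 / (4 * ε))))
  have hcongr : ∫⁻ ρ in Set.Ioi (0 : ℝ),
      ENNReal.ofReal (ρ ^ (m - 1) * rexp (-(q - ρ ^ m) ^ 2 / (4 * ε))) =
      ∫⁻ ρ in Set.Ioi (0 : ℝ), ENNReal.ofReal |m * ρ ^ (m - 1)| *
        ENNReal.ofReal (m⁻¹ * rexp (-(q - ρ ^ m) ^ 2 / (4 * ε))) := by
    refine setLIntegral_congr_fun measurableSet_Ioi fun ρ hρ => ?_
    have hρ : 0 < ρ := hρ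
    rw [← ENNReal.ofReal_mul (abs_nonneg _), abs_of_nonneg (by positivity)]
    congr 1
    field_simp
  rw [hcongr, ← hsub]
  refine (setLIntegral_le_lintegral _ _).trans ?_
  have : ∀ τ : ℝ, ENNReal.ofReal (m⁻¹ * rexp (-(q - τ) ^ 2 / (4 * ε))) =
      ENNReal.ofReal m⁻¹ * ENNReal.ofReal (rexp (-(4 * ε)⁻¹ * ‖τ - q‖ ^ 2)) := fun τ => by
    rw [← ENNReal.ofReal_mul (by positivity), Real.norm_eq_abs, sq_abs]
    congr 3
    field_simp
    ring
  simp_rw [this]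
  rw [lintegral_const_mul _ (by fun_prop), lintegral_gaussian (by positivity),
    ← ENNReal.ofReal_mul (by positivity)]
  refine ENNReal.ofReal_le_ofReal (le_of_eq ?_)
  rw [Real.sqrt_eq_rpow]
  congr 2
  · field_simp
  · simp

theorem lintegral_min_rpow_le {m d : ℝ} (hm : 1 < m) (hmd : m < d) :
    ∃ C : ℝ, 0 < C ∧ ∀ ρ : ℝ, 0 < ρ →
      ENNReal.ofReal ((1 + ρ) ^ (m - 1)) * ∫⁻ s in Set.Ioi (0 : ℝ),
        ENNReal.ofReal (s ^ ((m - d) / 2 - 1) * rexp (-s) *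
          min (ρ ^ (d - 1)) (s ^ ((d - 1) / 2))) ≤ ENNReal.ofReal (C * ρ ^ (m - 1)) := by
  set Γ₀ := Real.Gamma ((m - 1) / 2) with hΓ
  have hΓ0 : 0 < Γ₀ := Real.Gamma_pos_of_pos (by linarith)
  set K := ((m - 1) / 2)⁻¹ + ((d - m) / 2)⁻¹ with hK
  have hK1 : 0 < ((m - 1) / 2)⁻¹ := inv_pos.2 (by linarith)
  have hK2 : 0 < ((d - m) / 2)⁻¹ := inv_pos.2 (by linarith)
  refine ⟨2 ^ (m - 1) * (Γ₀ + K), by positivity, fun ρ hρ => ?_⟩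
  have hcomb : ∀ s : ℝ, 0 < s → s ^ ((m - d) / 2 - 1) * s ^ ((d - 1) / 2) =
      s ^ ((m - 1) / 2 - 1) := fun s hs => by
    rw [← Real.rpow_add hs]; congr 1; ring
  rcases le_total 1 ρ with h1 | h1
  · have hI : ∫⁻ s in Set.Ioi (0 : ℝ), ENNReal.ofReal (s ^ ((m - d) / 2 - 1) * rexp (-s) *
          min (ρ ^ (d - 1)) (s ^ ((d - 1) / 2))) ≤ ENNReal.ofReal Γ₀ := by
      rw [hΓ, Real.Gamma_eq_integral (by linarith), ofReal_integral_eq_lintegral_ofReal]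
      · refine setLIntegral_mono (by fun_prop) fun s hs => ENNReal.ofReal_le_ofReal ?_
        have hs : 0 < s := hs
        rw [← hcomb s hs]
        calc _ ≤ s ^ ((m - d) / 2 - 1) * rexp (-s) * s ^ ((d - 1) / 2) := by
              gcongr; exact min_le_right _ _
          _ = _ := by ring
      · exact Real.GammaIntegral_convergent (by linarith)
      · filter_upwards [ae_restrict_mem measurableSet_Ioi] with s hs
        have hs : 0 < s := hs
        simp only [Pi.zero_apply]; positivity
    grw [hI]
    rw [← ENNReal.ofReal_mul (by positivity)]
    refine ENNReal.ofReal_le_ofReal ?_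
    calc (1 + ρ) ^ (m - 1) * Γ₀ ≤ (2 * ρ) ^ (m - 1) * (Γ₀ + K) := by
          gcongr
          · linarith
          · have : 0 < K := by positivity
            linarith
      _ = _ := by rw [Real.mul_rpow (by positivity) (by positivity)]; ring
  · have hI : ∫⁻ s in Set.Ioi (0 : ℝ), ENNReal.ofReal (s ^ ((m - d) / 2 - 1) * rexp (-s) *
          min (ρ ^ (d - 1)) (s ^ ((d - 1) / 2))) ≤ ENNReal.ofReal (K * ρ ^ (m - 1)) := by
      rw [← Set.Ioc_union_Ioi_eq_Ioi (sq_nonneg ρ)]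
      refine (lintegral_union_le _ _ _).trans ?_
      rw [hK, add_mul, ENNReal.ofReal_add (by positivity) (by positivity)]
      have hexp : ∀ s : ℝ, 0 < s → rexp (-s) ≤ 1 := fun s hs => by
        rw [Real.exp_le_one_iff]; linarith
      refine add_le_add ?_ ?_
      · have : ((m - 1) / 2)⁻¹ * ρ ^ (m - 1) = ∫ s in Set.Ioc 0 (ρ ^ 2), s ^ ((m - 1) / 2 - 1) := by
          rw [← intervalIntegral.integral_of_le (sq_nonneg ρ), integral_rpow (by left; linarith),
            Real.zero_rpow (by linarith), ← Real.rpow_natCast ρ 2, ← Real.rpow_mul hρ.le]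
          rw [sub_add_cancel, sub_zero, inv_mul_eq_div]
          congr 2
          push_cast; ring
        rw [this, ofReal_integral_eq_lintegral_ofReal]
        · refine setLIntegral_mono (by fun_prop) fun s hs => ENNReal.ofReal_le_ofReal ?_
          have hs : 0 < s := hs.1
          rw [← hcomb s hs]
          calc _ ≤ s ^ ((m - d) / 2 - 1) * 1 * s ^ ((d - 1) / 2) := by
                gcongr
                · exact hexp s hs
                · exact min_le_right _ _
            _ = _ := by ring
        · exact (intervalIntegral.intervalIntegrable_rpow' (by linarith)).1
        · filter_upwards [ae_restrict_mem measurableSet_Ioc] with s hs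
          have hs : 0 < s := hs.1
          simp only [Pi.zero_apply]; positivity
      · have hint : IntegrableOn (fun s : ℝ => s ^ ((m - d) / 2 - 1)) (Set.Ioi (ρ ^ 2)) :=
          integrableOn_Ioi_rpow_of_lt (by linarith) (by positivity)
        have : ((d - m) / 2)⁻¹ * ρ ^ (m - 1) =
            ∫ s in Set.Ioi (ρ ^ 2), s ^ ((m - d) / 2 - 1) * ρ ^ (d - 1) := by
          rw [integral_mul_const, integral_Ioi_rpow_of_lt (by linarith) (by positivity),
            ← Real.rpow_natCast ρ 2, ← Real.rpow_mul hρ.le, sub_add_cancel,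
            show (m - d) / 2 = -((d - m) / 2) by ring, neg_div_neg_eq, div_mul_eq_mul_div,
            ← Real.rpow_add hρ, inv_mul_eq_div]
          congr 2
          push_cast; ring
        rw [this, ofReal_integral_eq_lintegral_ofReal]
        · refine setLIntegral_mono (by fun_prop) fun s hs => ENNReal.ofReal_le_ofReal ?_
          have hs : 0 < s := (by positivity : 0 < ρ ^ 2).trans hs
          calc _ ≤ s ^ ((m - d) / 2 - 1) * 1 * ρ ^ (d - 1) := by
                gcongr
                · exact hexp s hs
                · exact min_le_left _ _
            _ = _ := by ring
        · exact hint.mul_const _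
        · filter_upwards [ae_restrict_mem measurableSet_Ioi] with s hs
          have hs : 0 < s := (by positivity : 0 < ρ ^ 2).trans hs
          simp only [Pi.zero_apply]; positivity
    grw [hI]
    rw [← ENNReal.ofReal_mul (by positivity)]
    refine ENNReal.ofReal_le_ofReal ?_
    calc (1 + ρ) ^ (m - 1) * (K * ρ ^ (m - 1)) ≤ 2 ^ (m - 1) * ((Γ₀ + K) * ρ ^ (m - 1)) := by
          gcongr
          · linarith
          · linarith
      _ = _ := by ring

theorem pow_mul_lintegral_sphere_gaussian_le (E : Type*) [NormedAddCommGroup E]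
    [InnerProductSpace ℝ E] [FiniteDimensional ℝ E] [Nontrivial E] [MeasurableSpace E]
    [BorelSpace E] {B : ℝ} (hB : 0 < B) :
    ∃ C : ℝ, 0 < C ∧ ∀ ω : E, ∀ ρ s : ℝ, 0 < ρ → 0 < s →
      ENNReal.ofReal (ρ ^ (Module.finrank ℝ E - 1)) *
      ∫⁻ θ : Metric.sphere (0 : E) 1,
        ENNReal.ofReal (rexp (-(ρ ^ 2 * ‖(θ : E) - ω‖ ^ 2 / (B ^ 2 * s))))
        ∂(volume : Measure E).toSphere ≤
      ENNReal.ofReal (C * min (ρ ^ ((Module.finrank ℝ E : ℝ) - 1))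
        (s ^ (((Module.finrank ℝ E : ℝ) - 1) / 2))) := by
  obtain ⟨C₀, hC₀, h⟩ := lintegral_sphere_gaussian_le E
  have hd : 1 ≤ Module.finrank ℝ E := Module.finrank_pos
  set σ := (volume : Measure E).toSphere
  set d := Module.finrank ℝ E
  have hdc : (d : ℝ) - 1 = ((d - 1 : ℕ) : ℝ) := by push_cast [hd]; ring
  refine ⟨C₀ * B ^ (d - 1) + σ.real Set.univ, by positivity, fun ω ρ s hρ hs => ?_⟩
  set J := ∫⁻ θ : Metric.sphere (0 : E) 1,
        ENNReal.ofReal (rexp (-(ρ ^ 2 * ‖(θ : E) - ω‖ ^ 2 / (B ^ 2 * s)))) ∂σ with hJ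
  rw [mul_min_of_nonneg _ _ (by positivity), ENNReal.ofReal_min, hdc]
  refine le_min ?_ ?_
  · have : J ≤ ENNReal.ofReal (σ.real Set.univ) := by
      calc J ≤ ∫⁻ θ, 1 ∂σ := by
            refine lintegral_mono fun θ => ?_
            rw [ENNReal.ofReal_le_one, Real.exp_le_one_iff]
            have : 0 ≤ ρ ^ 2 * ‖(θ : E) - ω‖ ^ 2 / (B ^ 2 * s) := by positivity
            linarith
        _ = _ := by rw [lintegral_one, measureReal_def, ENNReal.ofReal_toReal (by finiteness)]
    grw [this]
    rw [← ENNReal.ofReal_mul (by positivity)]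
    refine ENNReal.ofReal_le_ofReal ?_
    rw [Real.rpow_natCast, mul_comm]
    gcongr
    have : 0 < C₀ * B ^ (d - 1) := by positivity
    linarith
  · have hL := h ω (ρ / (B * √s)) (by positivity)
    have : J ≤ ENNReal.ofReal (C₀ * ((ρ / (B * √s)) ^ (d - 1))⁻¹) := by
      refine le_trans (le_of_eq ?_) hL
      refine lintegral_congr fun θ => ?_
      congr 3
      rw [div_pow, mul_pow, Real.sq_sqrt hs.le]
      ring
    grw [this]
    rw [← ENNReal.ofReal_mul (by positivity)]
    refine ENNReal.ofReal_le_ofReal ?_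
    have h2 : s ^ (((d - 1 : ℕ) : ℝ) / 2) = √s ^ (d - 1) := by
      rw [Real.sqrt_eq_rpow, ← Real.rpow_natCast, ← Real.rpow_mul hs.le]
      congr 1; ring
    rw [h2, div_pow, mul_pow]
    have : ρ ^ (d - 1) * (C₀ * (ρ ^ (d - 1) / (B ^ (d - 1) * √s ^ (d - 1)))⁻¹) =
      C₀ * B ^ (d - 1) * √s ^ (d - 1) := by field_simp
    rw [this]
    gcongr
    exact le_add_of_nonneg_right (by positivity)

theorem lintegral_Ioi_comp_mul_left {α : ℝ} (hα : 0 < α) (g : ℝ → ℝ≥0∞) :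
    ∫⁻ r in Set.Ioi (0 : ℝ), g (α * r) =
      ENNReal.ofReal α⁻¹ * ∫⁻ ρ in Set.Ioi (0 : ℝ), g ρ := by
  have h := lintegral_image_eq_lintegral_abs_deriv_mul (s := Set.Ioi (0 : ℝ))
    (f := fun r => α * r) (f' := fun _ => α) measurableSet_Ioi
    (fun x _ => by simpa using ((hasDerivAt_id x).const_mul α).hasDerivWithinAt)
    (fun x _ y _ h => mul_left_cancel₀ hα.ne' h) g
  have himg : (fun r => α * r) '' Set.Ioi (0 : ℝ) = Set.Ioi 0 := by
    simpa using Set.image_mul_left_Ioi hα 0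
  rw [himg, abs_of_pos hα] at h
  rw [h, lintegral_const_mul' _ _ ENNReal.ofReal_ne_top, ← mul_assoc,
    ← ENNReal.ofReal_mul (by positivity), inv_mul_cancel₀ hα.ne']
  simp

theorem mul_norm_sub_le_two_mul_norm_sub {E : Type*} [NormedAddCommGroup E] [NormedSpace ℝ E]
    {ξ θ : E} (hξ : ξ ≠ 0) (hθ : ‖θ‖ = 1) {r : ℝ} (hr : 0 ≤ r) :
    r * ‖θ - ‖ξ‖⁻¹ • ξ‖ ≤ 2 * ‖ξ - r • θ‖ := by
  have hξ' : ‖ξ‖ ≠ 0 := norm_ne_zero_iff.2 hξ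
  have h1 : r * ‖θ - ‖ξ‖⁻¹ • ξ‖ = ‖r • θ - r • ‖ξ‖⁻¹ • ξ‖ := by
    rw [← smul_sub, norm_smul, Real.norm_of_nonneg hr]
  have h2 : ‖ξ - r • ‖ξ‖⁻¹ • ξ‖ = |‖ξ‖ - ‖r • θ‖| := by
    have : ξ - r • ‖ξ‖⁻¹ • ξ = ((‖ξ‖ - r) * ‖ξ‖⁻¹) • ξ := by
      rw [sub_mul, mul_inv_cancel₀ hξ', sub_smul, one_smul, smul_smul]
    rw [this, norm_smul, norm_mul, norm_inv, norm_norm, inv_mul_cancel_right₀ hξ', norm_smul, hθ,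
      Real.norm_of_nonneg hr, mul_one, Real.norm_eq_abs]
  have h3 := abs_norm_sub_norm_le ξ (r • θ)
  have h4 := norm_sub_le_norm_sub_add_norm_sub (r • θ) ξ (r • ‖ξ‖⁻¹ • ξ)
  rw [norm_sub_rev (r • θ) ξ] at h4
  linarith

theorem lintegral_gaussian_level_set_le {E : Type*} [NormedAddCommGroup E] [InnerProductSpace ℝ E]
    [FiniteDimensional ℝ E] [Nontrivial E] [MeasurableSpace E] [BorelSpace E]
    {m : ℝ} (hm : 1 < m) {a : E → ℝ} (ha : Continuous a)
    (ha_hom : ∀ t : ℝ, 0 < t → ∀ ξ, a (t • ξ) = t * a ξ) {c A : ℝ} (hc : 0 < c)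
    (hac : ∀ ξ : E, ‖ξ‖ = 1 → c ≤ a ξ) (haA : ∀ ξ : E, ‖ξ‖ = 1 → a ξ ≤ A)
    {H : E → ℝ} (hH : Continuous H) (hH0 : ∀ η, 0 ≤ H η) (hH1 : ∀ η, H η ≤ (1 + ‖η‖) ^ (m - 1)) :
    ∃ C : ℝ, 0 < C ∧ ∀ ξ : E, ξ ≠ 0 → ∀ q s ε : ℝ, 0 < s → 0 < ε →
      ∫⁻ η : E, ENNReal.ofReal (H η * rexp (-‖ξ - η‖ ^ 2 / (4 * s)) *
        rexp (-(q - a η ^ m) ^ 2 / (4 * ε))) ≤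
      ENNReal.ofReal C * ∫⁻ ρ in Set.Ioi (0 : ℝ), ENNReal.ofReal ((1 + ρ) ^ (m - 1) *
        rexp (-(q - ρ ^ m) ^ 2 / (4 * ε)) *
        min (ρ ^ ((Module.finrank ℝ E : ℝ) - 1)) (s ^ (((Module.finrank ℝ E : ℝ) - 1) / 2))) := by
  have hA : 0 < A := by
    obtain ⟨v, hv⟩ := exists_norm_eq E zero_le_one
    exact hc.trans_le ((hac v hv).trans (haA v hv))
  obtain ⟨C₁, hC₁, hsph⟩ := pow_mul_lintegral_sphere_gaussian_le E (B := 4 * A) (by positivity)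
  set σ := (volume : Measure E).toSphere
  set d := Module.finrank ℝ E
  set D : ℝ := c⁻¹ * (c⁻¹ ^ (d - 1) * (1 + c⁻¹) ^ (m - 1)) with hD
  have hD0 : 0 < D := by positivity
  refine ⟨D * C₁, by positivity, fun ξ hξ q s ε hs hε => ?_⟩
  set ω := ‖ξ‖⁻¹ • ξ with hω
  have hrad : ∀ θ : Metric.sphere (0 : E) 1, ∫⁻ r in Set.Ioi (0 : ℝ),
      ENNReal.ofReal (r ^ (d - 1)) * ENNReal.ofReal (H (r • (θ : E)) *
        rexp (-‖ξ - r • (θ : E)‖ ^ 2 / (4 * s)) *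
        rexp (-(q - a (r • (θ : E)) ^ m) ^ 2 / (4 * ε))) ≤
      ENNReal.ofReal D * ∫⁻ ρ in Set.Ioi (0 : ℝ), ENNReal.ofReal (ρ ^ (d - 1) *
        rexp (-(ρ ^ 2 * ‖(θ : E) - ω‖ ^ 2 / ((4 * A) ^ 2 * s))) *
        ((1 + ρ) ^ (m - 1) * rexp (-(q - ρ ^ m) ^ 2 / (4 * ε)))) := by
    intro θ
    have hθ : ‖(θ : E)‖ = 1 := norm_eq_of_mem_sphere θ
    set α := a θ with hα
    have hαc : c ≤ α := hac _ hθ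
    have hαA : α ≤ A := haA _ hθ
    have hα0 : 0 < α := hc.trans_le hαc
    have hpt : ∀ r ∈ Set.Ioi (0 : ℝ), ENNReal.ofReal (r ^ (d - 1)) *
        ENNReal.ofReal (H (r • (θ : E)) * rexp (-‖ξ - r • (θ : E)‖ ^ 2 / (4 * s)) *
        rexp (-(q - a (r • (θ : E)) ^ m) ^ 2 / (4 * ε))) ≤
        ENNReal.ofReal (c⁻¹ ^ (d - 1) * (1 + c⁻¹) ^ (m - 1)) *
        ENNReal.ofReal ((α * r) ^ (d - 1) *
        rexp (-((α * r) ^ 2 * ‖(θ : E) - ω‖ ^ 2 / ((4 * A) ^ 2 * s))) *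
        ((1 + (α * r)) ^ (m - 1) * rexp (-(q - (α * r) ^ m) ^ 2 / (4 * ε)))) := by
      intro r hr
      have hr : 0 < r := hr
      rw [← ENNReal.ofReal_mul (by positivity), ← ENNReal.ofReal_mul (by positivity)]
      refine ENNReal.ofReal_le_ofReal ?_
      rw [ha_hom r hr, ← hα, mul_comm r α]
      have e1 : r ≤ c⁻¹ * (α * r) := by
        rw [← mul_assoc]
        refine le_mul_of_one_le_left hr.le ?_
        rw [inv_mul_eq_div, one_le_div hc]; exact hαc
      have e2 : H (r • (θ : E)) ≤ ((1 + c⁻¹) * (1 + α * r)) ^ (m - 1) := by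
        refine (hH1 _).trans ?_
        rw [norm_smul, hθ, mul_one, Real.norm_of_nonneg hr.le]
        refine Real.rpow_le_rpow (by positivity) ?_ (by linarith)
        have : 0 < c⁻¹ := by positivity
        have : 0 < α * r := by positivity
        nlinarith
      have e3 : rexp (-‖ξ - r • (θ : E)‖ ^ 2 / (4 * s)) ≤
          rexp (-((α * r) ^ 2 * ‖(θ : E) - ω‖ ^ 2 / ((4 * A) ^ 2 * s))) := by
        refine Real.exp_le_exp.2 ?_
        rw [neg_div, neg_le_neg_iff]
        have g := mul_norm_sub_le_two_mul_norm_sub hξ hθ hr.le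
        rw [← hω] at g
        have g2 : α * r * ‖(θ : E) - ω‖ ≤ A * (2 * ‖ξ - r • (θ : E)‖) := by
          rw [mul_assoc]
          gcongr
        rw [← mul_pow]
        calc _ ≤ (A * (2 * ‖ξ - r • (θ : E)‖)) ^ 2 / ((4 * A) ^ 2 * s) := by gcongr
          _ = ‖ξ - r • (θ : E)‖ ^ 2 / (4 * s) := by field_simp; ring
      calc r ^ (d - 1) * (H (r • (θ : E)) * rexp (-‖ξ - r • (θ : E)‖ ^ 2 / (4 * s)) *
            rexp (-(q - (α * r) ^ m) ^ 2 / (4 * ε)))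
          ≤ (c⁻¹ * (α * r)) ^ (d - 1) * (((1 + c⁻¹) * (1 + α * r)) ^ (m - 1) *
            rexp (-((α * r) ^ 2 * ‖(θ : E) - ω‖ ^ 2 / ((4 * A) ^ 2 * s))) *
            rexp (-(q - (α * r) ^ m) ^ 2 / (4 * ε))) := by
            have := hH0 (r • (θ : E))
            gcongr
        _ = _ := by
            rw [mul_pow, Real.mul_rpow (by positivity) (by positivity)]
            ring
    refine (setLIntegral_mono' measurableSet_Ioi hpt).trans ?_
    rw [lintegral_const_mul' _ _ ENNReal.ofReal_ne_top, lintegral_Ioi_comp_mul_left hα0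
      (fun ρ => ENNReal.ofReal (ρ ^ (d - 1) *
        rexp (-(ρ ^ 2 * ‖(θ : E) - ω‖ ^ 2 / ((4 * A) ^ 2 * s))) *
        ((1 + ρ) ^ (m - 1) * rexp (-(q - ρ ^ m) ^ 2 / (4 * ε))))), ← mul_assoc]
    gcongr
    rw [← ENNReal.ofReal_mul (by positivity), hD, mul_comm c⁻¹]
    refine ENNReal.ofReal_le_ofReal ?_
    gcongr
  have hmeas : Measurable fun η : E => ENNReal.ofReal (H η * rexp (-‖ξ - η‖ ^ 2 / (4 * s)) *
        rexp (-(q - a η ^ m) ^ 2 / (4 * ε))) := by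
    have := ha.measurable
    have := hH.measurable
    fun_prop
  rw [lintegral_polar volume hmeas]
  refine (lintegral_mono hrad).trans ?_
  rw [lintegral_const_mul' _ _ ENNReal.ofReal_ne_top, lintegral_lintegral_swap,
    ENNReal.ofReal_mul hD0.le, mul_assoc]
  · gcongr
    rw [← lintegral_const_mul' _ _ ENNReal.ofReal_ne_top]
    refine setLIntegral_mono' measurableSet_Ioi fun ρ hρ => ?_
    have hρ : 0 < ρ := hρ
    have hsplit : ∀ θ : Metric.sphere (0 : E) 1, ENNReal.ofReal (ρ ^ (d - 1) *
        rexp (-(ρ ^ 2 * ‖(θ : E) - ω‖ ^ 2 / ((4 * A) ^ 2 * s))) *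
        ((1 + ρ) ^ (m - 1) * rexp (-(q - ρ ^ m) ^ 2 / (4 * ε)))) =
        ENNReal.ofReal ((1 + ρ) ^ (m - 1) * rexp (-(q - ρ ^ m) ^ 2 / (4 * ε))) *
        (ENNReal.ofReal (ρ ^ (d - 1)) *
        ENNReal.ofReal (rexp (-(ρ ^ 2 * ‖(θ : E) - ω‖ ^ 2 / ((4 * A) ^ 2 * s))))) := by
      intro θ
      rw [← ENNReal.ofReal_mul (by positivity), ← ENNReal.ofReal_mul (by positivity), mul_comm]
    simp_rw [hsplit]
    rw [lintegral_const_mul' _ _ ENNReal.ofReal_ne_top,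
      lintegral_const_mul' _ _ ENNReal.ofReal_ne_top]
    grw [hsph ω ρ s hρ hs]
    rw [← ENNReal.ofReal_mul (by positivity), ← ENNReal.ofReal_mul (by positivity)]
    refine ENNReal.ofReal_le_ofReal (le_of_eq ?_)
    ring
  · refine Measurable.aemeasurable ?_
    fun_prop

theorem lintegral_lintegral_gaussian_level_set_le {E : Type*} [NormedAddCommGroup E]
    [InnerProductSpace ℝ E] [FiniteDimensional ℝ E] [Nontrivial E] [MeasurableSpace E]
    [BorelSpace E] {m : ℝ} (hm : 1 < m) (hmd : m < Module.finrank ℝ E)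
    {a : E → ℝ} (ha : Continuous a)
    (ha_hom : ∀ t : ℝ, 0 < t → ∀ ξ, a (t • ξ) = t * a ξ) {c A : ℝ} (hc : 0 < c)
    (hac : ∀ ξ : E, ‖ξ‖ = 1 → c ≤ a ξ) (haA : ∀ ξ : E, ‖ξ‖ = 1 → a ξ ≤ A)
    {H : E → ℝ} (hH : Continuous H) (hH0 : ∀ η, 0 ≤ H η) (hH1 : ∀ η, H η ≤ (1 + ‖η‖) ^ (m - 1)) :
    ∃ C : ℝ, 0 < C ∧ ∀ ξ : E, ξ ≠ 0 → ∀ q ε : ℝ, 0 < ε →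
      ∫⁻ s in Set.Ioi (0 : ℝ),
        ENNReal.ofReal (s ^ ((m - Module.finrank ℝ E) / 2 - 1) * rexp (-s)) *
        ∫⁻ η : E, ENNReal.ofReal (H η * rexp (-‖ξ - η‖ ^ 2 / (4 * s)) *
          rexp (-(q - a η ^ m) ^ 2 / (4 * ε))) ≤ ENNReal.ofReal (C * √ε) := by
  obtain ⟨C₁, hC₁, h₁⟩ := lintegral_gaussian_level_set_le hm ha ha_hom hc hac haA hH hH0 hH1
  obtain ⟨C₂, hC₂, h₂⟩ := lintegral_min_rpow_le hm hmd
  set d := Module.finrank ℝ E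
  refine ⟨C₁ * C₂ * (m⁻¹ * √(4 * π)), by positivity, fun ξ hξ q ε hε => ?_⟩
  calc _ ≤ ∫⁻ s in Set.Ioi (0 : ℝ), ENNReal.ofReal C₁ * ∫⁻ ρ in Set.Ioi (0 : ℝ),
        ENNReal.ofReal (s ^ ((m - d) / 2 - 1) * rexp (-s)) * ENNReal.ofReal ((1 + ρ) ^ (m - 1) *
        rexp (-(q - ρ ^ m) ^ 2 / (4 * ε)) * min (ρ ^ ((d : ℝ) - 1)) (s ^ (((d : ℝ) - 1) / 2))) := by
        refine setLIntegral_mono' measurableSet_Ioi fun s hs => ?_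
        grw [h₁ ξ hξ q s ε hs hε]
        rw [lintegral_const_mul' _ _ ENNReal.ofReal_ne_top, mul_left_comm]
    _ = ENNReal.ofReal C₁ * ∫⁻ ρ in Set.Ioi (0 : ℝ), ∫⁻ s in Set.Ioi (0 : ℝ),
        ENNReal.ofReal (s ^ ((m - d) / 2 - 1) * rexp (-s)) * ENNReal.ofReal ((1 + ρ) ^ (m - 1) *
        rexp (-(q - ρ ^ m) ^ 2 / (4 * ε)) * min (ρ ^ ((d : ℝ) - 1)) (s ^ (((d : ℝ) - 1) / 2))) := by
        rw [lintegral_const_mul' _ _ ENNReal.ofReal_ne_top, lintegral_lintegral_swap]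
        refine Measurable.aemeasurable ?_
        fun_prop
    _ ≤ ENNReal.ofReal C₁ * ∫⁻ ρ in Set.Ioi (0 : ℝ), ENNReal.ofReal C₂ *
        ENNReal.ofReal (ρ ^ (m - 1) * rexp (-(q - ρ ^ m) ^ 2 / (4 * ε))) := by
        gcongr ENNReal.ofReal C₁ * ?_
        refine setLIntegral_mono' measurableSet_Ioi fun ρ hρ => ?_
        have hρ0 : 0 < ρ := hρ
        have : ∫⁻ s in Set.Ioi (0 : ℝ),
          ENNReal.ofReal (s ^ ((m - d) / 2 - 1) * rexp (-s)) * ENNReal.ofReal ((1 + ρ) ^ (m - 1) *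
          rexp (-(q - ρ ^ m) ^ 2 / (4 * ε)) *
            min (ρ ^ ((d : ℝ) - 1)) (s ^ (((d : ℝ) - 1) / 2))) =
          ENNReal.ofReal (rexp (-(q - ρ ^ m) ^ 2 / (4 * ε))) *
          (ENNReal.ofReal ((1 + ρ) ^ (m - 1)) * ∫⁻ s in Set.Ioi (0 : ℝ),
            ENNReal.ofReal (s ^ ((m - d) / 2 - 1) * rexp (-s) *
            min (ρ ^ ((d : ℝ) - 1)) (s ^ (((d : ℝ) - 1) / 2)))) := by
          rw [← lintegral_const_mul' _ _ ENNReal.ofReal_ne_top,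
            ← lintegral_const_mul' _ _ ENNReal.ofReal_ne_top]
          refine setLIntegral_congr_fun measurableSet_Ioi fun s hs => ?_
          have hs0 : 0 < s := hs
          rw [← ENNReal.ofReal_mul (by positivity), ← ENNReal.ofReal_mul (by positivity),
            ← ENNReal.ofReal_mul (by positivity)]
          congr 1
          ring
        rw [this]
        grw [h₂ ρ hρ0]
        rw [← ENNReal.ofReal_mul (by positivity), ← ENNReal.ofReal_mul (by positivity)]
        refine ENNReal.ofReal_le_ofReal (le_of_eq ?_)
        ring
    _ ≤ _ := by
        rw [lintegral_const_mul' _ _ ENNReal.ofReal_ne_top]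
        grw [lintegral_rpow_mul_gaussian_comp_rpow_le (by linarith) hε q]
        rw [← ENNReal.ofReal_mul (by positivity), ← ENNReal.ofReal_mul (by positivity)]
        refine ENNReal.ofReal_le_ofReal (le_of_eq ?_)
        rw [Real.sqrt_mul (by positivity)]
        ring

theorem lintegral_enorm_integral_sq_le {Z X : Type*} [MeasurableSpace Z] [MeasurableSpace X]
    {μ : Measure Z} {ν : Measure X} [SFinite μ] [SFinite ν] {g : Z → X → ℂ}
    (hg : StronglyMeasurable (Function.uncurry g)) {w : Z → ℝ} {f : X → ℝ}
    (hw : Integrable (fun z => w z ^ 2) μ) (hf : Integrable f ν)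
    (hgwf : ∀ z ξ, ‖g z ξ‖ ≤ w z * f ξ) :
    ∫⁻ z, ‖∫ ξ, g z ξ ∂ν‖ₑ ^ 2 ∂μ ≤
      ∫⁻ ξ, ∫⁻ η, ‖∫ z, g z ξ * (starRingEnd ℂ) (g z η) ∂μ‖ₑ ∂ν ∂ν := by
  have hK : StronglyMeasurable fun p : Z × (X × X) =>
      g p.1 p.2.1 * (starRingEnd ℂ) (g p.1 p.2.2) :=
    (hg.comp_measurable (by fun_prop : Measurable fun p : Z × (X × X) => (p.1, p.2.1))).mul
      (Complex.continuous_conj.comp_stronglyMeasurable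
        (hg.comp_measurable (by fun_prop : Measurable fun p : Z × (X × X) => (p.1, p.2.2))))
  have hKint : Integrable (fun p : Z × (X × X) => g p.1 p.2.1 * (starRingEnd ℂ) (g p.1 p.2.2))
      (μ.prod (ν.prod ν)) := by
    refine (hw.mul_prod (hf.mul_prod hf)).mono' hK.aestronglyMeasurable (.of_forall fun p => ?_)
    rw [norm_mul, RCLike.norm_conj]
    calc _ ≤ (w p.1 * f p.2.1) * (w p.1 * f p.2.2) :=
          mul_le_mul (hgwf _ _) (hgwf _ _) (norm_nonneg _) ((norm_nonneg _).trans (hgwf _ _))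
      _ = _ := by ring
  have hsq : ∀ z, ((‖∫ ξ, g z ξ ∂ν‖ ^ 2 : ℝ) : ℂ) =
      ∫ p : X × X, g z p.1 * (starRingEnd ℂ) (g z p.2) ∂(ν.prod ν) := by
    intro z
    rw [integral_prod_mul (fun ξ => g z ξ) (fun η => (starRingEnd ℂ) (g z η)), integral_conj,
      Complex.mul_conj, Complex.normSq_eq_norm_sq]
  have hint : Integrable (fun z => ((‖∫ ξ, g z ξ ∂ν‖ ^ 2 : ℝ) : ℂ)) μ := by
    simp_rw [hsq]
    exact hKint.integral_prod_left
  have hint' : Integrable (fun z => ‖∫ ξ, g z ξ ∂ν‖ ^ 2) μ := by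
    exact hint.re.congr (.of_forall fun z => Complex.ofReal_re _)
  calc ∫⁻ z, ‖∫ ξ, g z ξ ∂ν‖ₑ ^ 2 ∂μ
      = ENNReal.ofReal (∫ z, ‖∫ ξ, g z ξ ∂ν‖ ^ 2 ∂μ) := by
        rw [ofReal_integral_eq_lintegral_ofReal hint' (.of_forall fun z => by positivity)]
        refine lintegral_congr fun z => ?_
        rw [ENNReal.ofReal_pow (norm_nonneg _), ofReal_norm]
    _ = ‖∫ z, ((‖∫ ξ, g z ξ ∂ν‖ ^ 2 : ℝ) : ℂ) ∂μ‖ₑ := by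
        rw [integral_complex_ofReal, ← ofReal_norm]
        congr 1
        rw [Complex.norm_real, Real.norm_of_nonneg (integral_nonneg fun z => by positivity)]
    _ = ‖∫ p : X × X, ∫ z, g z p.1 * (starRingEnd ℂ) (g z p.2) ∂μ ∂(ν.prod ν)‖ₑ := by
        simp_rw [hsq]
        rw [integral_integral_swap hKint]
    _ ≤ ∫⁻ p : X × X, ‖∫ z, g z p.1 * (starRingEnd ℂ) (g z p.2) ∂μ‖ₑ ∂(ν.prod ν) :=
        enorm_integral_le_lintegral_enorm _
    _ = _ := by
        rw [lintegral_prod]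
        exact hKint.integral_prod_right.aestronglyMeasurable.enorm

theorem norm_integral_gaussian_mul_cexp {V : Type*} [NormedAddCommGroup V] [InnerProductSpace ℝ V]
    [FiniteDimensional ℝ V] [MeasurableSpace V] [BorelSpace V] {b : ℝ} (hb : 0 < b) (w : V) :
    ‖∫ v : V, cexp (-(b : ℂ) * (‖v‖ : ℂ) ^ 2 + Complex.I * ((⟪w, v⟫ : ℝ) : ℂ))‖ =
      (π / b) ^ (Module.finrank ℝ V / 2 : ℝ) * rexp (-‖w‖ ^ 2 / (4 * b)) := by
  rw [GaussianFourier.integral_cexp_neg_mul_sq_norm_add (by simpa using hb), norm_mul,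
    Complex.norm_exp]
  congr 1
  · have := Complex.norm_cpow_eq_rpow_re_of_pos (div_pos pi_pos hb) (Module.finrank ℝ V / 2 : ℂ)
    push_cast at this
    rw [this]
    congr 1
    simp
  · congr 1
    have : Complex.I ^ 2 * (‖w‖ : ℂ) ^ 2 / (4 * (b : ℂ)) = ((-‖w‖ ^ 2 / (4 * b) : ℝ) : ℂ) := by
      push_cast; rw [Complex.I_sq]; ring
    rw [this, Complex.ofReal_re]

theorem lintegral_gaussian_mul_enorm_sq_le {E : Type*} [NormedAddCommGroup E]
    [InnerProductSpace ℝ E] [FiniteDimensional ℝ E] [MeasurableSpace E] [BorelSpace E]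
    {P : E → ℝ} (hP : Continuous P) {F : E → ℂ} (hF : Continuous F) (hFi : Integrable F)
    {s ε : ℝ} (hs : 0 < s) (hε : 0 < ε) :
    ∫⁻ z : ℝ × E, ENNReal.ofReal (rexp (-(ε * z.1 ^ 2 + s * ‖z.2‖ ^ 2))) *
      ‖∫ ξ : E, cexp (Complex.I * ((⟪z.2, ξ⟫ : ℝ) : ℂ)) *
        (cexp (Complex.I * (z.1 : ℂ) * (P ξ : ℂ)) * F ξ)‖ₑ ^ 2 ≤
    ENNReal.ofReal ((π / ε) ^ (1 / 2 : ℝ) * (π / s) ^ (Module.finrank ℝ E / 2 : ℝ)) *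
      ∫⁻ ξ : E, ∫⁻ η : E, ‖F ξ‖ₑ * ‖F η‖ₑ * ENNReal.ofReal (rexp (-‖ξ - η‖ ^ 2 / (4 * s)) *
        rexp (-(P ξ - P η) ^ 2 / (4 * ε))) := by
  set w : ℝ × E → ℝ := fun z => rexp (-(ε * z.1 ^ 2 + s * ‖z.2‖ ^ 2) / 2) with hwdef
  set g : ℝ × E → E → ℂ := fun z ξ => (w z : ℂ) * (cexp (Complex.I * ((⟪z.2, ξ⟫ : ℝ) : ℂ)) *
        (cexp (Complex.I * (z.1 : ℂ) * (P ξ : ℂ)) * F ξ)) with hgdef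
  have hw2 : ∀ z, w z ^ 2 = rexp (-(ε * z.1 ^ 2 + s * ‖z.2‖ ^ 2)) := fun z => by
    rw [hwdef, ← Real.exp_nat_mul]
    congr 1; push_cast; ring
  have hw0 : ∀ z, 0 < w z := fun z => Real.exp_pos _
  have hwint : Integrable (fun z => w z ^ 2) := by
    have h1 : Integrable fun t : ℝ => rexp (-ε * t ^ 2) := integrable_exp_neg_mul_sq hε
    have h2 : Integrable fun x : E => rexp (-s * ‖x‖ ^ 2) := by
      refine Integrable.of_integral_ne_zero ?_
      rw [GaussianFourier.integral_rexp_neg_mul_sq_norm hs]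
      positivity
    refine (h1.mul_prod h2).congr (.of_forall fun z => ?_)
    simp only
    rw [hw2, ← Real.exp_add]
    congr 1; ring
  have hnorm : ∀ (r : ℝ), ‖cexp (Complex.I * (r : ℂ))‖ = 1 := fun r => by
    rw [mul_comm, Complex.norm_exp_ofReal_mul_I]
  have hgnorm : ∀ z ξ, ‖g z ξ‖ = w z * ‖F ξ‖ := fun z ξ => by
    rw [hgdef]
    simp only [norm_mul]
    rw [hnorm, mul_assoc Complex.I, ← Complex.ofReal_mul, hnorm, Complex.norm_real,
      Real.norm_of_nonneg (hw0 z).le]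
    ring
  have hgc : Continuous (Function.uncurry g) := by
    simp only [hgdef, hwdef, Function.uncurry_def]
    fun_prop
  have key := lintegral_enorm_integral_sq_le (μ := (volume : Measure (ℝ × E)))
    (ν := (volume : Measure E)) hgc.stronglyMeasurable hwint hFi.norm
    (fun z ξ => (hgnorm z ξ).le)
  have hker : ∀ ξ η : E, ‖∫ z, g z ξ * (starRingEnd ℂ) (g z η)‖ₑ =
      ENNReal.ofReal ((π / ε) ^ (1 / 2 : ℝ) * (π / s) ^ (Module.finrank ℝ E / 2 : ℝ)) *
      (‖F ξ‖ₑ * ‖F η‖ₑ * ENNReal.ofReal (rexp (-‖ξ - η‖ ^ 2 / (4 * s)) *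
        rexp (-(P ξ - P η) ^ 2 / (4 * ε)))) := by
    intro ξ η
    have hprod : ∀ z : ℝ × E, g z ξ * (starRingEnd ℂ) (g z η) =
        (F ξ * (starRingEnd ℂ) (F η)) *
        (cexp (-(ε : ℂ) * (‖z.1‖ : ℂ) ^ 2 + Complex.I * ((⟪P ξ - P η, z.1⟫ : ℝ) : ℂ)) *
        cexp (-(s : ℂ) * (‖z.2‖ : ℂ) ^ 2 + Complex.I * ((⟪ξ - η, z.2⟫ : ℝ) : ℂ))) := by
      intro z
      have hsqn : (‖z.1‖ : ℂ) ^ 2 = (z.1 : ℂ) ^ 2 := by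
        rw [← Complex.ofReal_pow, Real.norm_eq_abs, sq_abs, Complex.ofReal_pow]
      have hw2' : (w z : ℂ) * (w z : ℂ) =
          cexp (-((ε : ℂ) * (z.1 : ℂ) ^ 2 + (s : ℂ) * (‖z.2‖ : ℂ) ^ 2)) := by
        rw [← sq, ← Complex.ofReal_pow, hw2]
        push_cast; rfl
      have hin : (⟪P ξ - P η, z.1⟫ : ℝ) = z.1 * (P ξ - P η) := by simp
      rw [hsqn, hin, inner_sub_left, real_inner_comm z.2 ξ, real_inner_comm z.2 η]
      simp only [hgdef, map_mul, ← Complex.exp_conj, Complex.conj_I, Complex.conj_ofReal]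
      rw [show ∀ x1 x2 x3 x4 x5 x6 x7 x8 : ℂ, x1 * (x2 * (x3 * x4)) * (x5 * (x6 * (x7 * x8))) =
        (x4 * x8) * ((x1 * x5) * (x2 * x6 * (x3 * x7))) from fun _ _ _ _ _ _ _ _ => by ring]
      rw [hw2']
      simp only [← Complex.exp_add]
      congr 2
      push_cast
      ring
    simp_rw [hprod]
    rw [integral_const_mul, Measure.volume_eq_prod, integral_prod_mul
      (fun t : ℝ => cexp (-(ε : ℂ) * (‖t‖ : ℂ) ^ 2 + Complex.I * ((⟪P ξ - P η, t⟫ : ℝ) : ℂ)))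
      (fun x : E => cexp (-(s : ℂ) * (‖x‖ : ℂ) ^ 2 + Complex.I * ((⟪ξ - η, x⟫ : ℝ) : ℂ)))]
    rw [← ofReal_norm, ← ofReal_norm, ← ofReal_norm, norm_mul, norm_mul,
      norm_mul, RCLike.norm_conj, norm_integral_gaussian_mul_cexp hε,
      norm_integral_gaussian_mul_cexp hs, ← ENNReal.ofReal_mul (by positivity),
      ← ENNReal.ofReal_mul (by positivity), ← ENNReal.ofReal_mul (by positivity)]
    congr 1
    rw [Real.norm_eq_abs (P ξ - P η), sq_abs, Module.finrank_self, Nat.cast_one]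
    ring
  simp_rw [hker, lintegral_const_mul' _ _ ENNReal.ofReal_ne_top] at key
  refine le_trans (le_of_eq ?_) key
  refine lintegral_congr fun z => ?_
  simp only [hgdef]
  rw [integral_const_mul, enorm_mul, mul_pow, ← hw2, ENNReal.ofReal_pow (hw0 z).le]
  congr 2
  rw [← ofReal_norm, Complex.norm_real, Real.norm_of_nonneg (hw0 z).le]

theorem lintegral_lintegral_schur_le {X : Type*} [MeasurableSpace X] {ν : Measure X} [SFinite ν]
    {u h : X → ℝ} {k : X → X → ℝ} (hu : Measurable u) (hh : Measurable h)
    (hk : Measurable (Function.uncurry k)) (hk0 : ∀ ξ η, 0 ≤ k ξ η)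
    (hsymm : ∀ ξ η, k ξ η = k η ξ) :
    ∫⁻ ξ, ∫⁻ η, ENNReal.ofReal (h ξ * u ξ * (h η * u η) * k ξ η) ∂ν ∂ν ≤
      ∫⁻ ξ, ∫⁻ η, ENNReal.ofReal (u ξ ^ 2 * (h η ^ 2 * k ξ η)) ∂ν ∂ν := by
  have hswap : ∫⁻ ξ, ∫⁻ η, ENNReal.ofReal (u η ^ 2 * (h ξ ^ 2 * k ξ η)) ∂ν ∂ν =
      ∫⁻ ξ, ∫⁻ η, ENNReal.ofReal (u ξ ^ 2 * (h η ^ 2 * k ξ η)) ∂ν ∂ν := by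
    rw [lintegral_lintegral_swap]
    · refine lintegral_congr fun ξ => lintegral_congr fun η => ?_
      rw [hsymm]
    · refine Measurable.aemeasurable ?_
      simp only [Function.uncurry_def] at hk ⊢
      fun_prop
  have hm1 : Measurable fun p : X × X => ENNReal.ofReal (u p.1 ^ 2 * (h p.2 ^ 2 * k p.1 p.2)) := by
    simp only [Function.uncurry_def] at hk
    fun_prop
  have h2 : 2 * ∫⁻ ξ, ∫⁻ η, ENNReal.ofReal (h ξ * u ξ * (h η * u η) * k ξ η) ∂ν ∂ν ≤
      2 * ∫⁻ ξ, ∫⁻ η, ENNReal.ofReal (u ξ ^ 2 * (h η ^ 2 * k ξ η)) ∂ν ∂ν := by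
    conv_rhs => rw [two_mul]; arg 2; rw [← hswap]
    rw [← lintegral_add_left hm1.lintegral_prod_right', ← lintegral_const_mul' _ _ (by simp)]
    refine lintegral_mono fun ξ => ?_
    have hmξ : Measurable fun η => ENNReal.ofReal (u ξ ^ 2 * (h η ^ 2 * k ξ η)) :=
      hm1.comp measurable_prodMk_left
    dsimp only
    rw [← lintegral_add_left hmξ, ← lintegral_const_mul' _ _ (by simp)]
    refine lintegral_mono fun η => ?_
    have hk0 := hk0 ξ η
    rw [← ENNReal.ofReal_add (by positivity) (by positivity),
      show (2 : ℝ≥0∞) = ENNReal.ofReal 2 by simp, ← ENNReal.ofReal_mul (by norm_num)]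
    refine ENNReal.ofReal_le_ofReal ?_
    nlinarith [mul_nonneg (sq_nonneg (u ξ * h η - u η * h ξ)) hk0]
  exact (ENNReal.mul_le_mul_iff_right (by simp) (by simp)).1 h2

theorem ofReal_one_add_sq_rpow_neg_eq {m : ℝ} (hm : 0 < m) (y : ℝ) :
    ENNReal.ofReal ((1 + y ^ 2) ^ (-(m / 2))) = ENNReal.ofReal (Real.Gamma (m / 2))⁻¹ *
      ∫⁻ s in Set.Ioi (0 : ℝ), ENNReal.ofReal (s ^ (m / 2 - 1) * rexp (-s)) *
        ENNReal.ofReal (rexp (-(s * y ^ 2))) := by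
  have hΓ : 0 < Real.Gamma (m / 2) := Real.Gamma_pos_of_pos (by positivity)
  have hI := Real.integral_rpow_mul_exp_neg_mul_Ioi (a := m / 2) (r := 1 + y ^ 2)
    (by positivity) (by positivity)
  have hint : IntegrableOn (fun t : ℝ => t ^ (m / 2 - 1) * rexp (-((1 + y ^ 2) * t)))
      (Set.Ioi 0) := by
    refine Integrable.of_integral_ne_zero ?_
    rw [hI]; positivity
  have hL : ∫⁻ s in Set.Ioi (0 : ℝ), ENNReal.ofReal (s ^ (m / 2 - 1) * rexp (-s)) *
        ENNReal.ofReal (rexp (-(s * y ^ 2))) =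
      ENNReal.ofReal (∫ t in Set.Ioi 0, t ^ (m / 2 - 1) * rexp (-((1 + y ^ 2) * t))) := by
    rw [ofReal_integral_eq_lintegral_ofReal hint]
    · refine setLIntegral_congr_fun measurableSet_Ioi fun s hs => ?_
      have hs : 0 < s := hs
      rw [← ENNReal.ofReal_mul (by positivity), mul_assoc, ← Real.exp_add]
      congr 3
      ring
    · filter_upwards [ae_restrict_mem measurableSet_Ioi] with s hs
      have hs : 0 < s := hs
      simp only [Pi.zero_apply]; positivity
  rw [hL, hI, ← ENNReal.ofReal_mul (by positivity)]
  congr 1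
  rw [one_div, Real.inv_rpow (by positivity), Real.rpow_neg (by positivity)]
  field_simp

theorem continuous_oscillatory_integral {E : Type*} [NormedAddCommGroup E]
    [InnerProductSpace ℝ E] [FiniteDimensional ℝ E] [MeasurableSpace E] [BorelSpace E]
    {P : E → ℝ} (hP : Continuous P) {F : E → ℂ} (hF : Continuous F) (hFi : Integrable F) :
    Continuous fun z : ℝ × E => ∫ ξ : E, cexp (Complex.I * ((⟪z.2, ξ⟫ : ℝ) : ℂ)) *
        (cexp (Complex.I * (z.1 : ℂ) * (P ξ : ℂ)) * F ξ) := by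
  refine continuous_of_dominated (bound := fun ξ => ‖F ξ‖) (fun z => ?_) (fun z => ?_) hFi.norm ?_
  · refine Continuous.aestronglyMeasurable ?_
    fun_prop
  · refine .of_forall fun ξ => le_of_eq ?_
    rw [norm_mul, norm_mul, mul_assoc Complex.I, ← Complex.ofReal_mul, mul_comm Complex.I,
      mul_comm Complex.I, Complex.norm_exp_ofReal_mul_I, Complex.norm_exp_ofReal_mul_I]
    simp
  · refine .of_forall fun ξ => ?_
    fun_prop

theorem lintegral_weight_mul_enorm_sq_le {E : Type*} [NormedAddCommGroup E]
    [InnerProductSpace ℝ E] [FiniteDimensional ℝ E] [Nontrivial E] [MeasurableSpace E]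
    [BorelSpace E] {m : ℝ} (hm : 1 < m) (hmd : m < Module.finrank ℝ E)
    {a : E → ℝ} (ha : Continuous a)
    (ha_hom : ∀ t : ℝ, 0 < t → ∀ ξ, a (t • ξ) = t * a ξ) {c A : ℝ} (hc : 0 < c)
    (hac : ∀ ξ : E, ‖ξ‖ = 1 → c ≤ a ξ) (haA : ∀ ξ : E, ‖ξ‖ = 1 → a ξ ≤ A)
    {h : E → ℝ} (hh : Continuous h) (hh0 : ∀ η, 0 ≤ h η)
    (hh1 : ∀ η, h η ^ 2 ≤ (1 + ‖η‖) ^ (m - 1)) :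
    ∃ C : ℝ, 0 < C ∧ ∀ f : E → ℂ, Continuous f → Integrable (fun ξ => (h ξ : ℂ) * f ξ) →
      ∫⁻ z : ℝ × E, ENNReal.ofReal ((1 + ‖z.2‖ ^ 2) ^ (-(m / 2))) *
        ‖∫ ξ : E, cexp (Complex.I * ((⟪z.2, ξ⟫ : ℝ) : ℂ)) *
        (cexp (Complex.I * (z.1 : ℂ) * ((a ξ ^ m : ℝ) : ℂ)) * ((h ξ : ℂ) * f ξ))‖ₑ ^ 2 ≤
      ENNReal.ofReal C * ∫⁻ ξ, ‖f ξ‖ₑ ^ 2 := by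
  obtain ⟨C₀, hC₀, hschur⟩ := lintegral_lintegral_gaussian_level_set_le hm hmd ha ha_hom hc hac haA
    (hh.pow 2) (fun η => sq_nonneg _) hh1
  set d := Module.finrank ℝ E
  have hΓ : 0 < Real.Gamma (m / 2) := Real.Gamma_pos_of_pos (by positivity)
  set K := (Real.Gamma (m / 2))⁻¹ * (π ^ (1 / 2 : ℝ) * π ^ (d / 2 : ℝ) * C₀) with hK
  refine ⟨K, by positivity, fun f hf hfi => ?_⟩
  have hP : Continuous fun ξ => a ξ ^ m := ha.rpow_const fun _ => Or.inr (by linarith)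
  have hF : Continuous fun ξ => (h ξ : ℂ) * f ξ := by fun_prop
  have hv := continuous_oscillatory_integral hP hF hfi
  set v : ℝ × E → ℂ := fun z => ∫ ξ : E, cexp (Complex.I * ((⟪z.2, ξ⟫ : ℝ) : ℂ)) *
        (cexp (Complex.I * (z.1 : ℂ) * ((a ξ ^ m : ℝ) : ℂ)) * ((h ξ : ℂ) * f ξ)) with hvdef
  have hvm : Measurable v := hv.measurable
  have hreg : ∀ ε : ℝ, 0 < ε → ∫⁻ z : ℝ × E, ENNReal.ofReal (rexp (-(ε * z.1 ^ 2))) *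
      (ENNReal.ofReal ((1 + ‖z.2‖ ^ 2) ^ (-(m / 2))) * ‖v z‖ₑ ^ 2) ≤
      ENNReal.ofReal K * ∫⁻ ξ, ‖f ξ‖ₑ ^ 2 := by
    intro ε hε
    set G : ℝ → E → E → ℝ≥0∞ := fun s ξ η => ENNReal.ofReal (h η ^ 2 *
      rexp (-‖ξ - η‖ ^ 2 / (4 * s)) * rexp (-(a ξ ^ m - a η ^ m) ^ 2 / (4 * ε))) with hG
    have hGm : Measurable fun p : (ℝ × E) × E => G p.1.1 p.1.2 p.2 := by
      have := ha.measurable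
      have := hh.measurable
      simp only [hG]
      fun_prop
    have hGm' : Measurable fun p : ℝ × E => ∫⁻ η, G p.1 p.2 η := hGm.lintegral_prod_right'
    have hinner : ∀ s ∈ Set.Ioi (0 : ℝ), ENNReal.ofReal (s ^ (m / 2 - 1) * rexp (-s)) *
        ∫⁻ z : ℝ × E, ENNReal.ofReal (rexp (-(ε * z.1 ^ 2 + s * ‖z.2‖ ^ 2))) * ‖v z‖ₑ ^ 2 ≤
        ENNReal.ofReal (π ^ (1 / 2 : ℝ) * π ^ (d / 2 : ℝ) * (√ε)⁻¹) *
        ∫⁻ ξ, ENNReal.ofReal (s ^ ((m - d) / 2 - 1) * rexp (-s)) *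
          (‖f ξ‖ₑ ^ 2 * ∫⁻ η, G s ξ η) := by
      intro s hs
      have hs : 0 < s := hs
      have hTT := lintegral_gaussian_mul_enorm_sq_le hP hF hfi hs hε
      rw [show Module.finrank ℝ E = d from rfl] at hTT
      have hS := lintegral_lintegral_schur_le (ν := (volume : Measure E)) (u := fun ξ => ‖f ξ‖)
        (h := h) (k := fun ξ η => rexp (-‖ξ - η‖ ^ 2 / (4 * s)) *
          rexp (-(a ξ ^ m - a η ^ m) ^ 2 / (4 * ε))) hf.norm.measurable hh.measurable
        (by
          have := ha.measurable
          simp only [Function.uncurry_def]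
          fun_prop) (fun ξ η => by positivity)
        (fun ξ η => by rw [norm_sub_rev]; congr 2; ring)
      have hL : ∫⁻ ξ : E, ∫⁻ η : E, ‖(h ξ : ℂ) * f ξ‖ₑ * ‖(h η : ℂ) * f η‖ₑ *
          ENNReal.ofReal (rexp (-‖ξ - η‖ ^ 2 / (4 * s)) *
            rexp (-(a ξ ^ m - a η ^ m) ^ 2 / (4 * ε))) ≤
          ∫⁻ ξ, ‖f ξ‖ₑ ^ 2 * ∫⁻ η, G s ξ η := by
        refine le_trans (le_of_eq ?_) (hS.trans (le_of_eq ?_))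
        · refine lintegral_congr fun ξ => lintegral_congr fun η => ?_
          have := hh0 ξ
          have := hh0 η
          rw [← ofReal_norm, ← ofReal_norm, ← ENNReal.ofReal_mul (by positivity),
            ← ENNReal.ofReal_mul (by positivity), norm_mul, norm_mul, Complex.norm_real,
            Complex.norm_real, Real.norm_of_nonneg (hh0 ξ), Real.norm_of_nonneg (hh0 η)]
        · refine lintegral_congr fun ξ => ?_
          rw [← ofReal_norm, ← ENNReal.ofReal_pow (norm_nonneg _),
            ← lintegral_const_mul' _ _ ENNReal.ofReal_ne_top]
          refine lintegral_congr fun η => ?_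
          rw [hG, ← ENNReal.ofReal_mul (by positivity), mul_assoc (h η ^ 2)]
      grw [hTT, hL]
      rw [lintegral_const_mul' _ _ ENNReal.ofReal_ne_top, ← mul_assoc, ← mul_assoc,
        ← ENNReal.ofReal_mul (by positivity), ← ENNReal.ofReal_mul (by positivity)]
      refine le_of_eq ?_
      congr 2
      rw [Real.div_rpow (by positivity) hε.le, Real.div_rpow (by positivity) hs.le,
        Real.sqrt_eq_rpow, show s ^ (m / 2 - 1) = s ^ ((m - d) / 2 - 1) * s ^ (d / 2 : ℝ) by
          rw [← Real.rpow_add hs]; congr 1; ring]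
      field_simp
    calc _ = ENNReal.ofReal (Real.Gamma (m / 2))⁻¹ * ∫⁻ z : ℝ × E, ∫⁻ s in Set.Ioi (0 : ℝ),
          ENNReal.ofReal (s ^ (m / 2 - 1) * rexp (-s)) *
            (ENNReal.ofReal (rexp (-(ε * z.1 ^ 2 + s * ‖z.2‖ ^ 2))) * ‖v z‖ₑ ^ 2) := by
          rw [← lintegral_const_mul' _ _ ENNReal.ofReal_ne_top]
          refine lintegral_congr fun z => ?_
          rw [ofReal_one_add_sq_rpow_neg_eq (by linarith), mul_assoc, mul_left_comm, mul_left_comm,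
            mul_left_comm, mul_comm (∫⁻ s in Set.Ioi (0 : ℝ), _), ← mul_assoc _ _ (lintegral _ _),
            ← lintegral_const_mul' _ _ (by finiteness)]
          congr 1
          refine lintegral_congr fun s => ?_
          rw [neg_add, Real.exp_add, ENNReal.ofReal_mul (Real.exp_pos _).le]
          ring
      _ = ENNReal.ofReal (Real.Gamma (m / 2))⁻¹ * ∫⁻ s in Set.Ioi (0 : ℝ),
          ENNReal.ofReal (s ^ (m / 2 - 1) * rexp (-s)) * ∫⁻ z : ℝ × E,
            ENNReal.ofReal (rexp (-(ε * z.1 ^ 2 + s * ‖z.2‖ ^ 2))) * ‖v z‖ₑ ^ 2 := by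
          rw [lintegral_lintegral_swap]
          · simp_rw [lintegral_const_mul' _ _ ENNReal.ofReal_ne_top]
          · refine Measurable.aemeasurable ?_
            simp only [Function.uncurry_def]
            fun_prop
      _ ≤ ENNReal.ofReal (Real.Gamma (m / 2))⁻¹ *
          (ENNReal.ofReal (π ^ (1 / 2 : ℝ) * π ^ (d / 2 : ℝ) * (√ε)⁻¹) *
          ∫⁻ s in Set.Ioi (0 : ℝ), ∫⁻ ξ, ENNReal.ofReal (s ^ ((m - d) / 2 - 1) * rexp (-s)) *
          (‖f ξ‖ₑ ^ 2 * ∫⁻ η, G s ξ η)) := by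
          gcongr ENNReal.ofReal _ * ?_
          rw [← lintegral_const_mul' _ _ ENNReal.ofReal_ne_top]
          exact setLIntegral_mono' measurableSet_Ioi hinner
      _ ≤ ENNReal.ofReal (Real.Gamma (m / 2))⁻¹ *
          (ENNReal.ofReal (π ^ (1 / 2 : ℝ) * π ^ (d / 2 : ℝ) * (√ε)⁻¹) *
          ∫⁻ ξ, ‖f ξ‖ₑ ^ 2 * ENNReal.ofReal (C₀ * √ε)) := by
          gcongr ENNReal.ofReal _ * (ENNReal.ofReal _ * ?_)
          rw [lintegral_lintegral_swap]
          · refine lintegral_mono_ae ?_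
            filter_upwards [compl_mem_ae_iff.2 (measure_singleton (0 : E))] with ξ hξ
            grw [← hschur ξ hξ (a ξ ^ m) ε hε]
            simp_rw [mul_left_comm (ENNReal.ofReal _)]
            rw [lintegral_const_mul' _ _ (by finiteness)]
            exact le_rfl
          · refine Measurable.aemeasurable ?_
            have := hf.measurable
            simp only [Function.uncurry_def]
            fun_prop
      _ = _ := by
          rw [lintegral_mul_const' _ _ ENNReal.ofReal_ne_top, mul_comm (∫⁻ ξ, ‖f ξ‖ₑ ^ 2),
            ← mul_assoc, ← mul_assoc, ← ENNReal.ofReal_mul (by positivity),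
            ← ENNReal.ofReal_mul (by positivity)]
          congr 2
          rw [hK]
          field_simp
  have hlim : ∀ z : ℝ × E, Filter.liminf (fun k : ℕ =>
      ENNReal.ofReal (rexp (-(1 / ((k : ℝ) + 1) * z.1 ^ 2))) *
      (ENNReal.ofReal ((1 + ‖z.2‖ ^ 2) ^ (-(m / 2))) * ‖v z‖ₑ ^ 2)) Filter.atTop =
      ENNReal.ofReal ((1 + ‖z.2‖ ^ 2) ^ (-(m / 2))) * ‖v z‖ₑ ^ 2 := by
    intro z
    refine Filter.Tendsto.liminf_eq ?_
    have h1 : Filter.Tendsto (fun k : ℕ => rexp (-(1 / ((k : ℝ) + 1) * z.1 ^ 2)))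
        Filter.atTop (nhds 1) := by
      have := ((tendsto_one_div_add_atTop_nhds_zero_nat (𝕜 := ℝ)).mul_const (z.1 ^ 2)).neg
      simpa [Function.comp_def] using (Real.continuous_exp.tendsto _).comp this
    have h2 := ENNReal.Tendsto.mul_const (ENNReal.tendsto_ofReal h1)
      (b := ENNReal.ofReal ((1 + ‖z.2‖ ^ 2) ^ (-(m / 2))) * ‖v z‖ₑ ^ 2) (Or.inl (by simp))
    simpa using h2
  calc _ = ∫⁻ z : ℝ × E, Filter.liminf (fun k : ℕ =>
      ENNReal.ofReal (rexp (-(1 / ((k : ℝ) + 1) * z.1 ^ 2))) *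
      (ENNReal.ofReal ((1 + ‖z.2‖ ^ 2) ^ (-(m / 2))) * ‖v z‖ₑ ^ 2)) Filter.atTop := by
        simp_rw [hlim]
        rfl
    _ ≤ _ := lintegral_liminf_le fun k => by fun_prop
    _ ≤ _ := by
        refine Filter.liminf_le_of_le (by isBoundedDefault) fun b hb => ?_
        obtain ⟨k, hk⟩ := hb.exists
        exact hk.trans (hreg _ (by positivity))

theorem exists_schwartzMap_eq_FT {n : ℕ} (φ : SchwartzMap (EuclideanSpace ℝ (Fin n)) ℂ) :
    ∃ ψ : SchwartzMap (EuclideanSpace ℝ (Fin n)) ℂ, (∀ ξ, FT n (fun y => φ y) ξ = ψ ξ) ∧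
      ∫⁻ ξ, ‖ψ ξ‖ₑ ^ 2 = ∫⁻ x, ‖φ x‖ₑ ^ 2 := by
  have hπ : (0 : ℝ) < 2 * π := by positivity
  set L : EuclideanSpace ℝ (Fin n) ≃L[ℝ] EuclideanSpace ℝ (Fin n) :=
    ContinuousLinearEquiv.smulLeft (Units.mk0 (2 * π)⁻¹ (by positivity)) with hL
  have hLapp : ∀ ξ, L ξ = (2 * π)⁻¹ • ξ := fun ξ => rfl
  set c : ℝ := (2 * π) ^ (-(n : ℝ) / 2) with hc
  refine ⟨c • SchwartzMap.compCLMOfContinuousLinearEquiv ℝ L (FourierTransform.fourier φ),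
    fun ξ => ?_, ?_⟩
  · simp only [smul_apply, SchwartzMap.compCLMOfContinuousLinearEquiv_apply,
      Function.comp_apply, hLapp, SchwartzMap.fourier_coe, FT, Real.fourier_eq']
    congr 1
    refine integral_congr_ae (.of_forall fun x => ?_)
    simp only [smul_eq_mul, inner_smul_right]
    congr 2
    push_cast
    have : (π : ℂ) ≠ 0 := by exact_mod_cast Real.pi_ne_zero
    field_simp
  · have hsq : ∀ g : SchwartzMap (EuclideanSpace ℝ (Fin n)) ℂ,
        ∫⁻ x, ‖g x‖ₑ ^ 2 = ENNReal.ofReal (∫ x, ‖g x‖ ^ 2) := by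
      intro g
      rw [ofReal_integral_eq_lintegral_ofReal]
      · refine lintegral_congr fun x => ?_
        rw [ENNReal.ofReal_pow (norm_nonneg _), ofReal_norm]
      · exact (memLp_two_iff_integrable_sq_norm g.continuous.aestronglyMeasurable).1
          (g.memLp 2 volume)
      · exact .of_forall fun x => by positivity
    rw [hsq, hsq, ← SchwartzMap.integral_norm_sq_fourier φ]
    congr 1
    simp only [smul_apply, SchwartzMap.compCLMOfContinuousLinearEquiv_apply,
      Function.comp_apply, hLapp, norm_smul, mul_pow]
    rw [integral_const_mul, Measure.integral_comp_smul (μ := volume)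
      (fun ξ => ‖FourierTransform.fourier φ ξ‖ ^ 2), finrank_euclideanSpace_fin, smul_eq_mul,
      ← mul_assoc, abs_of_nonneg (by positivity), Real.norm_of_nonneg (by positivity), hc,
      ← Real.rpow_natCast (_ ^ (_ : ℝ)), ← Real.rpow_mul hπ.le, inv_pow, inv_inv,
      ← Real.rpow_natCast (2 * π), ← Real.rpow_add hπ]
    norm_num

theorem SchwartzMap.integrable_mul_of_le_one_add_norm_rpow {E : Type*} [NormedAddCommGroup E]
    [InnerProductSpace ℝ E] [FiniteDimensional ℝ E] [MeasurableSpace E] [BorelSpace E]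
    (ψ : SchwartzMap E ℂ) {h : E → ℝ} (hh : Continuous h) (hh0 : ∀ η, 0 ≤ h η) {r : ℝ}
    (hh1 : ∀ η, h η ^ 2 ≤ (1 + ‖η‖) ^ r) : Integrable (fun ξ => (h ξ : ℂ) * ψ ξ) := by
  obtain ⟨k, hk⟩ := exists_nat_ge r
  have hint := ((ψ.integrable_pow_mul volume 0).add (ψ.integrable_pow_mul volume k)).const_mul
    (2 ^ (k - 1))
  refine hint.mono' (by fun_prop) (.of_forall fun ξ => ?_)
  have h1 : 1 ≤ 1 + ‖ξ‖ := by linarith [norm_nonneg ξ]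
  have h2 : h ξ ≤ (1 + ‖ξ‖) ^ k := by
    refine le_of_sq_le_sq ?_ (by positivity)
    calc h ξ ^ 2 ≤ (1 + ‖ξ‖) ^ (k : ℝ) := (hh1 ξ).trans (Real.rpow_le_rpow_of_exponent_le h1 hk)
      _ = (1 + ‖ξ‖) ^ k := Real.rpow_natCast _ _
      _ ≤ ((1 + ‖ξ‖) ^ k) ^ 2 := le_self_pow₀ (one_le_pow₀ h1) (by norm_num)
  have h3 := h2.trans (add_pow_le zero_le_one (norm_nonneg ξ) k)
  rw [norm_mul, Complex.norm_real, Real.norm_of_nonneg (hh0 ξ)]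
  refine (mul_le_mul_of_nonneg_right h3 (norm_nonneg _)).trans (le_of_eq ?_)
  simp only [Pi.add_apply]
  ring

theorem exists_pos_le_le_on_unit_sphere {E : Type*} [NormedAddCommGroup E] [NormedSpace ℝ E]
    [FiniteDimensional ℝ E] [Nontrivial E] {a : E → ℝ} (ha : Continuous a)
    (ha_pos : ∀ ξ, ξ ≠ 0 → 0 < a ξ) :
    ∃ c A : ℝ, 0 < c ∧ (∀ ξ, ‖ξ‖ = 1 → c ≤ a ξ) ∧ ∀ ξ, ‖ξ‖ = 1 → a ξ ≤ A := by
  have hS : IsCompact (Metric.sphere (0 : E) 1) := isCompact_sphere 0 1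
  have hne : (Metric.sphere (0 : E) 1).Nonempty := NormedSpace.sphere_nonempty.2 zero_le_one
  obtain ⟨ξ₀, hξ₀, hmin⟩ := hS.exists_isMinOn hne ha.continuousOn
  obtain ⟨ξ₁, -, hmax⟩ := hS.exists_isMaxOn hne ha.continuousOn
  refine ⟨a ξ₀, a ξ₁, ha_pos ξ₀ ?_, fun ξ hξ => hmin (by simpa using hξ),
    fun ξ hξ => hmax (by simpa using hξ)⟩
  rintro rfl
  simp at hξ₀

theorem eLpNorm_two_le_of_lintegral_le {X Y : Type*} [MeasurableSpace X] [MeasurableSpace Y]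
    {μ : Measure X} {ν : Measure Y} {f : X → ℂ} {g : Y → ℂ} {C : ℝ} (hC : 0 ≤ C)
    (h : ∫⁻ x, ‖f x‖ₑ ^ 2 ∂μ ≤ ENNReal.ofReal C * ∫⁻ y, ‖g y‖ₑ ^ 2 ∂ν) :
    eLpNorm f 2 μ ≤ ENNReal.ofReal √C * eLpNorm g 2 ν := by
  rw [eLpNorm_eq_lintegral_rpow_enorm_toReal (by simp) (by simp),
    eLpNorm_eq_lintegral_rpow_enorm_toReal (by simp) (by simp)]
  simp only [ENNReal.toReal_ofNat, ENNReal.rpow_ofNat]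
  rw [Real.sqrt_eq_rpow, ← ENNReal.ofReal_rpow_of_nonneg hC (by norm_num),
    ← ENNReal.mul_rpow_of_nonneg _ _ (by norm_num)]
  exact ENNReal.rpow_le_rpow h (by norm_num)

theorem smoothing_type_II_homogeneous (n : ℕ) (hn : 2 ≤ n) (m : ℝ) (hm1 : 1 < m)
    (hmn : m < n)
    (a : EuclideanSpace ℝ (Fin n) → ℝ)
    (ha_cont : Continuous a)
    (ha_smooth : ContDiffOn ℝ (⊤ : ℕ∞) a {(0 : EuclideanSpace ℝ (Fin n))}ᶜ)
    (ha_hom : ∀ t : ℝ, 0 < t → ∀ ξ, a (t • ξ) = t * a ξ)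
    (ha_pos : ∀ ξ : EuclideanSpace ℝ (Fin n), ξ ≠ 0 → 0 < a ξ) :
    ∃ C > 0, ∀ φ : SchwartzMap (EuclideanSpace ℝ (Fin n)) ℂ,
      eLpNorm (fun tx : ℝ × EuclideanSpace ℝ (Fin n) =>
          ((Real.sqrt (1 + ‖tx.2‖ ^ 2) ^ (-(m / 2)) : ℝ) : ℂ) *
            mult n (fun ξ => ((Real.sqrt (1 + ‖ξ‖ ^ 2) ^ ((m - 1) / 2) : ℝ) : ℂ) *
                Complex.exp (Complex.I * (tx.1 : ℂ) * ((a ξ ^ m : ℝ) : ℂ)))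
              (fun y => φ y) tx.2) 2 volume
        ≤ ENNReal.ofReal C * eLpNorm (fun x => φ x) 2 volume := by
  have : Nontrivial (EuclideanSpace ℝ (Fin n)) := by
    refine Module.nontrivial_of_finrank_pos (R := ℝ) ?_
    rw [finrank_euclideanSpace_fin]; omega
  obtain ⟨c, A, hc, hac, haA⟩ := exists_pos_le_le_on_unit_sphere ha_cont ha_pos
  set h : EuclideanSpace ℝ (Fin n) → ℝ := fun ξ => √(1 + ‖ξ‖ ^ 2) ^ ((m - 1) / 2) with hdef
  have hh : Continuous h := by
    refine Continuous.rpow_const (by fun_prop) fun ξ => Or.inr (by linarith)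
  have hh0 : ∀ ξ, 0 ≤ h ξ := fun ξ => by positivity
  have hh1 : ∀ ξ, h ξ ^ 2 ≤ (1 + ‖ξ‖) ^ (m - 1) := by
    intro ξ
    rw [hdef, ← Real.rpow_natCast, ← Real.rpow_mul (by positivity)]
    simp only [Nat.cast_ofNat, div_mul_cancel₀ _ (two_ne_zero' ℝ)]
    refine Real.rpow_le_rpow (by positivity) ?_ (by linarith)
    rw [Real.sqrt_le_left (by positivity)]
    nlinarith [norm_nonneg ξ]
  obtain ⟨C, hC, hmain⟩ := lintegral_weight_mul_enorm_sq_le hm1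
    (by rwa [finrank_euclideanSpace_fin]) ha_cont ha_hom hc hac haA hh hh0 hh1
  set κ : ℝ := (2 * π) ^ (-(n : ℝ) / 2) with hκ
  have hκ0 : 0 < κ := by positivity
  refine ⟨√(κ ^ 2 * C), by positivity, fun φ => eLpNorm_two_le_of_lintegral_le (by positivity) ?_⟩
  obtain ⟨ψ, hψ, hplancherel⟩ := exists_schwartzMap_eq_FT φ
  rw [← hplancherel, ENNReal.ofReal_mul (by positivity), mul_assoc]
  grw [← hmain ψ ψ.continuous (ψ.integrable_mul_of_le_one_add_norm_rpow hh hh0 hh1)]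
  rw [← lintegral_const_mul' _ _ ENNReal.ofReal_ne_top]
  refine le_of_eq (lintegral_congr fun z => ?_)
  simp only [mult, IFT, hψ]
  have hint : ∫ ξ, cexp (Complex.I * ((⟪z.2, ξ⟫ : ℝ) : ℂ)) *
      (((h ξ : ℝ) : ℂ) * cexp (Complex.I * (z.1 : ℂ) * ((a ξ ^ m : ℝ) : ℂ)) * ψ ξ) =
      ∫ ξ, cexp (Complex.I * ((⟪z.2, ξ⟫ : ℝ) : ℂ)) *
        (cexp (Complex.I * (z.1 : ℂ) * ((a ξ ^ m : ℝ) : ℂ)) * ((h ξ : ℂ) * ψ ξ)) := by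
    refine integral_congr_ae (.of_forall fun ξ => ?_)
    simp only
    ring
  rw [hint, ← hκ, enorm_mul, enorm_smul, mul_pow, mul_pow, ← mul_assoc, ← mul_assoc]
  congr 1
  rw [← ofReal_norm, ← ofReal_norm, ← ENNReal.ofReal_pow (norm_nonneg _),
    ← ENNReal.ofReal_pow (norm_nonneg _), Complex.norm_real, Real.norm_of_nonneg (by positivity),
    Real.norm_of_nonneg hκ0.le, mul_comm]
  congr 2
  rw [← Real.rpow_natCast, ← Real.rpow_mul (by positivity), mul_comm, Real.rpow_mul (by positivity),
    Real.rpow_natCast, Real.sq_sqrt (by positivity)]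
end
end

section
/- Let n ≥ 2, m > 1 and δ > 1/2. There exists a constant C > 0 such that for all ζ ∈ ℂ∖ℝ and all Schwartz functions f, g on ℝⁿ, |( |D_x|^{m-1} (ζ − p(D_x))^{-1} f , g )_{L²(ℝⁿ)}| ≤ C ‖⟨x⟩^{δ} f‖_{L²(ℝⁿ)} ‖⟨x⟩^{δ} g‖_{L²(ℝⁿ)}; in particular the supremum over ζ ∈ ℂ∖ℝ of the left-hand side is finite and bounded by the right-hand side. -/
open MeasureTheory Real Complex RealInnerProductSpace

noncomputable section

set_option linter.unusedSectionVars false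

section RadialKernel

/-- The radial profile `s ^ (m - 1) / (ζ - s ^ m)` of the resolvent symbol. -/
def radialKernel (m : ℝ) (ζ : ℂ) (s : ℝ) : ℂ :=
  ((s ^ (m - 1) : ℝ) : ℂ) * (ζ - ((s ^ m : ℝ) : ℂ))⁻¹

theorem sub_ofReal_ne_zero {ζ : ℂ} (hζ : ζ.im ≠ 0) (t : ℝ) : ζ - (t : ℂ) ≠ 0 := by
  intro h
  apply hζ
  simpa using congrArg Complex.im h

theorem rpow_sub_one_mul_abs_sub_le {m s s₀ : ℝ} (hm : 1 ≤ m) (hs : 0 < s) (hs₀ : 0 < s₀) :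
    s ^ (m - 1) * |s - s₀| ≤ |s ^ m - s₀ ^ m| := by
  have e1 : s ^ m = s ^ (m - 1) * s := by
    rw [← Real.rpow_add_one hs.ne']; ring_nf
  have e2 : s₀ ^ m = s₀ ^ (m - 1) * s₀ := by
    rw [← Real.rpow_add_one hs₀.ne']; ring_nf
  have p1 : 0 ≤ s ^ (m - 1) := by positivity
  rcases le_total s₀ s with h | h
  · have : s₀ ^ (m - 1) ≤ s ^ (m - 1) := Real.rpow_le_rpow hs₀.le h (by linarith)
    rw [abs_of_nonneg (sub_nonneg.2 h), e1, e2]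
    refine le_trans ?_ (le_abs_self _)
    nlinarith
  · have : s ^ (m - 1) ≤ s₀ ^ (m - 1) := Real.rpow_le_rpow hs.le h (by linarith)
    rw [abs_of_nonpos (sub_nonpos.2 h), e1, e2]
    refine le_trans ?_ (neg_le_abs _)
    nlinarith

theorem rpow_sub_rpow_le {m s t : ℝ} (hm : 1 ≤ m) (hs : 0 < s) (ht : 0 < t) :
    s ^ m - t ^ m ≤ m * s ^ (m - 1) * (s - t) := by
  have e1 : s ^ m = s ^ (m - 1) * s := by
    rw [← Real.rpow_add_one hs.ne']; ring_nf
  have h := one_add_mul_self_le_rpow_one_add (s := t / s - 1)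
    (by have := div_pos ht hs; linarith) hm
  have e3 : (1 + (t / s - 1)) ^ m = t ^ m / s ^ m := by
    rw [← Real.div_rpow ht.le hs.le]; ring_nf
  rw [e3, le_div_iff₀ (by positivity)] at h
  have : (1 + m * (t / s - 1)) * s ^ m = s ^ m - m * s ^ (m - 1) * (s - t) := by
    rw [e1]; field_simp; ring
  linarith

theorem norm_radialKernel {m s : ℝ} (hs : 0 < s) (ζ : ℂ) :
    ‖radialKernel m ζ s‖ = s ^ (m - 1) / ‖ζ - ((s ^ m : ℝ) : ℂ)‖ := by
  rw [radialKernel, norm_mul, norm_inv, Complex.norm_real, Real.norm_of_nonneg (by positivity)]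
  rfl

theorem norm_radialKernel_le_inv {m s : ℝ} (hs : 0 < s) {ζ : ℂ}
    (hre : ζ.re ≤ 0) : ‖radialKernel m ζ s‖ ≤ 1 / s := by
  have e1 : s ^ m = s ^ (m - 1) * s := by
    rw [← Real.rpow_add_one hs.ne']; ring_nf
  have p : 0 < s ^ m := by positivity
  have h : s ^ m ≤ ‖ζ - ((s ^ m : ℝ) : ℂ)‖ := by
    have := Complex.abs_re_le_norm (ζ - ((s ^ m : ℝ) : ℂ))
    rw [Complex.sub_re, Complex.ofReal_re] at this
    linarith [neg_le_abs (ζ.re - s ^ m)]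
  rw [norm_radialKernel hs, div_le_div_iff₀ (by linarith) hs]
  linarith

theorem norm_radialKernel_mul_le_one {m s s₀ : ℝ} (hm : 1 ≤ m) (hs : 0 < s) (hs₀ : 0 < s₀) {ζ : ℂ}
    (hζ : ζ.im ≠ 0) (hre : ζ.re = s₀ ^ m) : ‖radialKernel m ζ s‖ * |s - s₀| ≤ 1 := by
  have h : |s ^ m - s₀ ^ m| ≤ ‖ζ - ((s ^ m : ℝ) : ℂ)‖ := by
    have := Complex.abs_re_le_norm (ζ - ((s ^ m : ℝ) : ℂ))
    rw [Complex.sub_re, Complex.ofReal_re, hre, abs_sub_comm] at this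
    exact this
  have h0 : 0 < ‖ζ - ((s ^ m : ℝ) : ℂ)‖ := norm_pos_iff.2 (sub_ofReal_ne_zero hζ _)
  rw [norm_radialKernel hs, div_mul_eq_mul_div, div_le_one h0]
  exact (rpow_sub_one_mul_abs_sub_le hm hs hs₀).trans h

theorem rpow_sub_one_le_one_add {m s : ℝ} (hm : 1 ≤ m) (hs : 0 ≤ s) :
    s ^ (m - 1) ≤ 1 + s ^ m := by
  rcases le_total s 1 with h | h
  · have := Real.rpow_le_one hs h (by linarith : 0 ≤ m - 1)
    have := Real.rpow_nonneg hs m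
    linarith
  · have := Real.rpow_le_rpow_of_exponent_le h (by linarith : m - 1 ≤ m)
    linarith

/-- For fixed `ζ` the radial kernel is bounded. -/
theorem norm_radialKernel_le {m s : ℝ} (hm : 1 ≤ m) (hs : 0 < s) {ζ : ℂ} (hζ : ζ.im ≠ 0) :
    ‖radialKernel m ζ s‖ ≤ (1 + ‖ζ‖) / |ζ.im| + 1 := by
  have him : 0 < |ζ.im| := abs_pos.2 hζ
  have h1 : |ζ.im| ≤ ‖ζ - ((s ^ m : ℝ) : ℂ)‖ := by
    simpa using Complex.abs_im_le_norm (ζ - ((s ^ m : ℝ) : ℂ))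
  have h2 : s ^ m ≤ ‖ζ‖ + ‖ζ - ((s ^ m : ℝ) : ℂ)‖ := by
    have := norm_sub_le ζ (ζ - ((s ^ m : ℝ) : ℂ))
    rw [sub_sub_cancel, Complex.norm_real, Real.norm_of_nonneg (by positivity)] at this
    exact this
  rw [norm_radialKernel hs, div_le_iff₀ (by linarith)]
  have h3 := rpow_sub_one_le_one_add hm hs.le
  have h4 : 1 + ‖ζ‖ ≤ (1 + ‖ζ‖) / |ζ.im| * ‖ζ - ((s ^ m : ℝ) : ℂ)‖ := by
    rw [div_mul_eq_mul_div, le_div_iff₀ him]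
    have : 0 ≤ ‖ζ‖ := norm_nonneg _
    nlinarith
  nlinarith

theorem continuousOn_radialKernel (m : ℝ) {ζ : ℂ} (hζ : ζ.im ≠ 0) :
    ContinuousOn (radialKernel m ζ) (Set.Ioi 0) := by
  have h (p : ℝ) : ContinuousOn (fun s : ℝ => ((s ^ p : ℝ) : ℂ)) (Set.Ioi 0) :=
    Complex.continuous_ofReal.comp_continuousOn
      (continuousOn_id.rpow_const fun x hx => Or.inl (ne_of_gt hx))
  exact (h _).mul ((continuousOn_const.sub (h _)).inv₀ fun x _ => sub_ofReal_ne_zero hζ _)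

theorem norm_le_mul_norm_of_abs_re_le {z w : ℂ} {L : ℝ} (hL : 1 ≤ L) (him : z.im = w.im)
    (h : |z.re| ≤ L * |w.re|) : ‖z‖ ≤ L * ‖w‖ := by
  have hL0 : 0 ≤ L := by linarith
  refine abs_le_of_sq_le_sq' ?_ (by positivity) |>.2
  rw [mul_pow, Complex.sq_norm, Complex.sq_norm, Complex.normSq_apply, Complex.normSq_apply, him]
  have h2 : |z.re| ^ 2 ≤ (L * |w.re|) ^ 2 := pow_le_pow_left₀ (abs_nonneg _) h 2
  rw [mul_pow, sq_abs, sq_abs] at h2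
  nlinarith [mul_nonneg (mul_self_nonneg w.im) (by nlinarith : 0 ≤ L ^ 2 - 1)]

theorem norm_log_sub_log_le {z w : ℂ} {L : ℝ} (hL : 0 < L) (hz : z ≠ 0) (hw : w ≠ 0)
    (h1 : ‖z‖ ≤ L * ‖w‖) (h2 : ‖w‖ ≤ L * ‖z‖) :
    ‖Complex.log z - Complex.log w‖ ≤ L + 2 * π := by
  have hz' := norm_pos_iff.2 hz
  have hw' := norm_pos_iff.2 hw
  refine (Complex.norm_le_abs_re_add_abs_im _).trans (add_le_add ?_ ?_)
  · rw [Complex.sub_re, Complex.log_re, Complex.log_re, abs_le]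
    have hLlog : Real.log L ≤ L := (Real.log_le_sub_one_of_pos hL).trans (by linarith)
    have a1 := Real.log_le_log hz' h1
    have a2 := Real.log_le_log hw' h2
    rw [Real.log_mul hL.ne' hw'.ne'] at a1
    rw [Real.log_mul hL.ne' hz'.ne'] at a2
    constructor <;> linarith
  · rw [Complex.sub_im, Complex.log_im, Complex.log_im]
    have := Complex.abs_arg_le_pi z
    have := Complex.abs_arg_le_pi w
    linarith [abs_sub z.arg w.arg]

theorem hasDerivAt_log_sub_rpow {m s : ℝ} (hm : 0 < m) (hs : 0 < s) {ζ : ℂ} (hζ : ζ.im ≠ 0) :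
    HasDerivAt (fun s : ℝ => -(m : ℂ)⁻¹ * Complex.log (ζ - ((s ^ m : ℝ) : ℂ)))
      (radialKernel m ζ s) s := by
  have h1 : HasDerivAt (fun s : ℝ => ((s ^ m : ℝ) : ℂ)) ((m * s ^ (m - 1) : ℝ) : ℂ) s :=
    (Real.hasDerivAt_rpow_const (Or.inl hs.ne')).ofReal_comp
  have h2 := (h1.const_sub ζ).clog_real
    (Complex.mem_slitPlane_iff.2 (Or.inr (by simpa using hζ)))
  refine (h2.const_mul (-(m : ℂ)⁻¹)).congr_deriv ?_
  have : (m : ℂ) ≠ 0 := by exact_mod_cast hm.ne'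
  rw [radialKernel]
  push_cast
  field_simp

/-- The principal-value integral of the radial kernel around its singularity is bounded. -/
theorem norm_integral_radialKernel_le {m s₀ ε : ℝ} (hm : 1 ≤ m) (hs₀ : 0 < s₀) (hε : 0 < ε)
    (hε' : ε ≤ s₀ / 2) {ζ : ℂ} (hζ : ζ.im ≠ 0) (hre : ζ.re = s₀ ^ m) :
    ‖∫ s in (s₀ - ε)..(s₀ + ε), radialKernel m ζ s‖ ≤ m * 2 ^ (m - 1) + 2 * π := by
  have hsub : Set.uIcc (s₀ - ε) (s₀ + ε) ⊆ Set.Ioi 0 := by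
    rw [Set.uIcc_of_le (by linarith)]
    intro x hx
    have := hx.1
    exact Set.mem_Ioi.2 (by linarith)
  rw [intervalIntegral.integral_eq_sub_of_hasDerivAt
    (fun x hx => hasDerivAt_log_sub_rpow (by linarith) (hsub hx) hζ)
    ((continuousOn_radialKernel m hζ).mono hsub).intervalIntegrable, ← mul_sub, norm_mul]
  have hm' : ‖-(m : ℂ)⁻¹‖ ≤ 1 := by
    rw [norm_neg, norm_inv, Complex.norm_real, Real.norm_of_nonneg (by linarith)]
    exact inv_le_one_of_one_le₀ hm
  set D := s₀ ^ (m - 1) * ε with hD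
  have h2 : (1 : ℝ) ≤ 2 ^ (m - 1) := Real.one_le_rpow (by norm_num) (by linarith)
  have p0 : 0 < s₀ ^ (m - 1) := by positivity
  have hD0 : 0 < D := by positivity
  set L := m * 2 ^ (m - 1) with hL
  have hmL : m ≤ L := by nlinarith
  have hL1 : 1 ≤ L := by linarith
  have a1 : D ≤ (s₀ + ε) ^ m - s₀ ^ m := by
    have := rpow_sub_one_mul_abs_sub_le hm hs₀ (by linarith : 0 < s₀ + ε)
    have mono : s₀ ^ m ≤ (s₀ + ε) ^ m := Real.rpow_le_rpow hs₀.le (by linarith) (by linarith)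
    rwa [abs_of_nonpos (by linarith), abs_of_nonpos (by linarith), sub_add_cancel_left, neg_neg,
      neg_sub] at this
  have a2 : (s₀ + ε) ^ m - s₀ ^ m ≤ L * D := by
    refine (rpow_sub_rpow_le hm (by linarith : 0 < s₀ + ε) hs₀).trans ?_
    have : (s₀ + ε) ^ (m - 1) ≤ 2 ^ (m - 1) * s₀ ^ (m - 1) := by
      rw [← Real.mul_rpow (by norm_num) hs₀.le]
      exact Real.rpow_le_rpow (by linarith) (by linarith) (by linarith)
    rw [add_sub_cancel_left, hL, hD]
    calc m * (s₀ + ε) ^ (m - 1) * ε ≤ m * (2 ^ (m - 1) * s₀ ^ (m - 1)) * ε := by gcongr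
      _ = _ := by ring
  have b1 : D ≤ s₀ ^ m - (s₀ - ε) ^ m := by
    have e1 : s₀ ^ m = s₀ ^ (m - 1) * s₀ := by
      rw [← Real.rpow_add_one hs₀.ne']; ring_nf
    have e2 : (s₀ - ε) ^ m = (s₀ - ε) ^ (m - 1) * (s₀ - ε) := by
      rw [← Real.rpow_add_one (by linarith : 0 < s₀ - ε).ne']; ring_nf
    have : (s₀ - ε) ^ (m - 1) ≤ s₀ ^ (m - 1) :=
      Real.rpow_le_rpow (by linarith) (by linarith) (by linarith)
    rw [e1, e2, hD]
    nlinarith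
  have b2 : s₀ ^ m - (s₀ - ε) ^ m ≤ L * D := by
    refine (rpow_sub_rpow_le hm hs₀ (by linarith : 0 < s₀ - ε)).trans ?_
    rw [sub_sub_cancel, hD, ← mul_assoc]
    gcongr
  have key : ‖Complex.log (ζ - (((s₀ + ε) ^ m : ℝ) : ℂ)) -
      Complex.log (ζ - (((s₀ - ε) ^ m : ℝ) : ℂ))‖ ≤ L + 2 * π := by
    refine norm_log_sub_log_le (by linarith) (sub_ofReal_ne_zero hζ _) (sub_ofReal_ne_zero hζ _)
      (norm_le_mul_norm_of_abs_re_le hL1 (by simp) ?_)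
      (norm_le_mul_norm_of_abs_re_le hL1 (by simp) ?_)
    all_goals
      rw [Complex.sub_re, Complex.sub_re, Complex.ofReal_re, Complex.ofReal_re, hre,
        abs_of_nonpos (by linarith : s₀ ^ m - (s₀ + ε) ^ m ≤ 0),
        abs_of_nonneg (by linarith : 0 ≤ s₀ ^ m - (s₀ - ε) ^ m)]
      nlinarith
  calc _ ≤ 1 * (L + 2 * π) := mul_le_mul hm' key (norm_nonneg _) zero_le_one
    _ = _ := one_mul _

end RadialKernel

section RadialIntegral

theorem intervalIntegrable_abs_rpow {r : ℝ} (hr : -1 < r) {ε : ℝ} (hε : 0 ≤ ε) :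
    IntervalIntegrable (fun x : ℝ => |x| ^ r) volume 0 ε := by
  refine (intervalIntegral.intervalIntegrable_rpow' hr).congr ?_
  intro x hx
  rw [Set.uIoc_of_le hε] at hx
  simp only [abs_of_pos hx.1]

theorem intervalIntegrable_abs_rpow_symm {r : ℝ} (hr : -1 < r) {ε : ℝ} (hε : 0 ≤ ε) :
    IntervalIntegrable (fun x : ℝ => |x| ^ r) volume (-ε) ε := by
  have h := intervalIntegrable_abs_rpow hr hε
  have h' := h.comp_sub_left 0
  simp only [zero_sub, abs_neg, neg_zero] at h'
  exact h'.symm.trans h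

theorem integral_abs_rpow_symm {r : ℝ} (hr : -1 < r) {ε : ℝ} (hε : 0 ≤ ε) :
    ∫ x in (-ε)..ε, |x| ^ r = 2 * (ε ^ (r + 1) / (r + 1)) := by
  have h := intervalIntegrable_abs_rpow hr hε
  have h' := h.comp_sub_left 0
  simp only [zero_sub, abs_neg, neg_zero] at h'
  rw [← intervalIntegral.integral_add_adjacent_intervals h'.symm h]
  have e1 : ∫ x in (0 : ℝ)..ε, |x| ^ r = ε ^ (r + 1) / (r + 1) := by
    have : ∫ x in (0 : ℝ)..ε, |x| ^ r = ∫ x in (0 : ℝ)..ε, x ^ r := by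
      apply intervalIntegral.integral_congr
      intro x hx
      rw [Set.uIcc_of_le hε] at hx
      simp only [abs_of_nonneg hx.1]
    rw [this, integral_rpow (Or.inl hr), Real.zero_rpow (by linarith), sub_zero]
  have e2 : ∫ x in (-ε)..0, |x| ^ r = ∫ x in (0 : ℝ)..ε, |x| ^ r := by
    have := intervalIntegral.integral_comp_neg (a := 0) (b := ε) (fun x : ℝ => |x| ^ r)
    simp only [abs_neg, neg_zero] at this
    exact this.symm
  rw [e2, e1]; ring

theorem integral_indicator_Icc_inv_sub (s₀ : ℝ) {ε ρ : ℝ} (hε : 0 < ε) (hερ : ε ≤ ρ) :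
    Integrable ((Set.Icc (s₀ + ε) (s₀ + ρ)).indicator fun s => 1 / (s - s₀)) ∧
    ∫ s, (Set.Icc (s₀ + ε) (s₀ + ρ)).indicator (fun s => 1 / (s - s₀)) s = Real.log (ρ / ε) := by
  have hc : ContinuousOn (fun s : ℝ => 1 / (s - s₀)) (Set.Icc (s₀ + ε) (s₀ + ρ)) :=
    continuousOn_const.div (by fun_prop) fun x hx => by
      have := hx.1
      exact (by linarith : 0 < x - s₀).ne'
  refine ⟨(hc.integrableOn_compact isCompact_Icc).integrable_indicator measurableSet_Icc, ?_⟩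
  rw [integral_indicator measurableSet_Icc, integral_Icc_eq_integral_Ioc,
    ← intervalIntegral.integral_of_le (by linarith),
    intervalIntegral.integral_comp_sub_right (fun x => 1 / x) s₀, add_sub_cancel_left,
    add_sub_cancel_left, integral_one_div_of_pos hε (by linarith)]

theorem integral_indicator_Icc_inv_sub' (s₀ : ℝ) {ε ρ : ℝ} (hε : 0 < ε) (hερ : ε ≤ ρ) :
    Integrable ((Set.Icc (s₀ - ρ) (s₀ - ε)).indicator fun s => 1 / (s₀ - s)) ∧
    ∫ s, (Set.Icc (s₀ - ρ) (s₀ - ε)).indicator (fun s => 1 / (s₀ - s)) s = Real.log (ρ / ε) := by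
  have hc : ContinuousOn (fun s : ℝ => 1 / (s₀ - s)) (Set.Icc (s₀ - ρ) (s₀ - ε)) :=
    continuousOn_const.div (by fun_prop) fun x hx => by
      have := hx.2
      exact (by linarith : 0 < s₀ - x).ne'
  refine ⟨(hc.integrableOn_compact isCompact_Icc).integrable_indicator measurableSet_Icc, ?_⟩
  rw [integral_indicator measurableSet_Icc, integral_Icc_eq_integral_Ioc,
    ← intervalIntegral.integral_of_le (by linarith),
    intervalIntegral.integral_comp_sub_left (fun x => 1 / x) s₀, sub_sub_cancel,
    sub_sub_cancel, integral_one_div_of_pos hε (by linarith)]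

/-- Quantitative size and regularity of a function on the half-line: it is bounded and integrable
by `Q`, also against `ds / s`, and is Hölder continuous of order `1/2` at scale `S⁻¹`. -/
structure HalfLineBound (A S Q : ℝ) (H : ℝ → ℂ) : Prop where
  continuous : Continuous H
  norm_le : ∀ s, 0 < s → ‖H s‖ ≤ Q
  integrableOn : IntegrableOn (fun s => ‖H s‖) (Set.Ioi 0)
  integral_le : ∫ s in Set.Ioi 0, ‖H s‖ ≤ Q
  integrableOn_div : IntegrableOn (fun s => ‖H s‖ / s) (Set.Ioi 0)
  integral_div_le : ∫ s in Set.Ioi 0, ‖H s‖ / s ≤ 2 * Q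
  norm_sub_le : ∀ s₀ s, 0 < s₀ → |s - s₀| ≤ s₀ / 2 →
    ‖H s - H s₀‖ ≤ A * Q * (√(S * |s - s₀|) + |s - s₀| / s₀)

variable {A S Q m : ℝ} {H : ℝ → ℂ} {ζ : ℂ}

theorem HalfLineBound.integrableOn_radialKernel_mul (hH : HalfLineBound A S Q H) (hm : 1 ≤ m)
    (hζ : ζ.im ≠ 0) : IntegrableOn (fun s => radialKernel m ζ s * H s) (Set.Ioi 0) := by
  have h := hH.integrableOn.const_mul ((1 + ‖ζ‖) / |ζ.im| + 1)
  refine Integrable.mono' h (((continuousOn_radialKernel m hζ).mul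
    hH.continuous.continuousOn).aestronglyMeasurable measurableSet_Ioi) ?_
  refine (ae_restrict_iff' measurableSet_Ioi).2 (Filter.Eventually.of_forall fun s hs => ?_)
  rw [norm_mul]
  exact mul_le_mul_of_nonneg_right (norm_radialKernel_le hm hs hζ) (norm_nonneg _)

theorem HalfLineBound.norm_integral_near_le (hH : HalfLineBound A S Q H) (hm : 1 ≤ m)
    (hζ : ζ.im ≠ 0) (hA : 0 ≤ A) (hS : 1 ≤ S) (hQ : 0 ≤ Q) {s₀ ε : ℝ} (hs₀ : 0 < s₀)
    (hre : ζ.re = s₀ ^ m) (hε : 0 < ε) (hε' : ε ≤ s₀ / 2) (hεS : S * ε ≤ 1) :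
    ‖∫ s in (s₀ - ε)..(s₀ + ε), radialKernel m ζ s * H s‖ ≤
      (m * 2 ^ (m - 1) + 2 * π + 5 * A) * Q := by
  have hle : s₀ - ε ≤ s₀ + ε := by linarith
  have hsub : Set.uIcc (s₀ - ε) (s₀ + ε) ⊆ Set.Ioi 0 := by
    rw [Set.uIcc_of_le hle]
    intro x hx
    have := hx.1
    exact Set.mem_Ioi.2 (by linarith)
  have hk := ((continuousOn_radialKernel m hζ).mono hsub)
  have i1 : IntervalIntegrable (fun s => radialKernel m ζ s * (H s - H s₀)) volume
      (s₀ - ε) (s₀ + ε) :=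
    (hk.mul ((hH.continuous.sub continuous_const).continuousOn)).intervalIntegrable
  have i2 : IntervalIntegrable (fun s => radialKernel m ζ s * H s₀) volume (s₀ - ε) (s₀ + ε) :=
    (hk.mul continuousOn_const).intervalIntegrable
  have split : ∫ s in (s₀ - ε)..(s₀ + ε), radialKernel m ζ s * H s =
      (∫ s in (s₀ - ε)..(s₀ + ε), radialKernel m ζ s * (H s - H s₀)) +
      (∫ s in (s₀ - ε)..(s₀ + ε), radialKernel m ζ s) * H s₀ := by
    rw [← intervalIntegral.integral_mul_const, ← intervalIntegral.integral_add i1 i2]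
    congr 1; ext s; ring
  have b2 : ‖(∫ s in (s₀ - ε)..(s₀ + ε), radialKernel m ζ s) * H s₀‖ ≤
      (m * 2 ^ (m - 1) + 2 * π) * Q := by
    rw [norm_mul]
    exact mul_le_mul (norm_integral_radialKernel_le hm hs₀ hε hε' hζ hre) (hH.norm_le _ hs₀)
      (norm_nonneg _) (by positivity)
  have hr : (-1 : ℝ) < -(1 / 2) := by norm_num
  have j1 : IntervalIntegrable (fun s : ℝ => |s - s₀| ^ (-(1 / 2) : ℝ)) volume
      (s₀ - ε) (s₀ + ε) := by
    have := (intervalIntegrable_abs_rpow_symm hr hε.le).comp_sub_right s₀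
    convert this using 1 <;> ring
  have j2 : ∫ s in (s₀ - ε)..(s₀ + ε), |s - s₀| ^ (-(1 / 2) : ℝ) = 4 * √ε := by
    rw [intervalIntegral.integral_comp_sub_right (fun x => |x| ^ (-(1 / 2) : ℝ)) s₀,
      sub_sub_cancel_left, add_sub_cancel_left, integral_abs_rpow_symm hr hε.le, Real.sqrt_eq_rpow]
    norm_num
    ring
  have b1 : ‖∫ s in (s₀ - ε)..(s₀ + ε), radialKernel m ζ s * (H s - H s₀)‖ ≤ 5 * A * Q := by
    have hb : ∀ s ∈ Set.Ioc (s₀ - ε) (s₀ + ε), ‖radialKernel m ζ s * (H s - H s₀)‖ ≤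
        A * Q * (√S * |s - s₀| ^ (-(1 / 2) : ℝ) + 1 / s₀) := by
      intro s hs
      have habs : |s - s₀| ≤ s₀ / 2 := by
        rw [abs_le]; constructor <;> linarith [hs.1, hs.2]
      have hspos : 0 < s := by linarith [hs.1]
      rcases eq_or_ne s s₀ with rfl | hne
      · simp only [sub_self, mul_zero, norm_zero]
        positivity
      have hx : 0 < |s - s₀| := abs_pos.2 (sub_ne_zero.2 hne)
      have hk1 := norm_radialKernel_mul_le_one hm hspos hs₀ hζ hre
      have hk2 : ‖radialKernel m ζ s‖ * √|s - s₀| ≤ |s - s₀| ^ (-(1 / 2) : ℝ) := by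
        rw [Real.sqrt_eq_rpow, Real.rpow_neg hx.le, ← one_div, le_div_iff₀ (by positivity),
          mul_assoc, ← Real.rpow_add hx]
        norm_num
        exact hk1
      rw [norm_mul]
      calc ‖radialKernel m ζ s‖ * ‖H s - H s₀‖
          ≤ ‖radialKernel m ζ s‖ * (A * Q * (√(S * |s - s₀|) + |s - s₀| / s₀)) := by
            gcongr; exact hH.norm_sub_le s₀ s hs₀ habs
        _ = A * Q * (√S * (‖radialKernel m ζ s‖ * √|s - s₀|) +
            (‖radialKernel m ζ s‖ * |s - s₀|) / s₀) := by
            rw [Real.sqrt_mul (by linarith)]; ring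
        _ ≤ _ := by gcongr
    have hg : IntervalIntegrable (fun s => A * Q * (√S * |s - s₀| ^ (-(1 / 2) : ℝ) + 1 / s₀))
        volume (s₀ - ε) (s₀ + ε) :=
      ((j1.const_mul _).add intervalIntegrable_const).const_mul _
    refine (intervalIntegral.norm_integral_le_of_norm_le hle
      (Filter.Eventually.of_forall hb) hg).trans ?_
    rw [intervalIntegral.integral_const_mul,
      intervalIntegral.integral_add (j1.const_mul _) intervalIntegrable_const,
      intervalIntegral.integral_const_mul, j2, intervalIntegral.integral_const, smul_eq_mul]
    have e1 : √S * (4 * √ε) ≤ 4 := by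
      have : √S * √ε ≤ 1 := by
        rw [← Real.sqrt_mul (by linarith)]
        exact Real.sqrt_le_one.2 hεS
      linarith
    have e2 : (s₀ + ε - (s₀ - ε)) * (1 / s₀) ≤ 1 := by
      rw [mul_one_div, div_le_one hs₀]; linarith
    calc _ ≤ A * Q * (4 + 1) := by gcongr
      _ = _ := by ring
  rw [split]
  refine (norm_add_le _ _).trans ?_
  linarith

/-- The far field bound, where the kernel is at most `1 + 3 / s`. -/
theorem HalfLineBound.integral_one_add_div_le (hH : HalfLineBound A S Q H) :
    IntegrableOn (fun s => (1 + 3 / s) * ‖H s‖) (Set.Ioi 0) ∧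
      ∫ s in Set.Ioi 0, (1 + 3 / s) * ‖H s‖ ≤ 7 * Q := by
  have e : (fun s => (1 + 3 / s) * ‖H s‖) = fun s => ‖H s‖ + 3 * (‖H s‖ / s) := by
    ext s; ring
  rw [e]
  refine ⟨hH.integrableOn.add (hH.integrableOn_div.const_mul 3), ?_⟩
  rw [integral_add hH.integrableOn (hH.integrableOn_div.const_mul 3), integral_const_mul]
  linarith [hH.integral_le, hH.integral_div_le]

/-- Uniform bound of the radial resolvent integral. -/
theorem HalfLineBound.norm_integral_radialKernel_mul_le (hH : HalfLineBound A S Q H)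
    (hm : 1 ≤ m) (hζ : ζ.im ≠ 0) (hA : 0 ≤ A) (hS : 1 ≤ S) (hQ : 0 ≤ Q) :
    ‖∫ s in Set.Ioi 0, radialKernel m ζ s * H s‖ ≤
      (m * 2 ^ (m - 1) + 2 * π + 5 * A + 9) * (1 + Real.log S) * Q := by
  have hlog : 0 ≤ Real.log S := Real.log_nonneg hS
  set K := m * 2 ^ (m - 1) + 2 * π + 5 * A with hK
  have hK0 : 0 ≤ K := by positivity
  obtain ⟨hfar, hfar'⟩ := hH.integral_one_add_div_le
  rcases le_or_gt ζ.re 0 with hre | hre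
  · refine (norm_integral_le_of_norm_le hfar ((ae_restrict_iff' measurableSet_Ioi).2
      (Filter.Eventually.of_forall fun s hs => ?_))).trans (hfar'.trans ?_)
    · rw [norm_mul]
      gcongr
      refine (norm_radialKernel_le_inv hs hre).trans ?_
      have : 0 < 1 / s := one_div_pos.2 hs
      have e : 3 / s = 3 * (1 / s) := by ring
      linarith
    · have : 7 ≤ (K + 9) * (1 + Real.log S) := by nlinarith
      nlinarith
  · set s₀ := ζ.re ^ (1 / m) with hs₀
    have hs₀pos : 0 < s₀ := by positivity
    have hre' : ζ.re = s₀ ^ m := by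
      rw [hs₀, ← Real.rpow_mul hre.le, one_div_mul_cancel (by linarith), Real.rpow_one]
    set ρ := min 1 (s₀ / 2) with hρ
    have hρ0 : 0 < ρ := lt_min one_pos (by linarith)
    have hρ1 : ρ ≤ 1 := min_le_left _ _
    have hρ2 : ρ ≤ s₀ / 2 := min_le_right _ _
    set ε := ρ / S with hε
    have hε0 : 0 < ε := by positivity
    have hερ : ε ≤ ρ := div_le_self hρ0.le hS
    have hSε : S * ε ≤ 1 := by
      rw [hε, mul_div_cancel₀ _ (by linarith)]; exact hρ1
    have hρε : ρ / ε = S := by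
      rw [hε]; field_simp
    obtain ⟨im1, em1⟩ := integral_indicator_Icc_inv_sub s₀ hε0 hερ
    obtain ⟨im2, em2⟩ := integral_indicator_Icc_inv_sub' s₀ hε0 hερ
    rw [hρε] at em1 em2
    set N := Set.Ioc (s₀ - ε) (s₀ + ε) with hN
    have hNsub : N ⊆ Set.Ioi 0 := fun x hx => Set.mem_Ioi.2 (by linarith [hx.1])
    have hint := hH.integrableOn_radialKernel_mul hm hζ
    have hsplit := setIntegral_sdiff measurableSet_Ioc hint hNsub
    have hnear := hH.norm_integral_near_le hm hζ hA hS hQ hs₀pos hre' hε0 (hερ.trans hρ2) hSε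
    rw [intervalIntegral.integral_of_le (by linarith)] at hnear
    set g : ℝ → ℝ := fun s => (1 + 3 / s) * ‖H s‖ +
      Q * ((Set.Icc (s₀ + ε) (s₀ + ρ)).indicator (fun s => 1 / (s - s₀)) s +
        (Set.Icc (s₀ - ρ) (s₀ - ε)).indicator (fun s => 1 / (s₀ - s)) s) with hg
    have n1 : ∀ s, 0 ≤ (Set.Icc (s₀ + ε) (s₀ + ρ)).indicator (fun s => 1 / (s - s₀)) s :=
      fun s => Set.indicator_nonneg (fun x hx => one_div_nonneg.2 (by linarith [hx.1])) s
    have n2 : ∀ s, 0 ≤ (Set.Icc (s₀ - ρ) (s₀ - ε)).indicator (fun s => 1 / (s₀ - s)) s :=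
      fun s => Set.indicator_nonneg (fun x hx => one_div_nonneg.2 (by linarith [hx.2])) s
    have hmid : Integrable (fun s => Q *
        ((Set.Icc (s₀ + ε) (s₀ + ρ)).indicator (fun s => 1 / (s - s₀)) s +
        (Set.Icc (s₀ - ρ) (s₀ - ε)).indicator (fun s => 1 / (s₀ - s)) s)) :=
      (im1.add im2).const_mul Q
    have hgint : IntegrableOn g (Set.Ioi 0) := hfar.add hmid.integrableOn
    have hgle : ∫ s in Set.Ioi 0, g s ≤ 7 * Q + Q * (2 * Real.log S) := by
      rw [hg, integral_add hfar hmid.integrableOn]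
      refine add_le_add hfar' ((setIntegral_le_integral hmid (Filter.Eventually.of_forall
        fun s => mul_nonneg hQ (add_nonneg (n1 s) (n2 s)))).trans_eq ?_)
      rw [integral_const_mul, integral_add im1 im2, em1, em2]; ring
    have hg0 : ∀ s ∈ Set.Ioi (0 : ℝ), 0 ≤ g s := fun s hs => by
      have : 0 < s := hs
      have := n1 s
      have := n2 s
      simp only [hg]
      positivity
    have hout : ‖∫ s in Set.Ioi 0 \ N, radialKernel m ζ s * H s‖ ≤ 7 * Q + Q * (2 * Real.log S) := by
      refine (norm_integral_le_of_norm_le (hgint.mono_set Set.sdiff_subset)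
        ((ae_restrict_iff' (measurableSet_Ioi.diff measurableSet_Ioc)).2
        (Filter.Eventually.of_forall fun s hs => ?_))).trans
        ((setIntegral_mono_set hgint ((ae_restrict_iff' measurableSet_Ioi).2
        (Filter.Eventually.of_forall hg0)) (Filter.Eventually.of_forall
        (Set.sdiff_subset : Set.Ioi 0 \ N ⊆ _))).trans hgle)
      obtain ⟨hs0, hsN⟩ := hs
      have hs0' : 0 < s := hs0
      have hk := norm_radialKernel_mul_le_one hm hs0' hs₀pos hζ hre'
      rw [norm_mul]
      have h1 : 0 ≤ (1 + 3 / s) * ‖H s‖ := by positivity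
      have hkx (hne : 0 < |s - s₀|) : ‖radialKernel m ζ s‖ ≤ 1 / |s - s₀| := by
        rwa [le_div_iff₀ hne]
      rcases le_or_gt ρ |s - s₀| with hfarcase | hmidcase
      · have hpos : 0 < |s - s₀| := hρ0.trans_le hfarcase
        have : ‖radialKernel m ζ s‖ ≤ 1 + 3 / s := by
          refine (hkx hpos).trans ?_
          rcases le_total 1 (s₀ / 2) with h | h
          · rw [hρ, min_eq_left h] at hfarcase
            have : 1 / |s - s₀| ≤ 1 := by rw [div_le_one hpos]; exact hfarcase
            have : 0 ≤ 3 / s := by positivity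
            linarith
          · rw [hρ, min_eq_right h] at hfarcase
            have : 1 / |s - s₀| ≤ 3 / s := by
              rw [div_le_div_iff₀ hpos hs0']
              linarith [le_abs_self (s - s₀)]
            linarith
        calc _ ≤ (1 + 3 / s) * ‖H s‖ := by gcongr
          _ ≤ g s := le_add_of_nonneg_right (mul_nonneg hQ (add_nonneg (n1 s) (n2 s)))
      · rw [abs_lt] at hmidcase
        have hQH := hH.norm_le s hs0'
        rcases le_or_gt s (s₀ - ε) with hle | hgt
        · have hneg : s - s₀ < 0 := by linarith
          have hmem : s ∈ Set.Icc (s₀ - ρ) (s₀ - ε) := ⟨by linarith, hle⟩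
          have hk' := hkx (abs_pos.2 hneg.ne)
          rw [abs_of_neg hneg, neg_sub] at hk'
          have h0 : 0 ≤ 1 / (s₀ - s) := (norm_nonneg _).trans hk'
          calc ‖radialKernel m ζ s‖ * ‖H s‖ ≤ 1 / (s₀ - s) * Q := by gcongr
            _ ≤ g s := by
              simp only [hg, Set.indicator_of_mem hmem]
              nlinarith [mul_nonneg hQ (n1 s)]
        · have hgt' : s₀ + ε < s := by
            by_contra hcon
            exact hsN ⟨hgt, not_lt.1 hcon⟩
          have hpos : 0 < s - s₀ := by linarith
          have hmem : s ∈ Set.Icc (s₀ + ε) (s₀ + ρ) := ⟨hgt'.le, by linarith⟩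
          have hk' := hkx (abs_pos.2 hpos.ne')
          rw [abs_of_pos hpos] at hk'
          have h0 : 0 ≤ 1 / (s - s₀) := (norm_nonneg _).trans hk'
          calc ‖radialKernel m ζ s‖ * ‖H s‖ ≤ 1 / (s - s₀) * Q := by gcongr
            _ ≤ g s := by
              simp only [hg, Set.indicator_of_mem hmem]
              nlinarith [mul_nonneg hQ (n2 s)]
    have htot : ∫ s in Set.Ioi 0, radialKernel m ζ s * H s =
        (∫ s in Set.Ioi 0 \ N, radialKernel m ζ s * H s) +
        ∫ s in N, radialKernel m ζ s * H s := by
      rw [hsplit]; ring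
    rw [htot]
    refine (norm_add_le _ _).trans ((add_le_add hout hnear).trans ?_)
    have hKl : 0 ≤ K * Real.log S := by positivity
    nlinarith [mul_nonneg hKl hQ, mul_nonneg hlog hQ]

end RadialIntegral

section RayEnergy

theorem SchwartzMap.integrable_pow_mul_norm_mul_norm (φ ψ : SchwartzMap ℝ ℂ) (k : ℕ) :
    Integrable fun s : ℝ => s ^ k * (‖φ s‖ * ‖ψ s‖) := by
  have h := φ.integrable_pow_mul volume k
  have hψ : ∀ s, ‖ψ s‖ ≤ SchwartzMap.seminorm ℝ 0 0 ψ := fun s => ψ.norm_le_seminorm ℝ s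
  refine Integrable.mono' (h.mul_const (SchwartzMap.seminorm ℝ 0 0 ψ))
    (Continuous.aestronglyMeasurable (by have := φ.continuous; have := ψ.continuous; fun_prop))
    (Filter.Eventually.of_forall fun s => ?_)
  rw [norm_mul, norm_pow, Real.norm_of_nonneg (by positivity : 0 ≤ ‖φ s‖ * ‖ψ s‖), ← mul_assoc]
  gcongr
  exact hψ s

theorem SchwartzMap.integrable_pow_mul_norm_sq (φ : SchwartzMap ℝ ℂ) (k : ℕ) :
    Integrable fun s : ℝ => s ^ k * ‖φ s‖ ^ 2 := by
  simpa only [sq] using φ.integrable_pow_mul_norm_mul_norm φ k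

theorem SchwartzMap.integrable_pow_mul_norm_deriv_sq (φ : SchwartzMap ℝ ℂ) (k : ℕ) :
    Integrable fun s : ℝ => s ^ k * ‖deriv φ s‖ ^ 2 :=
  (SchwartzMap.derivCLM ℝ ℂ φ).integrable_pow_mul_norm_sq k

theorem SchwartzMap.integrable_pow_mul_norm_mul_norm_deriv (φ ψ : SchwartzMap ℝ ℂ) (k : ℕ) :
    Integrable fun s : ℝ => s ^ k * (‖φ s‖ * ‖deriv ψ s‖) :=
  φ.integrable_pow_mul_norm_mul_norm (SchwartzMap.derivCLM ℝ ℂ ψ) k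

theorem SchwartzMap.continuous_deriv (φ : SchwartzMap ℝ ℂ) : Continuous (deriv φ) :=
  (SchwartzMap.derivCLM ℝ ℂ φ).continuous

/-- The energy of a function along a ray, with respect to the measure `s ^ d ds`. -/
def rayEnergy (d : ℕ) (R : ℝ) (φ : ℝ → ℂ) : ℝ :=
  ∫ s in Set.Ioi 0, s ^ d * (R * ‖φ s‖ ^ 2 + R⁻¹ * ‖deriv φ s‖ ^ 2)

variable {d : ℕ} {R : ℝ} (φ : SchwartzMap ℝ ℂ)

theorem integrable_rayEnergy (d : ℕ) (R : ℝ) :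
    Integrable fun s : ℝ => s ^ d * (R * ‖φ s‖ ^ 2 + R⁻¹ * ‖deriv φ s‖ ^ 2) := by
  have := ((φ.integrable_pow_mul_norm_sq d).const_mul R).add
    ((φ.integrable_pow_mul_norm_deriv_sq d).const_mul R⁻¹)
  refine this.congr (Filter.Eventually.of_forall fun s => ?_)
  simp only [Pi.add_apply]
  ring

theorem rayEnergy_eq (d : ℕ) (R : ℝ) : rayEnergy d R φ =
    R * (∫ s in Set.Ioi 0, s ^ d * ‖φ s‖ ^ 2) + R⁻¹ * ∫ s in Set.Ioi 0, s ^ d * ‖deriv φ s‖ ^ 2 := by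
  rw [rayEnergy, ← integral_const_mul, ← integral_const_mul, ← integral_add
    ((φ.integrable_pow_mul_norm_sq d).const_mul R).integrableOn
    ((φ.integrable_pow_mul_norm_deriv_sq d).const_mul R⁻¹).integrableOn]
  congr 1; ext s; ring

theorem integral_Ioi_nonneg {f : ℝ → ℝ} (hf : ∀ s, 0 < s → 0 ≤ f s) :
    0 ≤ ∫ s in Set.Ioi 0, f s :=
  setIntegral_nonneg measurableSet_Ioi hf

theorem rayEnergy_nonneg (d : ℕ) (hR : 0 ≤ R) (φ : ℝ → ℂ) : 0 ≤ rayEnergy d R φ :=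
  integral_Ioi_nonneg fun s hs => by positivity

theorem integral_norm_sq_le_rayEnergy (d : ℕ) (hR : 1 ≤ R) :
    ∫ s in Set.Ioi 0, s ^ d * ‖φ s‖ ^ 2 ≤ rayEnergy d R φ := by
  rw [rayEnergy_eq]
  have h1 : 0 ≤ ∫ s in Set.Ioi 0, s ^ d * ‖φ s‖ ^ 2 :=
    integral_Ioi_nonneg fun s hs => by positivity
  have h2 : 0 ≤ R⁻¹ * ∫ s in Set.Ioi 0, s ^ d * ‖deriv φ s‖ ^ 2 :=
    mul_nonneg (by positivity) (integral_Ioi_nonneg fun s hs => by positivity)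
  nlinarith

theorem integral_norm_deriv_sq_le_rayEnergy (d : ℕ) (hR : 1 ≤ R) :
    ∫ s in Set.Ioi 0, s ^ d * ‖deriv φ s‖ ^ 2 ≤ R * rayEnergy d R φ := by
  rw [rayEnergy_eq, mul_add, ← mul_assoc R R⁻¹, mul_inv_cancel₀ (by linarith), one_mul]
  have h1 : 0 ≤ ∫ s in Set.Ioi 0, s ^ d * ‖φ s‖ ^ 2 :=
    integral_Ioi_nonneg fun s hs => by positivity
  have : 0 ≤ R * (R * ∫ s in Set.Ioi 0, s ^ d * ‖φ s‖ ^ 2) := by positivity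
  linarith

theorem integral_two_mul_norm_mul_norm_deriv_le (d : ℕ) (hR : 1 ≤ R) :
    ∫ s in Set.Ioi 0, s ^ d * (2 * (‖φ s‖ * ‖deriv φ s‖)) ≤ rayEnergy d R φ := by
  refine setIntegral_mono_on ?_ (integrable_rayEnergy φ d R).integrableOn measurableSet_Ioi
    fun s hs => ?_
  · refine (((φ.integrable_pow_mul_norm_mul_norm_deriv φ d).const_mul 2).congr
      (Filter.Eventually.of_forall fun s => ?_)).integrableOn
    ring
  · have : 0 < s := hs
    gcongr
    have hR0 : 0 < R := by linarith
    have : R * ‖φ s‖ ^ 2 + R⁻¹ * ‖deriv φ s‖ ^ 2 - 2 * (‖φ s‖ * ‖deriv φ s‖) =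
        R⁻¹ * (R * ‖φ s‖ - ‖deriv φ s‖) ^ 2 := by field_simp; ring
    have h0 : 0 ≤ R⁻¹ * (R * ‖φ s‖ - ‖deriv φ s‖) ^ 2 := by positivity
    linarith

theorem abs_two_mul_inner_le (z w : ℂ) : |2 * ⟪z, w⟫| ≤ 2 * (‖z‖ * ‖w‖) := by
  rw [abs_mul, abs_two]
  exact mul_le_mul_of_nonneg_left (abs_real_inner_le_norm z w) zero_le_two

theorem integrable_two_mul_norm_mul_norm_deriv (d : ℕ) :
    Integrable fun s : ℝ => s ^ d * (2 * (‖φ s‖ * ‖deriv φ s‖)) := by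
  refine ((φ.integrable_pow_mul_norm_mul_norm_deriv φ d).const_mul 2).congr
    (Filter.Eventually.of_forall fun s => ?_)
  ring

theorem integrable_pow_mul_inner_deriv (d : ℕ) :
    Integrable fun s : ℝ => s ^ d * (2 * ⟪φ s, deriv φ s⟫) := by
  refine Integrable.mono (integrable_two_mul_norm_mul_norm_deriv φ d)
    (Continuous.aestronglyMeasurable
      (by have := φ.continuous; have := φ.continuous_deriv; fun_prop))
    (Filter.Eventually.of_forall fun s => ?_)
  rw [norm_mul (s ^ d), norm_mul (s ^ d), Real.norm_eq_abs (2 * _), Real.norm_of_nonneg (by positivity :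
    0 ≤ 2 * (‖φ s‖ * ‖deriv φ s‖))]
  gcongr
  exact abs_two_mul_inner_le _ _

/-- Pointwise trace bound along a ray. -/
theorem pow_mul_norm_sq_le_rayEnergy (d : ℕ) (hR : 1 ≤ R) {r : ℝ} (hr : 0 < r) :
    r ^ d * ‖φ r‖ ^ 2 ≤ rayEnergy d R φ := by
  have hd : ∀ x ∈ Set.Ioi r, HasDerivAt (fun x => ‖φ x‖ ^ 2) (2 * ⟪φ x, deriv φ x⟫) x :=
    fun x _ => (φ.hasDerivAt x).norm_sq
  have hint : IntegrableOn (fun s : ℝ => 2 * ⟪φ s, deriv φ s⟫) (Set.Ioi r) := by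
    simpa using (integrable_pow_mul_inner_deriv φ 0).integrableOn (s := Set.Ioi r)
  have hint' : IntegrableOn (fun s : ℝ => ‖φ s‖ ^ 2) (Set.Ioi r) := by
    simpa using (φ.integrable_pow_mul_norm_sq 0).integrableOn (s := Set.Ioi r)
  have hI := integral_Ioi_of_hasDerivAt_of_tendsto
    (by have := φ.continuous; exact Continuous.continuousWithinAt (by fun_prop)) hd hint
    (tendsto_zero_of_hasDerivAt_of_integrableOn_Ioi hd hint hint')
  have hsub : Set.Ioi r ⊆ Set.Ioi 0 := Set.Ioi_subset_Ioi hr.le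
  have e : r ^ d * ‖φ r‖ ^ 2 = ∫ s in Set.Ioi r, r ^ d * -(2 * ⟪φ s, deriv φ s⟫) := by
    rw [integral_const_mul, integral_neg, hI]; ring
  rw [e]
  refine le_trans ?_ (integral_two_mul_norm_mul_norm_deriv_le φ d hR)
  refine le_trans (setIntegral_mono_on (hint.neg.const_mul _)
    (integrable_two_mul_norm_mul_norm_deriv φ d).integrableOn measurableSet_Ioi fun s hs => ?_)
    (setIntegral_mono_set (integrable_two_mul_norm_mul_norm_deriv φ d).integrableOn
      ((ae_restrict_iff' measurableSet_Ioi).2 (Filter.Eventually.of_forall fun s hs => ?_))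
      (Filter.Eventually.of_forall hsub))
  · have h1 : r ^ d ≤ s ^ d := pow_le_pow_left₀ hr.le (le_of_lt hs) d
    have h2 := abs_two_mul_inner_le (φ s) (deriv φ s)
    have h3 := neg_le_abs (2 * ⟪φ s, deriv φ s⟫)
    have : 0 ≤ r ^ d := by positivity
    calc r ^ d * -(2 * ⟪φ s, deriv φ s⟫) ≤ r ^ d * (2 * (‖φ s‖ * ‖deriv φ s‖)) := by
          gcongr; linarith
      _ ≤ _ := by gcongr
  · have : 0 < s := hs
    exact (by positivity : 0 ≤ s ^ d * (2 * (‖φ s‖ * ‖deriv φ s‖)))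

/-- Hardy's inequality along a ray. -/
theorem integral_pow_mul_norm_sq_le_rayEnergy (d : ℕ) (hR : 1 ≤ R) :
    ∫ s in Set.Ioi 0, s ^ d * ‖φ s‖ ^ 2 ≤ rayEnergy (d + 1) R φ := by
  have hd : ∀ x ∈ Set.Ioi (0 : ℝ), HasDerivAt (fun x => x ^ (d + 1) * ‖φ x‖ ^ 2)
      ((d + 1) * (x ^ d * ‖φ x‖ ^ 2) + x ^ (d + 1) * (2 * ⟪φ x, deriv φ x⟫)) x := fun x _ => by
    refine ((hasDerivAt_pow (d + 1) x).mul (φ.hasDerivAt x).norm_sq).congr_deriv ?_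
    push_cast
    ring
  have h1 := ((φ.integrable_pow_mul_norm_sq d).const_mul ((d : ℝ) + 1)).integrableOn
    (s := Set.Ioi 0)
  have h2 := (integrable_pow_mul_inner_deriv φ (d + 1)).integrableOn (s := Set.Ioi 0)
  have h3 := (φ.integrable_pow_mul_norm_sq (d + 1)).integrableOn (s := Set.Ioi 0)
  have hI := integral_Ioi_of_hasDerivAt_of_tendsto
    (by have := φ.continuous; exact Continuous.continuousWithinAt (by fun_prop)) hd (h1.add h2)
    (tendsto_zero_of_hasDerivAt_of_integrableOn_Ioi hd (h1.add h2) h3)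
  rw [integral_add h1 h2, integral_const_mul] at hI
  simp only [ne_eq, Nat.add_eq_zero_iff, one_ne_zero, and_false, not_false_eq_true, zero_pow,
    zero_mul, sub_zero] at hI
  have hle : -∫ s in Set.Ioi (0 : ℝ), s ^ (d + 1) * (2 * ⟪φ s, deriv φ s⟫) ≤
      rayEnergy (d + 1) R φ := by
    refine le_trans ?_ (integral_two_mul_norm_mul_norm_deriv_le φ (d + 1) hR)
    rw [← integral_neg]
    refine setIntegral_mono_on h2.neg
      (integrable_two_mul_norm_mul_norm_deriv φ (d + 1)).integrableOn measurableSet_Ioi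
      fun s hs => ?_
    have : 0 < s := hs
    rw [← mul_neg]
    gcongr
    exact (neg_le_abs _).trans (abs_two_mul_inner_le _ _)
  have h0 : 0 ≤ ∫ s in Set.Ioi 0, s ^ d * ‖φ s‖ ^ 2 :=
    integral_Ioi_nonneg fun s hs => by positivity
  have hd0 : (0 : ℝ) ≤ d := by positivity
  nlinarith [mul_nonneg hd0 h0]

end RayEnergy

section RayProduct

variable (φ ψ : SchwartzMap ℝ ℂ) {d : ℕ} {R R' : ℝ}

theorem mul_le_half_sq_add_sq_div {θ : ℝ} (hθ : 0 < θ) (a b : ℝ) :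
    a * b ≤ (θ * a ^ 2 + θ⁻¹ * b ^ 2) / 2 := by
  have : θ * a ^ 2 + θ⁻¹ * b ^ 2 - 2 * (a * b) = θ⁻¹ * (θ * a - b) ^ 2 := by
    field_simp; ring
  have h0 : 0 ≤ θ⁻¹ * (θ * a - b) ^ 2 := by positivity
  linarith

theorem norm_mul_conj_le (z w : ℂ) : ‖z * (starRingEnd ℂ) w‖ ≤ ‖z‖ ^ 2 + ‖w‖ ^ 2 := by
  rw [norm_mul, RCLike.norm_conj]
  nlinarith [sq_nonneg (‖z‖ - ‖w‖), sq_nonneg ‖z‖, sq_nonneg ‖w‖]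

theorem norm_mul_conj_sub_le (hR : 1 ≤ R) (hR' : 1 ≤ R') {a b r : ℝ} (hr : 0 < r) (hra : r ≤ a)
    (hab : a ≤ b) :
    r ^ d * ‖φ b * (starRingEnd ℂ) (ψ b) - φ a * (starRingEnd ℂ) (ψ a)‖ ≤
      √(R * R' * (b - a)) * (rayEnergy d R φ + rayEnergy d R' ψ) := by
  rcases hab.eq_or_lt with rfl | hab'
  · simp
  set Q := rayEnergy d R φ + rayEnergy d R' ψ with hQ
  have hE1 : 0 ≤ rayEnergy d R φ := rayEnergy_nonneg d (by linarith) φ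
  have hE2 : 0 ≤ rayEnergy d R' ψ := rayEnergy_nonneg d (by linarith) ψ
  have hderiv : ∀ x ∈ Set.uIcc a b, HasDerivAt (fun x => φ x * (starRingEnd ℂ) (ψ x))
      (deriv φ x * (starRingEnd ℂ) (ψ x) + φ x * (starRingEnd ℂ) (deriv ψ x)) x := fun x _ =>
    (φ.hasDerivAt x).mul (ψ.hasDerivAt x).star
  have c1 := φ.continuous
  have c2 := ψ.continuous
  have c3 := φ.continuous_deriv
  have c4 := ψ.continuous_deriv
  have cs : Continuous (starRingEnd ℂ) := Complex.continuous_conj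
  have hcont : Continuous fun x => deriv φ x * (starRingEnd ℂ) (ψ x) +
      φ x * (starRingEnd ℂ) (deriv ψ x) :=
    (c3.mul (cs.comp c2)).add (c1.mul (cs.comp c4))
  rw [← intervalIntegral.integral_eq_sub_of_hasDerivAt hderiv (hcont.intervalIntegrable a b)]
  set S := R * R' with hS
  have hS1 : 1 ≤ S := one_le_mul_of_one_le_of_one_le hR hR'
  set θ := √((b - a) / S) with hθ
  have hba : 0 < b - a := sub_pos.2 hab'
  have hθ0 : 0 < θ := Real.sqrt_pos.2 (by positivity)
  set D : ℝ → ℝ := fun s => s ^ d * ‖deriv φ s‖ ^ 2 + s ^ d * ‖deriv ψ s‖ ^ 2 with hD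
  have hDint : Integrable D :=
    (φ.integrable_pow_mul_norm_deriv_sq d).add (ψ.integrable_pow_mul_norm_deriv_sq d)
  have hDle : ∫ s in Set.Ioi 0, D s ≤ S * Q := by
    rw [hD, integral_add (φ.integrable_pow_mul_norm_deriv_sq d).integrableOn
      (ψ.integrable_pow_mul_norm_deriv_sq d).integrableOn]
    have h1 := integral_norm_deriv_sq_le_rayEnergy φ d hR
    have h2 := integral_norm_deriv_sq_le_rayEnergy ψ d hR'
    have h3 : R * rayEnergy d R φ ≤ S * rayEnergy d R φ := by
      gcongr; nlinarith
    have h4 : R' * rayEnergy d R' ψ ≤ S * rayEnergy d R' ψ := by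
      gcongr; nlinarith
    rw [hQ, mul_add]
    linarith
  have hDab : ∫ s in a..b, D s ≤ S * Q := by
    refine le_trans ?_ hDle
    rw [intervalIntegral.integral_of_le hab]
    refine setIntegral_mono_set hDint.integrableOn ((ae_restrict_iff' measurableSet_Ioi).2
      (Filter.Eventually.of_forall fun s hs => ?_)) (Filter.Eventually.of_forall
      fun s hs => ?_)
    · have : 0 < s := hs
      exact (by positivity : 0 ≤ s ^ d * ‖deriv φ s‖ ^ 2 + s ^ d * ‖deriv ψ s‖ ^ 2)
    · exact hr.trans (hra.trans_lt hs.1)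
  have hpt : ∀ s ∈ Set.Ioc a b, ‖deriv φ s * (starRingEnd ℂ) (ψ s) +
      φ s * (starRingEnd ℂ) (deriv ψ s)‖ ≤ (r ^ d)⁻¹ * ((θ * D s + θ⁻¹ * Q) / 2) := by
    intro s hs
    have hrs : r ≤ s := hra.trans hs.1.le
    have hs0 : 0 < s := hr.trans_le hrs
    have hp : r ^ d ≤ s ^ d := pow_le_pow_left₀ hr.le hrs d
    have hQs : s ^ d * ‖φ s‖ ^ 2 + s ^ d * ‖ψ s‖ ^ 2 ≤ Q :=
      add_le_add (pow_mul_norm_sq_le_rayEnergy φ d hR hs0)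
        (pow_mul_norm_sq_le_rayEnergy ψ d hR' hs0)
    rw [inv_mul_eq_div, le_div_iff₀ (by positivity)]
    have h1 : ‖deriv φ s * (starRingEnd ℂ) (ψ s) + φ s * (starRingEnd ℂ) (deriv ψ s)‖ ≤
        (θ * (‖deriv φ s‖ ^ 2 + ‖deriv ψ s‖ ^ 2) + θ⁻¹ * (‖φ s‖ ^ 2 + ‖ψ s‖ ^ 2)) / 2 := by
      refine (norm_add_le _ _).trans ?_
      rw [norm_mul, norm_mul, RCLike.norm_conj, RCLike.norm_conj, mul_comm ‖φ s‖]
      linarith [mul_le_half_sq_add_sq_div hθ0 ‖deriv φ s‖ ‖ψ s‖,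
        mul_le_half_sq_add_sq_div hθ0 ‖deriv ψ s‖ ‖φ s‖]
    calc _ ≤ _ * s ^ d := mul_le_mul_of_nonneg_left hp (norm_nonneg _)
      _ ≤ (θ * (‖deriv φ s‖ ^ 2 + ‖deriv ψ s‖ ^ 2) + θ⁻¹ * (‖φ s‖ ^ 2 + ‖ψ s‖ ^ 2)) / 2
          * s ^ d := mul_le_mul_of_nonneg_right h1 (by positivity)
      _ = (θ * D s + θ⁻¹ * (s ^ d * ‖φ s‖ ^ 2 + s ^ d * ‖ψ s‖ ^ 2)) / 2 := by
        simp only [hD]; ring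
      _ ≤ _ := by gcongr
  have i1 : IntervalIntegrable (fun s => θ * D s) volume a b :=
    (hDint.const_mul θ).intervalIntegrable
  have hbound := intervalIntegral.norm_integral_le_of_norm_le hab
    (Filter.Eventually.of_forall hpt)
    (((i1.add intervalIntegrable_const).div_const 2).const_mul _)
  rw [intervalIntegral.integral_const_mul, intervalIntegral.integral_div,
    intervalIntegral.integral_add i1 intervalIntegrable_const, intervalIntegral.integral_const_mul,
    intervalIntegral.integral_const, smul_eq_mul] at hbound
  have hrd : 0 < r ^ d := by positivity
  have hθ2 : θ ^ 2 = (b - a) / S := Real.sq_sqrt (by positivity)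
  have e1 : √(S * (b - a)) = S * θ := by
    rw [Real.sqrt_eq_iff_mul_self_eq (by positivity) (by positivity)]
    symm
    calc S * θ * (S * θ) = S ^ 2 * θ ^ 2 := by ring
      _ = S * (b - a) := by rw [hθ2]; field_simp
  have e2 : (b - a) * θ⁻¹ = S * θ := by
    rw [← div_eq_mul_inv, div_eq_iff hθ0.ne', mul_assoc, ← sq, hθ2]; field_simp
  calc _ ≤ r ^ d * ((r ^ d)⁻¹ * ((θ * (∫ s in a..b, D s) + (b - a) * (θ⁻¹ * Q)) / 2)) := by
        gcongr
    _ = (θ * (∫ s in a..b, D s) + (b - a) * θ⁻¹ * Q) / 2 := by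
        rw [mul_inv_cancel_left₀ hrd.ne']; ring
    _ ≤ (θ * (S * Q) + S * θ * Q) / 2 := by rw [e2]; gcongr
    _ = √(S * (b - a)) * Q := by rw [e1]; ring

/-- The weighted product of two Schwartz functions along a ray satisfies the hypotheses of the
one-dimensional resolvent estimate. -/
theorem halfLineBound_rayEnergy (d : ℕ) (hR : 1 ≤ R) (hR' : 1 ≤ R') :
    HalfLineBound (4 ^ (d + 1) * (d + 2)) (R * R')
      (rayEnergy (d + 1) R φ + rayEnergy (d + 1) R' ψ)
      fun s => ((s ^ (d + 1) : ℝ) : ℂ) * (φ s * (starRingEnd ℂ) (ψ s)) := by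
  have hnorm : ∀ s : ℝ, 0 < s → ‖((s ^ (d + 1) : ℝ) : ℂ) * (φ s * (starRingEnd ℂ) (ψ s))‖ ≤
      s ^ (d + 1) * ‖φ s‖ ^ 2 + s ^ (d + 1) * ‖ψ s‖ ^ 2 := fun s hs => by
    rw [norm_mul, Complex.norm_real, Real.norm_of_nonneg (by positivity), ← mul_add]
    exact mul_le_mul_of_nonneg_left (norm_mul_conj_le _ _) (by positivity)
  have hcont : Continuous fun s : ℝ => ((s ^ (d + 1) : ℝ) : ℂ) * (φ s * (starRingEnd ℂ) (ψ s)) :=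
    (Complex.continuous_ofReal.comp (continuous_pow (d + 1))).mul
      (φ.continuous.mul (Complex.continuous_conj.comp ψ.continuous))
  have i1 := ((φ.integrable_pow_mul_norm_sq (d + 1)).add
    (ψ.integrable_pow_mul_norm_sq (d + 1))).integrableOn (s := Set.Ioi 0)
  have i2 := ((φ.integrable_pow_mul_norm_sq d).add
    (ψ.integrable_pow_mul_norm_sq d)).integrableOn (s := Set.Ioi 0)
  have hnorm' : ∀ s : ℝ, 0 < s →
      ‖((s ^ (d + 1) : ℝ) : ℂ) * (φ s * (starRingEnd ℂ) (ψ s))‖ / s ≤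
      s ^ d * ‖φ s‖ ^ 2 + s ^ d * ‖ψ s‖ ^ 2 := fun s hs => by
    rw [div_le_iff₀ hs]
    refine (hnorm s hs).trans_eq ?_
    ring
  have hE1 : 0 ≤ rayEnergy (d + 1) R φ := rayEnergy_nonneg _ (by linarith) φ
  have hE2 : 0 ≤ rayEnergy (d + 1) R' ψ := rayEnergy_nonneg _ (by linarith) ψ
  have j1 : IntegrableOn (fun s : ℝ => ‖((s ^ (d + 1) : ℝ) : ℂ) *
      (φ s * (starRingEnd ℂ) (ψ s))‖) (Set.Ioi 0) := by
    refine Integrable.mono' i1 hcont.norm.aestronglyMeasurable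
      ((ae_restrict_iff' measurableSet_Ioi).2 (Filter.Eventually.of_forall fun s hs => ?_))
    rw [norm_norm]
    exact hnorm s hs
  have j2 : IntegrableOn (fun s : ℝ => ‖((s ^ (d + 1) : ℝ) : ℂ) *
      (φ s * (starRingEnd ℂ) (ψ s))‖ / s) (Set.Ioi 0) := by
    refine Integrable.mono' i2 (hcont.norm.measurable.div measurable_id).aestronglyMeasurable
      ((ae_restrict_iff' measurableSet_Ioi).2 (Filter.Eventually.of_forall fun s hs => ?_))
    rw [norm_div, norm_norm, Real.norm_of_nonneg (le_of_lt hs)]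
    exact hnorm' s hs
  refine ⟨hcont, fun s hs => ?_, j1, ?_, j2, ?_, fun s₀ s hs₀ hs => ?_⟩
  · exact (hnorm s hs).trans (add_le_add (pow_mul_norm_sq_le_rayEnergy φ _ hR hs)
      (pow_mul_norm_sq_le_rayEnergy ψ _ hR' hs))
  · refine (setIntegral_mono_on j1 i1 measurableSet_Ioi hnorm).trans ?_
    simp only [Pi.add_apply]
    rw [integral_add (φ.integrable_pow_mul_norm_sq _).integrableOn
      (ψ.integrable_pow_mul_norm_sq _).integrableOn]
    exact add_le_add (integral_norm_sq_le_rayEnergy φ _ hR) (integral_norm_sq_le_rayEnergy ψ _ hR')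
  · refine (setIntegral_mono_on j2 i2 measurableSet_Ioi hnorm').trans ?_
    simp only [Pi.add_apply]
    rw [integral_add (φ.integrable_pow_mul_norm_sq _).integrableOn
      (ψ.integrable_pow_mul_norm_sq _).integrableOn]
    linarith [integral_pow_mul_norm_sq_le_rayEnergy φ d hR,
      integral_pow_mul_norm_sq_le_rayEnergy ψ d hR']
  · set Q := rayEnergy (d + 1) R φ + rayEnergy (d + 1) R' ψ with hQ
    obtain ⟨hs1, hs2⟩ := abs_le.1 hs
    have hspos : 0 < s := by linarith
    set P : ℝ → ℂ := fun s => φ s * (starRingEnd ℂ) (ψ s) with hP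
    have hdiff : (s₀ / 2) ^ (d + 1) * ‖P s - P s₀‖ ≤ √(R * R' * |s - s₀|) * Q := by
      rcases le_total s₀ s with h | h
      · rw [abs_of_nonneg (sub_nonneg.2 h)]
        exact norm_mul_conj_sub_le φ ψ hR hR' (by linarith) (by linarith) h
      · rw [abs_of_nonpos (sub_nonpos.2 h), neg_sub, norm_sub_rev]
        exact norm_mul_conj_sub_le φ ψ hR hR' (by linarith) (by linarith) h
    have hQ0 : 0 ≤ Q := add_nonneg hE1 hE2
    have hP0 : s₀ ^ (d + 1) * ‖P s₀‖ ≤ Q := by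
      have h1 := (hnorm s₀ hs₀).trans (add_le_add (pow_mul_norm_sq_le_rayEnergy φ _ hR hs₀)
        (pow_mul_norm_sq_le_rayEnergy ψ _ hR' hs₀))
      rwa [norm_mul, Complex.norm_real, Real.norm_of_nonneg (by positivity)] at h1
    have hpow : |s ^ (d + 1) - s₀ ^ (d + 1)| ≤ |s - s₀| * (d + 1) * (2 * s₀) ^ d := by
      refine (abs_pow_sub_pow_le s s₀ (d + 1)).trans ?_
      rw [Nat.add_sub_cancel, abs_of_pos hspos, abs_of_pos hs₀]
      push_cast
      gcongr
      exact max_le (by linarith) (by linarith)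
    have e : ((s ^ (d + 1) : ℝ) : ℂ) * P s - ((s₀ ^ (d + 1) : ℝ) : ℂ) * P s₀ =
        ((s ^ (d + 1) : ℝ) : ℂ) * (P s - P s₀) + ((s ^ (d + 1) - s₀ ^ (d + 1) : ℝ) : ℂ) * P s₀ := by
      push_cast; ring
    have t1 : s ^ (d + 1) * ‖P s - P s₀‖ ≤ 4 ^ (d + 1) * (√(R * R' * |s - s₀|) * Q) := by
      have : s ^ (d + 1) ≤ 4 ^ (d + 1) * (s₀ / 2) ^ (d + 1) := by
        rw [← mul_pow]
        exact pow_le_pow_left₀ hspos.le (by linarith) _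
      calc _ ≤ 4 ^ (d + 1) * (s₀ / 2) ^ (d + 1) * ‖P s - P s₀‖ := by gcongr
        _ = 4 ^ (d + 1) * ((s₀ / 2) ^ (d + 1) * ‖P s - P s₀‖) := by ring
        _ ≤ _ := by gcongr
    have t2 : |s ^ (d + 1) - s₀ ^ (d + 1)| * ‖P s₀‖ ≤
        4 ^ (d + 1) * (d + 1) * (|s - s₀| / s₀ * Q) := by
      have h24 : (2 : ℝ) ^ d ≤ 4 ^ (d + 1) := by
        calc (2 : ℝ) ^ d ≤ 4 ^ d := pow_le_pow_left₀ (by norm_num) (by norm_num) _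
          _ ≤ 4 ^ (d + 1) := pow_le_pow_right₀ (by norm_num) (by omega)
      calc _ ≤ |s - s₀| * (d + 1) * (2 * s₀) ^ d * ‖P s₀‖ := by gcongr
        _ = 2 ^ d * (d + 1) * (|s - s₀| / s₀ * (s₀ ^ (d + 1) * ‖P s₀‖)) := by
          rw [mul_pow]; field_simp; ring
        _ ≤ _ := by gcongr
    change ‖((s ^ (d + 1) : ℝ) : ℂ) * P s - ((s₀ ^ (d + 1) : ℝ) : ℂ) * P s₀‖ ≤ _
    rw [e]
    refine (norm_add_le _ _).trans ?_
    rw [norm_mul, norm_mul, Complex.norm_real, Complex.norm_real,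
      Real.norm_of_nonneg (by positivity), Real.norm_eq_abs]
    refine (add_le_add t1 t2).trans ?_
    have p1 : 0 ≤ 4 ^ (d + 1) * (√(R * R' * |s - s₀|) * Q) := by positivity
    have p2 : 0 ≤ 4 ^ (d + 1) * (|s - s₀| / s₀ * Q) := by positivity
    have hd0 : (0 : ℝ) ≤ d := by positivity
    nlinarith [mul_nonneg hd0 p1]

end RayProduct

section Polar

variable {E F : Type*} [NormedAddCommGroup E] [NormedSpace ℝ E] [FiniteDimensional ℝ E]
  [Nontrivial E] [MeasurableSpace E] [BorelSpace E] [NormedAddCommGroup F] [NormedSpace ℝ F]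
  {μ : Measure E} [μ.IsAddHaarMeasure] {f : E → F}

theorem integral_volumeIoiPow (k : ℕ) (g : ℝ → F) :
    ∫ r, g r ∂(Measure.volumeIoiPow k) = ∫ r in Set.Ioi 0, r ^ k • g r := by
  simp only [Measure.volumeIoiPow, ENNReal.ofReal]
  rw [integral_withDensity_eq_integral_smul,
    integral_subtype_comap measurableSet_Ioi fun a ↦ Real.toNNReal (a ^ k) • g a,
    setIntegral_congr_fun measurableSet_Ioi fun x hx ↦ ?_]
  · rw [NNReal.smul_def, Real.coe_toNNReal _ (pow_nonneg hx.out.le _)]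
  · exact (measurable_subtype_coe.pow_const _).real_toNNReal

theorem integrable_volumeIoiPow_iff (k : ℕ) (g : ℝ → F) :
    Integrable (fun r : Set.Ioi (0 : ℝ) => g r) (Measure.volumeIoiPow k) ↔
      IntegrableOn (fun r => r ^ k • g r) (Set.Ioi 0) := by
  rw [integrableOn_iff_comap_subtypeVal measurableSet_Ioi, Function.comp_def,
    Measure.volumeIoiPow, integrable_withDensity_iff_integrable_smul', integrable_congr]
  · refine .of_forall ?_
    rintro ⟨x, hx : 0 < x⟩
    simp (disch := positivity) [ENNReal.toReal_ofReal]
  · fun_prop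
  · simp

theorem integrable_polar (hf : Integrable f μ) :
    Integrable (fun p : Metric.sphere (0 : E) 1 × Set.Ioi (0 : ℝ) => f (p.2.1 • p.1.1))
      (μ.toSphere.prod (Measure.volumeIoiPow (Module.finrank ℝ E - 1))) := by
  rw [← μ.measurePreserving_homeomorphUnitSphereProd.integrable_comp_emb
    (Homeomorph.measurableEmbedding _)]
  rw [← restrict_compl_singleton (μ := μ) 0, ← IntegrableOn,
    integrableOn_iff_comap_subtypeVal (by measurability)] at hf
  refine hf.congr (.of_forall fun x => ?_)
  have h := congrArg Subtype.val ((homeomorphUnitSphereProd E).symm_apply_apply x)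
  rw [homeomorphUnitSphereProd_symm_apply_coe] at h
  exact congrArg f h.symm

theorem ae_integrableOn_polar (hf : Integrable f μ) :
    ∀ᵐ ω ∂μ.toSphere, IntegrableOn
      (fun r : ℝ => r ^ (Module.finrank ℝ E - 1) • f (r • ω.1)) (Set.Ioi 0) := by
  filter_upwards [(integrable_polar hf).prod_right_ae] with ω hω
  exact (integrable_volumeIoiPow_iff _ fun r => f (r • ω.1)).1 hω

theorem integrable_integral_polar (hf : Integrable f μ) :
    Integrable (fun ω : Metric.sphere (0 : E) 1 =>
      ∫ r : ℝ in Set.Ioi 0, r ^ (Module.finrank ℝ E - 1) • f (r • ω.1)) μ.toSphere := by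
  refine (integrable_polar hf).integral_prod_left.congr (.of_forall fun ω => ?_)
  exact integral_volumeIoiPow _ fun r => f (r • ω.1)

theorem integral_eq_integral_polar (hf : Integrable f μ) :
    ∫ x, f x ∂μ = ∫ ω, ∫ r : ℝ in Set.Ioi 0,
      r ^ (Module.finrank ℝ E - 1) • f (r • ω.1) ∂volume ∂μ.toSphere := by
  calc
    ∫ x, f x ∂μ = ∫ x : ({(0)}ᶜ : Set E), f x.1 ∂(μ.comap (↑)) := by
      rw [integral_subtype_comap (measurableSet_singleton _).compl, restrict_compl_singleton]
    _ = ∫ p, f (p.2.1 • p.1.1)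
        ∂(μ.toSphere.prod (Measure.volumeIoiPow (Module.finrank ℝ E - 1))) := by
      rw [← μ.measurePreserving_homeomorphUnitSphereProd.integral_comp
        (Homeomorph.measurableEmbedding _)]
      refine integral_congr_ae (.of_forall fun x => ?_)
      have h := congrArg Subtype.val ((homeomorphUnitSphereProd E).symm_apply_apply x)
      rw [homeomorphUnitSphereProd_symm_apply_coe] at h
      exact congrArg f h.symm
    _ = _ := by
      rw [integral_prod _ (integrable_polar hf)]
      exact integral_congr_ae (.of_forall fun ω =>
        integral_volumeIoiPow _ fun r => f (r • ω.1))

end Polar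

section Symbol

variable {E : Type*} [NormedAddCommGroup E] [InnerProductSpace ℝ E] [FiniteDimensional ℝ E]
  [MeasurableSpace E] [BorelSpace E] {a : E → ℝ} {m : ℝ} {ζ : ℂ} {R R' : ℝ}

theorem exists_le_of_homogeneous (ha : Continuous a)
    (hhom : ∀ t : ℝ, 0 < t → ∀ ξ, a (t • ξ) = t * a ξ) (hpos : ∀ ξ, ξ ≠ 0 → 0 < a ξ) :
    ∃ c > 0, ∀ ξ, ξ ≠ 0 → c * ‖ξ‖ ≤ a ξ := by
  rcases subsingleton_or_nontrivial E with h | h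
  · exact ⟨1, one_pos, fun ξ hξ => (hξ (Subsingleton.elim _ _)).elim⟩
  obtain ⟨ω, hω, hmin⟩ := (isCompact_sphere (0 : E) 1).exists_isMinOn
    (NormedSpace.sphere_nonempty.2 zero_le_one) ha.continuousOn
  have hω0 : ω ≠ 0 := ne_zero_of_mem_unit_sphere ⟨ω, hω⟩
  refine ⟨a ω, hpos ω hω0, fun ξ hξ => ?_⟩
  have hξ' : 0 < ‖ξ‖ := norm_pos_iff.2 hξ
  have h1 : a ω ≤ a (‖ξ‖⁻¹ • ξ) := hmin (by simp [norm_smul, hξ'.ne'])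
  rw [hhom _ (inv_pos.2 hξ'), inv_mul_eq_div, le_div_iff₀ hξ'] at h1
  exact h1

/-- The symbol of `|D|^(m-1) (ζ - a(D)^m)⁻¹`. -/
def resolventSymbol (a : E → ℝ) (m : ℝ) (ζ : ℂ) (ξ : E) : ℂ :=
  ((‖ξ‖ ^ (m - 1) : ℝ) : ℂ) * (ζ - ((a ξ ^ m : ℝ) : ℂ))⁻¹

theorem measurable_resolventSymbol (ha : Continuous a) (m : ℝ) (ζ : ℂ) :
    Measurable (resolventSymbol a m ζ) := by
  have := ha.measurable
  unfold resolventSymbol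
  fun_prop

theorem exists_norm_resolventSymbol_le {c : ℝ} (hc : 0 < c) (hca : ∀ ξ, ξ ≠ 0 → c * ‖ξ‖ ≤ a ξ)
    (hm : 1 < m) (hζ : ζ.im ≠ 0) : ∃ K > 0, ∀ ξ, ‖resolventSymbol a m ζ ξ‖ ≤ K := by
  have hζ' : 0 < |ζ.im| := abs_pos.2 hζ
  refine ⟨(c⁻¹) ^ (m - 1) * ((1 + ‖ζ‖) / |ζ.im| + 1), by positivity, fun ξ => ?_⟩
  rcases eq_or_ne ξ 0 with rfl | hξ
  · rw [resolventSymbol, norm_zero, Real.zero_rpow (by linarith)]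
    simp only [Complex.ofReal_zero, zero_mul, norm_zero]
    positivity
  have h0 : 0 < ‖ξ‖ := norm_pos_iff.2 hξ
  have ha : 0 < a ξ := (mul_pos hc h0).trans_le (hca ξ hξ)
  have hk := norm_radialKernel_le hm.le ha hζ
  have hle : ‖ξ‖ ^ (m - 1) ≤ c⁻¹ ^ (m - 1) * a ξ ^ (m - 1) := by
    rw [← Real.mul_rpow (by positivity) ha.le]
    refine Real.rpow_le_rpow h0.le ?_ (by linarith)
    rw [inv_mul_eq_div, le_div_iff₀ hc, mul_comm]
    exact hca ξ hξ
  calc _ = ‖ξ‖ ^ (m - 1) * ‖(ζ - ((a ξ ^ m : ℝ) : ℂ))⁻¹‖ := by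
        rw [resolventSymbol, norm_mul, Complex.norm_real, Real.norm_of_nonneg (by positivity)]
    _ ≤ c⁻¹ ^ (m - 1) * a ξ ^ (m - 1) * ‖(ζ - ((a ξ ^ m : ℝ) : ℂ))⁻¹‖ := by gcongr
    _ = c⁻¹ ^ (m - 1) * ‖radialKernel m ζ (a ξ)‖ := by
        rw [radialKernel, norm_mul, Complex.norm_real, Real.norm_of_nonneg (by positivity),
          mul_assoc]
    _ ≤ _ := by gcongr

theorem resolventSymbol_ray (hhom : ∀ t : ℝ, 0 < t → ∀ ξ, a (t • ξ) = t * a ξ)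
    {ω : E} (hω : ‖ω‖ = 1) (hpos : 0 < a ω) {r : ℝ} (hr : 0 < r) :
    resolventSymbol a m ζ (r • ω) =
      (((a ω ^ m)⁻¹ : ℝ) : ℂ) * radialKernel m (ζ * ((a ω ^ m)⁻¹ : ℝ)) r := by
  have hc : ((a ω ^ m : ℝ) : ℂ) ≠ 0 := Complex.ofReal_ne_zero.2 (by positivity)
  rw [resolventSymbol, radialKernel, hhom r hr, norm_smul, hω, mul_one, Real.norm_of_nonneg hr.le,
    Real.mul_rpow hr.le hpos.le]
  push_cast
  have e : ζ * ((a ω ^ m : ℝ) : ℂ)⁻¹ - ((r ^ m : ℝ) : ℂ) =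
      ((a ω ^ m : ℝ) : ℂ)⁻¹ * (ζ - ((r ^ m : ℝ) : ℂ) * ((a ω ^ m : ℝ) : ℂ)) := by
    field_simp
  rw [e, mul_inv, inv_inv, mul_left_comm, inv_mul_cancel_left₀ hc]

/-- The restriction of a Schwartz function to the line spanned by a unit vector. -/
def SchwartzMap.ray (f : SchwartzMap E ℂ) (ω : Metric.sphere (0 : E) 1) : SchwartzMap ℝ ℂ :=
  SchwartzMap.compCLMOfAntilipschitz ℝ (K := 1)
    (ContinuousLinearMap.toSpanSingleton ℝ ω.1).hasTemperateGrowth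
    (AntilipschitzWith.of_le_mul_dist fun x y => by
      simp [dist_eq_norm, ← sub_smul, norm_smul]) f

theorem SchwartzMap.ray_apply (f : SchwartzMap E ℂ) (ω : Metric.sphere (0 : E) 1) (r : ℝ) :
    f.ray ω r = f (r • ω.1) := rfl

theorem SchwartzMap.norm_deriv_ray_le (f : SchwartzMap E ℂ) (ω : Metric.sphere (0 : E) 1)
    (r : ℝ) : ‖deriv (f.ray ω) r‖ ≤ ‖fderiv ℝ f (r • ω.1)‖ := by
  have h : HasDerivAt (f.ray ω) (fderiv ℝ f (r • ω.1) ω.1) r := by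
    have h1 : HasDerivAt (fun r : ℝ => r • ω.1) ω.1 r := by
      simpa using (hasDerivAt_id r).smul_const ω.1
    exact (f.differentiableAt (x := r • ω.1)).hasFDerivAt.comp_hasDerivAt r h1
  rw [h.deriv]
  simpa using (fderiv ℝ f (r • ω.1)).le_opNorm ω.1

theorem SchwartzMap.integrable_norm_sq (f : SchwartzMap E ℂ) : Integrable fun x => ‖f x‖ ^ 2 :=
  (f.memLp 2 volume).integrable_norm_pow (by norm_num)

theorem SchwartzMap.integrable_norm_fderiv_sq (f : SchwartzMap E ℂ) :
    Integrable fun x => ‖fderiv ℝ f x‖ ^ 2 :=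
  ((SchwartzMap.fderivCLM ℝ E ℂ f).memLp 2 volume).integrable_norm_pow (by norm_num)

/-- The scaled energy of a function on the whole space. -/
def energy (R : ℝ) (f : E → ℂ) : ℝ :=
  ∫ x, (R * ‖f x‖ ^ 2 + R⁻¹ * ‖fderiv ℝ f x‖ ^ 2)

theorem integrable_energy (R : ℝ) (f : SchwartzMap E ℂ) :
    Integrable fun x => R * ‖f x‖ ^ 2 + R⁻¹ * ‖fderiv ℝ f x‖ ^ 2 :=
  (f.integrable_norm_sq.const_mul R).add (f.integrable_norm_fderiv_sq.const_mul R⁻¹)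

theorem ae_rayEnergy_le (hR : 1 ≤ R) (f : SchwartzMap E ℂ) [Nontrivial E] :
    ∀ᵐ ω ∂(volume : Measure E).toSphere, rayEnergy (Module.finrank ℝ E - 1) R (f.ray ω) ≤
      ∫ r : ℝ in Set.Ioi 0, r ^ (Module.finrank ℝ E - 1) •
        (R * ‖f (r • ω.1)‖ ^ 2 + R⁻¹ * ‖fderiv ℝ f (r • ω.1)‖ ^ 2) := by
  filter_upwards [ae_integrableOn_polar (integrable_energy R f)] with ω hω
  refine setIntegral_mono_on (integrable_rayEnergy (f.ray ω) _ R).integrableOn hω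
    measurableSet_Ioi fun r hr => ?_
  have hr : 0 < r := hr
  rw [smul_eq_mul, f.ray_apply]
  gcongr
  exact f.norm_deriv_ray_le ω r

theorem integrable_resolventSymbol_mul {c : ℝ} (ha : Continuous a) (hc : 0 < c)
    (hca : ∀ ξ, ξ ≠ 0 → c * ‖ξ‖ ≤ a ξ) (hm : 1 < m) (hζ : ζ.im ≠ 0) {h : E → ℂ}
    (hh : Integrable h) : Integrable fun ξ => resolventSymbol a m ζ ξ * h ξ := by
  obtain ⟨K, -, hK⟩ := exists_norm_resolventSymbol_le hc hca hm hζ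
  exact hh.bdd_mul (measurable_resolventSymbol ha m ζ).aestronglyMeasurable (.of_forall hK)

theorem SchwartzMap.integrable_mul_conj (f g : SchwartzMap E ℂ) :
    Integrable fun x => f x * (starRingEnd ℂ) (g x) := by
  refine Integrable.mono' (f.integrable_norm_sq.add g.integrable_norm_sq)
    (f.continuous.mul (Complex.continuous_conj.comp g.continuous)).aestronglyMeasurable
    (.of_forall fun x => norm_mul_conj_le _ _)

/-- The resolvent estimate with scaled energies on the Fourier side. -/
theorem exists_norm_integral_resolventSymbol_le (hE : 2 ≤ Module.finrank ℝ E)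
    (ha : Continuous a) (hhom : ∀ t : ℝ, 0 < t → ∀ ξ, a (t • ξ) = t * a ξ)
    (hpos : ∀ ξ, ξ ≠ 0 → 0 < a ξ) (hm : 1 < m) :
    ∃ C > 0, ∀ ζ : ℂ, ζ.im ≠ 0 → ∀ f g : SchwartzMap E ℂ, ∀ R R' : ℝ, 1 ≤ R → 1 ≤ R' →
      ‖∫ ξ, resolventSymbol a m ζ ξ * (f ξ * (starRingEnd ℂ) (g ξ))‖ ≤
        C * (1 + Real.log (R * R')) * (energy R f + energy R' g) := by
  obtain ⟨d, hd⟩ : ∃ d, Module.finrank ℝ E = d + 2 := ⟨_, (Nat.sub_add_cancel hE).symm⟩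
  have hd1 : Module.finrank ℝ E - 1 = d + 1 := by omega
  have : Nontrivial E := Module.nontrivial_of_finrank_pos (R := ℝ) (by omega)
  obtain ⟨c, hc, hca⟩ := exists_le_of_homogeneous ha hhom hpos
  set A : ℝ := 4 ^ (d + 1) * (d + 2) with hA
  set M : ℝ := m * 2 ^ (m - 1) + 2 * π + 5 * A + 9 with hM
  have hA0 : 0 ≤ A := by positivity
  have hM0 : 0 < M := by positivity
  refine ⟨(c ^ m)⁻¹ * M, by positivity, fun ζ hζ f g R R' hR hR' => ?_⟩
  have hS : 1 ≤ R * R' := one_le_mul_of_one_le_of_one_le hR hR'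
  have hlog : 0 ≤ 1 + Real.log (R * R') := by linarith [Real.log_nonneg hS]
  have hint := integrable_resolventSymbol_mul ha hc hca hm hζ (f.integrable_mul_conj g)
  rw [integral_eq_integral_polar hint, energy, energy,
    integral_eq_integral_polar (integrable_energy R f),
    integral_eq_integral_polar (integrable_energy R' g)]
  have If := integrable_integral_polar (integrable_energy R f)
  have Ig := integrable_integral_polar (integrable_energy R' g)
  rw [← integral_add If Ig, ← integral_const_mul]
  refine norm_integral_le_of_norm_le ((If.add Ig).const_mul _) ?_
  filter_upwards [ae_rayEnergy_le hR f, ae_rayEnergy_le hR' g] with ω hf hg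
  rw [hd1] at hf hg
  rw [hd1]
  have hω : ‖ω.1‖ = 1 := by simp
  have hω0 : ω.1 ≠ 0 := ne_zero_of_mem_unit_sphere ω
  have haω : 0 < a ω := hpos _ hω0
  have hcω : c ≤ a ω := by simpa using hca _ hω0
  have hb := (halfLineBound_rayEnergy (f.ray ω) (g.ray ω) d hR hR')
  have hE1 : 0 ≤ rayEnergy (d + 1) R (f.ray ω) := rayEnergy_nonneg _ (by linarith) _
  have hE2 : 0 ≤ rayEnergy (d + 1) R' (g.ray ω) := rayEnergy_nonneg _ (by linarith) _
  have hζ' : (ζ * ((a ω ^ m)⁻¹ : ℝ)).im ≠ 0 := by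
    rw [Complex.im_mul_ofReal]
    exact mul_ne_zero hζ (by positivity)
  have key := hb.norm_integral_radialKernel_mul_le hm.le hζ' hA0 hS (add_nonneg hE1 hE2)
  have e : ∫ r : ℝ in Set.Ioi 0, r ^ (d + 1) • (resolventSymbol a m ζ (r • ω.1) *
      (f (r • ω.1) * (starRingEnd ℂ) (g (r • ω.1)))) =
      (((a ω ^ m)⁻¹ : ℝ) : ℂ) * ∫ r : ℝ in Set.Ioi 0, radialKernel m (ζ * ((a ω ^ m)⁻¹ : ℝ)) r *
        (((r ^ (d + 1) : ℝ) : ℂ) * (f.ray ω r * (starRingEnd ℂ) (g.ray ω r))) := by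
    rw [← integral_const_mul]
    refine setIntegral_congr_fun measurableSet_Ioi fun r hr => ?_
    simp only [resolventSymbol_ray hhom hω haω hr, SchwartzMap.ray_apply, Complex.real_smul]
    ring
  rw [e, norm_mul, Complex.norm_real, Real.norm_of_nonneg (by positivity)]
  have hinv : (a ω ^ m)⁻¹ ≤ (c ^ m)⁻¹ := by
    gcongr
  calc _ ≤ (c ^ m)⁻¹ * (M * (1 + Real.log (R * R')) *
        (rayEnergy (d + 1) R (f.ray ω) + rayEnergy (d + 1) R' (g.ray ω))) :=
        mul_le_mul hinv key (norm_nonneg _) (by positivity)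
    _ = (c ^ m)⁻¹ * M * (1 + Real.log (R * R')) *
        (rayEnergy (d + 1) R (f.ray ω) + rayEnergy (d + 1) R' (g.ray ω)) := by ring
    _ ≤ _ := by
      refine mul_le_mul_of_nonneg_left (add_le_add hf hg) ?_
      positivity

end Symbol

section Fourier

open scoped FourierTransform LineDeriv

variable {E : Type*} [NormedAddCommGroup E] [InnerProductSpace ℝ E] [FiniteDimensional ℝ E]
  [MeasurableSpace E] [BorelSpace E] {a : E → ℝ} {m : ℝ} {ζ : ℂ} {R R' : ℝ}

theorem norm_sq_le_sum_orthonormalBasis {ι : Type*} [Fintype ι] (b : OrthonormalBasis ι ℝ E)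
    (T : E →L[ℝ] ℂ) : ‖T‖ ^ 2 ≤ ∑ i, ‖T (b i)‖ ^ 2 := by
  have h0 : 0 ≤ ∑ i, ‖T (b i)‖ ^ 2 := Finset.sum_nonneg fun i _ => sq_nonneg _
  have : ‖T‖ ≤ √(∑ i, ‖T (b i)‖ ^ 2) := by
    refine T.opNorm_le_bound (Real.sqrt_nonneg _) fun v => ?_
    have hv : T v = ∑ i, ⟪b i, v⟫ • T (b i) := by
      conv_lhs => rw [← b.sum_repr' v]
      simp
    rw [hv]
    refine (norm_sum_le _ _).trans ?_
    simp only [norm_smul]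
    refine (Real.sum_mul_le_sqrt_mul_sqrt _ _ _).trans_eq ?_
    rw [b.sum_sq_norm_inner_right, Real.sqrt_sq (norm_nonneg _), mul_comm]
  calc ‖T‖ ^ 2 ≤ √(∑ i, ‖T (b i)‖ ^ 2) ^ 2 := by gcongr
    _ = _ := Real.sq_sqrt h0

theorem SchwartzMap.integrable_sq_norm_mul_norm_sq (f : SchwartzMap E ℂ) :
    Integrable fun x => ‖x‖ ^ 2 * ‖f x‖ ^ 2 := by
  have h := f.integrable_pow_mul volume 2
  refine Integrable.mono' (h.mul_const (SchwartzMap.seminorm ℝ 0 0 f))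
    (Continuous.aestronglyMeasurable (by have := f.continuous; fun_prop))
    (.of_forall fun x => ?_)
  rw [Real.norm_of_nonneg (by positivity), sq ‖f x‖, ← mul_assoc]
  gcongr
  exact f.norm_le_seminorm ℝ x

theorem SchwartzMap.integral_norm_fderiv_fourier_sq_le (f : SchwartzMap E ℂ) :
    ∫ ξ, ‖fderiv ℝ (𝓕 f : SchwartzMap E ℂ) ξ‖ ^ 2 ≤
      (2 * π) ^ 2 * ∫ x, ‖x‖ ^ 2 * ‖f x‖ ^ 2 := by
  set b := stdOrthonormalBasis ℝ E
  have hT : ∀ v : E, (fun x : E => ⟪x, v⟫).HasTemperateGrowth := fun v => by fun_prop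
  have h1 : ∀ i, Integrable fun ξ => ‖fderiv ℝ (𝓕 f : SchwartzMap E ℂ) ξ (b i)‖ ^ 2 := fun i => by
    simpa only [SchwartzMap.lineDerivOp_apply_eq_fderiv] using
      (∂_{b i} (𝓕 f : SchwartzMap E ℂ)).integrable_norm_sq
  have h2 : ∀ i, ∫ ξ, ‖fderiv ℝ (𝓕 f : SchwartzMap E ℂ) ξ (b i)‖ ^ 2 =
      ∫ x, (2 * π) ^ 2 * (‖⟪b i, x⟫‖ ^ 2 * ‖f x‖ ^ 2) := fun i => by
    simp_rw [← SchwartzMap.lineDerivOp_apply_eq_fderiv, SchwartzMap.lineDerivOp_fourier_eq]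
    rw [SchwartzMap.integral_norm_sq_fourier]
    refine integral_congr_ae (.of_forall fun x => ?_)
    simp only [smul_apply, SchwartzMap.smulLeftCLM_apply_apply (hT (b i)), norm_smul,
      real_inner_comm x]
    simp [abs_of_pos Real.pi_pos, mul_pow]
  have h3 : ∀ i, Integrable fun x => (2 * π) ^ 2 * (‖⟪b i, x⟫‖ ^ 2 * ‖f x‖ ^ 2) := fun i => by
    refine Integrable.const_mul ?_ _
    refine Integrable.mono' f.integrable_sq_norm_mul_norm_sq
      (Continuous.aestronglyMeasurable (by have := f.continuous; fun_prop))
      (.of_forall fun x => ?_)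
    rw [Real.norm_of_nonneg (by positivity)]
    gcongr
    simpa using norm_inner_le_norm (𝕜 := ℝ) (b i) x
  calc ∫ ξ, ‖fderiv ℝ (𝓕 f : SchwartzMap E ℂ) ξ‖ ^ 2
      ≤ ∫ ξ, ∑ i, ‖fderiv ℝ (𝓕 f : SchwartzMap E ℂ) ξ (b i)‖ ^ 2 :=
        integral_mono (𝓕 f : SchwartzMap E ℂ).integrable_norm_fderiv_sq
          (integrable_finsetSum _ fun i _ => h1 i)
          fun ξ => norm_sq_le_sum_orthonormalBasis b _
    _ = ∑ i, ∫ x, (2 * π) ^ 2 * (‖⟪b i, x⟫‖ ^ 2 * ‖f x‖ ^ 2) := by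
        rw [integral_finsetSum _ fun i _ => h1 i]
        exact Finset.sum_congr rfl fun i _ => h2 i
    _ = ∫ x, (2 * π) ^ 2 * (‖x‖ ^ 2 * ‖f x‖ ^ 2) := by
        rw [← integral_finsetSum _ fun i _ => h3 i]
        refine integral_congr_ae (.of_forall fun x => ?_)
        simp only
        rw [← Finset.mul_sum, ← Finset.sum_mul, b.sum_sq_norm_inner_right]
    _ = _ := integral_const_mul _ _

/-- The sesquilinear form of the resolvent on the Fourier side. -/
def resolventForm (a : E → ℝ) (m : ℝ) (ζ : ℂ) (f g : SchwartzMap E ℂ) : ℂ :=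
  ∫ ξ, resolventSymbol a m ζ ξ * ((𝓕 f : SchwartzMap E ℂ) ξ *
    (starRingEnd ℂ) ((𝓕 g : SchwartzMap E ℂ) ξ))

theorem energy_fourier_le (hR : 1 ≤ R) (f : SchwartzMap E ℂ) :
    energy R (𝓕 f : SchwartzMap E ℂ) ≤ R * (∫ x, ‖f x‖ ^ 2) +
      R⁻¹ * ((2 * π) ^ 2 * ∫ x, ‖x‖ ^ 2 * ‖f x‖ ^ 2) := by
  have hR0 : 0 ≤ R⁻¹ := by positivity
  rw [energy, integral_add ((𝓕 f : SchwartzMap E ℂ).integrable_norm_sq.const_mul R)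
    ((𝓕 f : SchwartzMap E ℂ).integrable_norm_fderiv_sq.const_mul R⁻¹), integral_const_mul,
    integral_const_mul, SchwartzMap.integral_norm_sq_fourier]
  have := f.integral_norm_fderiv_fourier_sq_le
  gcongr

theorem energy_fourier_le_of_support (hR : 1 ≤ R) (f : SchwartzMap E ℂ)
    (hf : ∀ x, f x ≠ 0 → ‖x‖ ≤ 2 * R) :
    energy R (𝓕 f : SchwartzMap E ℂ) ≤ (1 + 16 * π ^ 2) * R * ∫ x, ‖f x‖ ^ 2 := by
  refine (energy_fourier_le hR f).trans ?_
  have hR0 : 0 < R := by linarith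
  have h : ∫ x, ‖x‖ ^ 2 * ‖f x‖ ^ 2 ≤ (2 * R) ^ 2 * ∫ x, ‖f x‖ ^ 2 := by
    rw [← integral_const_mul]
    refine integral_mono f.integrable_sq_norm_mul_norm_sq (f.integrable_norm_sq.const_mul _)
      fun x => ?_
    rcases eq_or_ne (f x) 0 with h0 | h0
    · simp [h0]
    · simp only
      gcongr
      exact hf x h0
  calc _ ≤ R * (∫ x, ‖f x‖ ^ 2) + R⁻¹ * ((2 * π) ^ 2 * ((2 * R) ^ 2 * ∫ x, ‖f x‖ ^ 2)) := by
        gcongr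
    _ = _ := by field_simp; ring

/-- The `L²` norm of a Schwartz function. -/
def SchwartzMap.normL2 (f : SchwartzMap E ℂ) : ℝ := √(∫ x, ‖f x‖ ^ 2)

theorem SchwartzMap.normL2_nonneg (f : SchwartzMap E ℂ) : 0 ≤ f.normL2 := Real.sqrt_nonneg _

theorem SchwartzMap.normL2_sq (f : SchwartzMap E ℂ) : f.normL2 ^ 2 = ∫ x, ‖f x‖ ^ 2 :=
  Real.sq_sqrt (integral_nonneg fun _ => sq_nonneg _)

theorem SchwartzMap.normL2_fourier (f : SchwartzMap E ℂ) :
    (𝓕 f : SchwartzMap E ℂ).normL2 = f.normL2 := by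
  rw [normL2, normL2, SchwartzMap.integral_norm_sq_fourier]

theorem SchwartzMap.integral_norm_mul_norm_le (f g : SchwartzMap E ℂ) :
    ∫ x, ‖f x‖ * ‖g x‖ ≤ f.normL2 * g.normL2 := by
  have h := integral_mul_norm_le_Lp_mul_Lq (μ := (volume : Measure E)) (f := f) (g := g)
    Real.HolderConjugate.two_two (by simpa using f.memLp 2 volume) (by simpa using g.memLp 2 volume)
  simpa [normL2, Real.sqrt_eq_rpow] using h

theorem exists_norm_resolventForm_le_mul_normL2 {c : ℝ} (hc : 0 < c)
    (hca : ∀ ξ, ξ ≠ 0 → c * ‖ξ‖ ≤ a ξ) (hm : 1 < m) (hζ : ζ.im ≠ 0) :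
    ∃ K > 0, ∀ f g : SchwartzMap E ℂ, ‖resolventForm a m ζ f g‖ ≤ K * f.normL2 * g.normL2 := by
  obtain ⟨K, hK0, hK⟩ := exists_norm_resolventSymbol_le hc hca hm hζ
  refine ⟨K, hK0, fun f g => ?_⟩
  set F : SchwartzMap E ℂ := 𝓕 f with hF
  set G : SchwartzMap E ℂ := 𝓕 g with hG
  have hi : Integrable fun x => ‖F x‖ * ‖G x‖ := by
    simpa using (F.integrable_mul_conj G).norm
  calc ‖resolventForm a m ζ f g‖ ≤ ∫ ξ, K * (‖F ξ‖ * ‖G ξ‖) := by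
        refine norm_integral_le_of_norm_le (hi.const_mul K) (.of_forall fun ξ => ?_)
        rw [norm_mul, norm_mul, RCLike.norm_conj]
        gcongr
        exact hK ξ
    _ = K * ∫ ξ, ‖F ξ‖ * ‖G ξ‖ := integral_const_mul _ _
    _ ≤ K * (F.normL2 * G.normL2) := by gcongr; exact F.integral_norm_mul_norm_le G
    _ = _ := by rw [hF, hG, f.normL2_fourier, g.normL2_fourier, mul_assoc]

section Bilinear

variable {c : ℝ}

theorem resolventForm_add_left (ha : Continuous a) (hc : 0 < c)
    (hca : ∀ ξ, ξ ≠ 0 → c * ‖ξ‖ ≤ a ξ) (hm : 1 < m) (hζ : ζ.im ≠ 0) (f₁ f₂ g : SchwartzMap E ℂ) :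
    resolventForm a m ζ (f₁ + f₂) g = resolventForm a m ζ f₁ g + resolventForm a m ζ f₂ g := by
  simp only [resolventForm]
  rw [← integral_add
    (integrable_resolventSymbol_mul ha hc hca hm hζ (SchwartzMap.integrable_mul_conj _ _))
    (integrable_resolventSymbol_mul ha hc hca hm hζ (SchwartzMap.integrable_mul_conj _ _)),
    FourierTransform.fourier_add]
  simp only [add_apply]
  congr 1; ext ξ; ring

theorem resolventForm_add_right (ha : Continuous a) (hc : 0 < c)
    (hca : ∀ ξ, ξ ≠ 0 → c * ‖ξ‖ ≤ a ξ) (hm : 1 < m) (hζ : ζ.im ≠ 0) (f g₁ g₂ : SchwartzMap E ℂ) :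
    resolventForm a m ζ f (g₁ + g₂) = resolventForm a m ζ f g₁ + resolventForm a m ζ f g₂ := by
  simp only [resolventForm]
  rw [← integral_add
    (integrable_resolventSymbol_mul ha hc hca hm hζ (SchwartzMap.integrable_mul_conj _ _))
    (integrable_resolventSymbol_mul ha hc hca hm hζ (SchwartzMap.integrable_mul_conj _ _)),
    FourierTransform.fourier_add]
  simp only [add_apply, map_add]
  congr 1; ext ξ; ring

end Bilinear

theorem resolventForm_smul (t : ℝ) (ht : t ≠ 0) (f g : SchwartzMap E ℂ) :
    resolventForm a m ζ ((t : ℂ) • f) (((t⁻¹ : ℝ) : ℂ) • g) = resolventForm a m ζ f g := by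
  have ht' : (t : ℂ) ≠ 0 := by exact_mod_cast ht
  simp only [resolventForm]
  rw [FourierTransform.fourier_smul, FourierTransform.fourier_smul]
  simp only [smul_apply, smul_eq_mul, map_mul, Complex.conj_ofReal]
  congr 1; ext ξ; push_cast; field_simp

theorem SchwartzMap.normL2_ofReal_smul (t : ℝ) (f : SchwartzMap E ℂ) :
    ((t : ℂ) • f).normL2 = |t| * f.normL2 := by
  simp only [normL2, smul_apply, norm_smul, mul_pow]
  rw [integral_const_mul, Real.sqrt_mul (by positivity), Real.sqrt_sq (norm_nonneg _)]
  simp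

/-- The resolvent estimate for functions supported in balls. -/
theorem exists_norm_resolventForm_le (hE : 2 ≤ Module.finrank ℝ E)
    (ha : Continuous a) (hhom : ∀ t : ℝ, 0 < t → ∀ ξ, a (t • ξ) = t * a ξ)
    (hpos : ∀ ξ, ξ ≠ 0 → 0 < a ξ) (hm : 1 < m) :
    ∃ C > 0, ∀ ζ : ℂ, ζ.im ≠ 0 → ∀ f g : SchwartzMap E ℂ, ∀ R R' : ℝ, 1 ≤ R → 1 ≤ R' →
      (∀ x, f x ≠ 0 → ‖x‖ ≤ 2 * R) → (∀ x, g x ≠ 0 → ‖x‖ ≤ 2 * R') →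
      ‖resolventForm a m ζ f g‖ ≤
        C * (1 + Real.log (R * R')) * ((√R * f.normL2) * (√R' * g.normL2)) := by
  obtain ⟨C, hC, h⟩ := exists_norm_integral_resolventSymbol_le hE ha hhom hpos hm
  obtain ⟨c, hc, hca⟩ := exists_le_of_homogeneous ha hhom hpos
  refine ⟨C * (1 + 16 * π ^ 2) * 2, by positivity, fun ζ hζ f g R R' hR hR' hf hg => ?_⟩
  have hR0 : 0 < R := by linarith
  have hR0' : 0 < R' := by linarith
  have hlog : 0 ≤ 1 + Real.log (R * R') := by
    linarith [Real.log_nonneg (one_le_mul_of_one_le_of_one_le hR hR')]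
  have hA0 := f.normL2_nonneg
  have hB0 := g.normL2_nonneg
  obtain ⟨K, hK0, hK⟩ := exists_norm_resolventForm_le_mul_normL2 hc hca hm hζ
  have hKfg := hK f g
  rcases hA0.eq_or_lt with hA | hA
  · rw [← hA] at hKfg ⊢
    simpa using hKfg
  rcases hB0.eq_or_lt with hB | hB
  · rw [← hB] at hKfg ⊢
    simpa using hKfg
  set A := √R * f.normL2 with hAdef
  set B := √R' * g.normL2 with hBdef
  have hA' : 0 < A := by positivity
  have hB' : 0 < B := by positivity
  have hA2 : A ^ 2 = R * f.normL2 ^ 2 := by rw [hAdef, mul_pow, Real.sq_sqrt hR0.le]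
  have hB2 : B ^ 2 = R' * g.normL2 ^ 2 := by rw [hBdef, mul_pow, Real.sq_sqrt hR0'.le]
  set t := √(B / A) with ht
  have ht0 : 0 < t := Real.sqrt_pos.2 (by positivity)
  have ht2 : t ^ 2 = B / A := Real.sq_sqrt (by positivity)
  rw [← resolventForm_smul t ht0.ne' f g]
  refine (h ζ hζ (𝓕 ((t : ℂ) • f)) (𝓕 (((t⁻¹ : ℝ) : ℂ) • g)) R R' hR hR').trans ?_
  have e1 := energy_fourier_le_of_support hR ((t : ℂ) • f) fun x hx => hf x fun h0 => hx (by
    simp [h0])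
  have e2 := energy_fourier_le_of_support hR' (((t⁻¹ : ℝ) : ℂ) • g) fun x hx => hg x fun h0 => hx (by
    simp [h0])
  rw [← SchwartzMap.normL2_sq, SchwartzMap.normL2_ofReal_smul, mul_pow, sq_abs] at e1 e2
  calc _ ≤ C * (1 + Real.log (R * R')) * ((1 + 16 * π ^ 2) * R * (t ^ 2 * f.normL2 ^ 2) +
        (1 + 16 * π ^ 2) * R' * (t⁻¹ ^ 2 * g.normL2 ^ 2)) :=
        mul_le_mul_of_nonneg_left (add_le_add e1 e2) (by positivity)
    _ = C * (1 + Real.log (R * R')) * (1 + 16 * π ^ 2) * (t ^ 2 * A ^ 2 + t⁻¹ ^ 2 * B ^ 2) := by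
        rw [hA2, hB2]; ring
    _ = _ := by rw [inv_pow, ht2]; field_simp; ring

end Fourier

section Dyadic

open scoped FourierTransform LineDeriv

variable {E : Type*} [NormedAddCommGroup E] [InnerProductSpace ℝ E] [FiniteDimensional ℝ E]
  [MeasurableSpace E] [BorelSpace E] {a : E → ℝ} {m δ : ℝ} {ζ : ℂ}

theorem SchwartzMap.normL2_le_of_norm_le {f g : SchwartzMap E ℂ} {L : ℝ} (hL : 0 ≤ L)
    (h : ∀ x, ‖f x‖ ≤ L * ‖g x‖) : f.normL2 ≤ L * g.normL2 := by
  refine Real.sqrt_le_iff.2 ⟨mul_nonneg hL g.normL2_nonneg, ?_⟩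
  rw [mul_pow, g.normL2_sq, ← integral_const_mul]
  refine integral_mono f.integrable_norm_sq (g.integrable_norm_sq.const_mul _) fun x => ?_
  simp only
  rw [← mul_pow]
  exact pow_le_pow_left₀ (norm_nonneg _) (h x) 2

theorem SchwartzMap.toReal_eLpNorm_two (f : SchwartzMap E ℂ) :
    (eLpNorm f 2 volume).toReal = f.normL2 := by
  rw [toReal_eLpNorm f.continuous.aestronglyMeasurable, lpNorm_eq_integral_norm_rpow_toReal
    (by norm_num) (by norm_num) f.continuous.aestronglyMeasurable, normL2, Real.sqrt_eq_rpow]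
  simp

theorem hasTemperateGrowth_japaneseBracket (δ : ℝ) :
    (fun x : E => √(1 + ‖x‖ ^ 2) ^ δ).HasTemperateGrowth := by
  have h : (fun x : E => √(1 + ‖x‖ ^ 2) ^ δ) = fun x : E => (1 + ‖x‖ ^ 2) ^ (1 / 2 * δ) := by
    ext x
    rw [Real.sqrt_eq_rpow, ← Real.rpow_mul (by positivity)]
  rw [h]
  exact Function.hasTemperateGrowth_one_add_norm_sq_rpow E _

/-- Multiplication of a Schwartz function by `⟨x⟩ ^ δ`. -/
def SchwartzMap.weighted (δ : ℝ) (f : SchwartzMap E ℂ) : SchwartzMap E ℂ :=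
  SchwartzMap.smulLeftCLM ℂ (fun x : E => √(1 + ‖x‖ ^ 2) ^ δ) f

theorem SchwartzMap.weighted_apply (δ : ℝ) (f : SchwartzMap E ℂ) (x : E) :
    f.weighted δ x = ((√(1 + ‖x‖ ^ 2) ^ δ : ℝ) : ℂ) * f x := by
  rw [weighted, SchwartzMap.smulLeftCLM_apply_apply (hasTemperateGrowth_japaneseBracket δ),
    Complex.real_smul]

theorem SchwartzMap.norm_weighted_apply (δ : ℝ) (f : SchwartzMap E ℂ) (x : E) :
    ‖f.weighted δ x‖ = √(1 + ‖x‖ ^ 2) ^ δ * ‖f x‖ := by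
  rw [weighted_apply, norm_mul, Complex.norm_real, Real.norm_of_nonneg (by positivity)]

theorem SchwartzMap.norm_le_norm_weighted (hδ : 0 ≤ δ) (f : SchwartzMap E ℂ) (x : E) :
    ‖f x‖ ≤ ‖f.weighted δ x‖ := by
  rw [norm_weighted_apply]
  refine le_mul_of_one_le_left (norm_nonneg _) (Real.one_le_rpow ?_ hδ)
  exact Real.one_le_sqrt.2 (by nlinarith [sq_nonneg ‖x‖])

theorem SchwartzMap.norm_le_rpow_mul_norm_weighted (hδ : 0 ≤ δ) (f : SchwartzMap E ℂ) {x : E}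
    {R : ℝ} (hR : 0 < R) (hx : R ≤ ‖x‖) : ‖f x‖ ≤ R ^ (-δ) * ‖f.weighted δ x‖ := by
  rw [norm_weighted_apply, Real.rpow_neg hR.le, inv_mul_eq_div, le_div_iff₀ (by positivity),
    mul_comm]
  gcongr
  exact hx.trans (Real.le_sqrt_of_sq_le (by linarith))

/-- A smooth cutoff function, equal to one on the ball of radius `2 ^ j` and supported in the ball
of radius `2 ^ (j + 1)`. -/
def dyadicBump (E : Type*) [NormedAddCommGroup E] (j : ℕ) : ContDiffBump (0 : E) where
  rIn := 2 ^ j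
  rOut := 2 ^ (j + 1)
  rIn_pos := by positivity
  rIn_lt_rOut := pow_lt_pow_right₀ one_lt_two (Nat.lt_succ_self j)

/-- The truncation of a Schwartz function to the ball of radius `2 ^ (j + 1)`. -/
def SchwartzMap.truncation (f : SchwartzMap E ℂ) (j : ℕ) : SchwartzMap E ℂ :=
  SchwartzMap.smulLeftCLM ℂ (dyadicBump E j) f

theorem SchwartzMap.truncation_apply (f : SchwartzMap E ℂ) (j : ℕ) (x : E) :
    f.truncation j x = dyadicBump E j x • f x :=
  SchwartzMap.smulLeftCLM_apply_apply
    ((dyadicBump E j).hasCompactSupport.hasTemperateGrowth (dyadicBump E j).contDiff) f x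

theorem SchwartzMap.truncation_apply_of_le (f : SchwartzMap E ℂ) {j : ℕ} {x : E}
    (hx : ‖x‖ ≤ 2 ^ j) : f.truncation j x = f x := by
  rw [truncation_apply, (dyadicBump E j).one_of_mem_closedBall (mem_closedBall_zero_iff.2 hx), one_smul]

theorem SchwartzMap.truncation_apply_of_ge (f : SchwartzMap E ℂ) {j : ℕ} {x : E}
    (hx : 2 ^ (j + 1) ≤ ‖x‖) : f.truncation j x = 0 := by
  rw [truncation_apply, (dyadicBump E j).zero_of_le_dist
    (by rw [dist_zero_right]; exact hx), zero_smul]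

/-- The dyadic pieces of a Schwartz function. -/
def SchwartzMap.dyadicPiece (f : SchwartzMap E ℂ) : ℕ → SchwartzMap E ℂ
  | 0 => f.truncation 0
  | j + 1 => f.truncation (j + 1) - f.truncation j

theorem SchwartzMap.sum_dyadicPiece (f : SchwartzMap E ℂ) (J : ℕ) :
    ∑ j ∈ Finset.range (J + 1), f.dyadicPiece j = f.truncation J := by
  induction J with
  | zero => simp [dyadicPiece]
  | succ J ih => rw [Finset.sum_range_succ, ih, dyadicPiece]; abel

theorem SchwartzMap.norm_le_of_dyadicPiece_ne_zero (f : SchwartzMap E ℂ) (j : ℕ) {x : E}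
    (hx : f.dyadicPiece j x ≠ 0) : ‖x‖ ≤ 2 * 2 ^ j := by
  by_contra! h
  have h' : (2 : ℝ) ^ (j + 1) ≤ ‖x‖ := by rw [pow_succ']; exact h.le
  apply hx
  cases j with
  | zero => exact f.truncation_apply_of_ge h'
  | succ j =>
    rw [dyadicPiece, sub_apply, f.truncation_apply_of_ge h', f.truncation_apply_of_ge
      ((pow_le_pow_right₀ one_le_two (by omega)).trans h'), sub_zero]

theorem SchwartzMap.norm_truncation_le (f : SchwartzMap E ℂ) (j : ℕ) (x : E) :
    ‖f.truncation j x‖ ≤ ‖f x‖ := by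
  rw [truncation_apply, norm_smul, Real.norm_of_nonneg (dyadicBump E j).nonneg]
  exact mul_le_of_le_one_left (norm_nonneg _) (dyadicBump E j).le_one

theorem SchwartzMap.normL2_dyadicPiece_le (hδ : 0 ≤ δ) (f : SchwartzMap E ℂ) (j : ℕ) :
    (f.dyadicPiece j).normL2 ≤ 2 ^ δ * (2 ^ j) ^ (-δ) * (f.weighted δ).normL2 := by
  refine normL2_le_of_norm_le (by positivity) fun x => ?_
  cases j with
  | zero =>
    rw [pow_zero, Real.one_rpow, mul_one]
    refine (f.norm_truncation_le 0 x).trans ((f.norm_le_norm_weighted hδ x).trans ?_)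
    exact le_mul_of_one_le_left (norm_nonneg _) (Real.one_le_rpow one_le_two hδ)
  | succ j =>
    have e : (2 : ℝ) ^ δ * (2 ^ (j + 1)) ^ (-δ) = (2 ^ j) ^ (-δ) := by
      rw [pow_succ, Real.mul_rpow (by positivity) (by positivity), mul_left_comm,
        ← Real.rpow_add (by positivity)]
      simp
    rw [e, dyadicPiece, sub_apply]
    rcases le_or_gt ‖x‖ (2 ^ j) with h | h
    · rw [f.truncation_apply_of_le h, f.truncation_apply_of_le
        (h.trans (pow_le_pow_right₀ one_le_two (by omega))), sub_self, norm_zero]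
      positivity
    · refine le_trans ?_ (f.norm_le_rpow_mul_norm_weighted hδ (by positivity) h.le)
      rw [truncation_apply, truncation_apply, ← sub_smul, norm_smul]
      refine mul_le_of_le_one_left (norm_nonneg _) (abs_le.2 ⟨?_, ?_⟩)
      · linarith [(dyadicBump E (j + 1)).nonneg' x, (dyadicBump E j).le_one (x := x)]
      · linarith [(dyadicBump E j).nonneg' x, (dyadicBump E (j + 1)).le_one (x := x)]

theorem SchwartzMap.normL2_truncation_le (f : SchwartzMap E ℂ) (j : ℕ) :
    (f.truncation j).normL2 ≤ f.normL2 := by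
  simpa using normL2_le_of_norm_le zero_le_one fun x => by
    simpa using f.norm_truncation_le j x

theorem SchwartzMap.normL2_sub_truncation_le (hδ : 0 ≤ δ) (f : SchwartzMap E ℂ) (j : ℕ) :
    (f - f.truncation j).normL2 ≤ (2 ^ j) ^ (-δ) * (f.weighted δ).normL2 := by
  refine normL2_le_of_norm_le (by positivity) fun x => ?_
  rw [sub_apply]
  rcases le_or_gt ‖x‖ (2 ^ j) with h | h
  · rw [f.truncation_apply_of_le h, sub_self, norm_zero]
    positivity
  · refine le_trans ?_ (f.norm_le_rpow_mul_norm_weighted hδ (by positivity) h.le)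
    nth_rewrite 1 [← one_smul ℝ (f x)]
    rw [truncation_apply, ← sub_smul, norm_smul]
    refine mul_le_of_le_one_left (norm_nonneg _) (abs_le.2 ⟨?_, ?_⟩)
    · linarith [(dyadicBump E j).le_one (x := x)]
    · linarith [(dyadicBump E j).nonneg' x]

theorem one_add_log_le_rpow {x κ : ℝ} (hx : 1 ≤ x) (hκ : 0 < κ) :
    1 + Real.log x ≤ (1 + κ⁻¹) * x ^ κ := by
  have h1 := Real.log_le_rpow_div (by linarith : 0 ≤ x) hκ
  have h2 := Real.one_le_rpow hx hκ.le
  rw [add_mul, one_mul, inv_mul_eq_div]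
  linarith

theorem resolventForm_sum_sum {c : ℝ} (ha : Continuous a) (hc : 0 < c)
    (hca : ∀ ξ, ξ ≠ 0 → c * ‖ξ‖ ≤ a ξ) (hm : 1 < m) (hζ : ζ.im ≠ 0) {ι : Type*} (s : Finset ι)
    (f g : ι → SchwartzMap E ℂ) :
    resolventForm a m ζ (∑ i ∈ s, f i) (∑ j ∈ s, g j) =
      ∑ i ∈ s, ∑ j ∈ s, resolventForm a m ζ (f i) (g j) := by
  have h1 := map_sum (AddMonoidHom.mk' (fun f => resolventForm a m ζ f (∑ j ∈ s, g j))
    fun f₁ f₂ => resolventForm_add_left ha hc hca hm hζ f₁ f₂ _) f s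
  refine h1.trans (Finset.sum_congr rfl fun i _ => ?_)
  exact map_sum (AddMonoidHom.mk' (fun g => resolventForm a m ζ (f i) g)
    fun g₁ g₂ => resolventForm_add_right ha hc hca hm hζ _ g₁ g₂) g s

/-- The weighted resolvent estimate on the Fourier side. -/
theorem exists_norm_resolventForm_le_weighted (hE : 2 ≤ Module.finrank ℝ E)
    (ha : Continuous a) (hhom : ∀ t : ℝ, 0 < t → ∀ ξ, a (t • ξ) = t * a ξ)
    (hpos : ∀ ξ, ξ ≠ 0 → 0 < a ξ) (hm : 1 < m) (hδ : 1 / 2 < δ) :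
    ∃ C > 0, ∀ ζ : ℂ, ζ.im ≠ 0 → ∀ f g : SchwartzMap E ℂ,
      ‖resolventForm a m ζ f g‖ ≤ C * (f.weighted δ).normL2 * (g.weighted δ).normL2 := by
  obtain ⟨C, hC, h⟩ := exists_norm_resolventForm_le hE ha hhom hpos hm
  obtain ⟨c, hc, hca⟩ := exists_le_of_homogeneous ha hhom hpos
  have hδ0 : 0 < δ := by linarith
  set κ : ℝ := (δ - 1 / 2) / 2 with hκ
  have hκ0 : 0 < κ := by rw [hκ]; linarith
  set ρ : ℝ := 2 ^ (-κ) with hρ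
  have hρ0 : 0 < ρ := by positivity
  have hρ1 : ρ < 1 := Real.rpow_lt_one_of_one_lt_of_neg one_lt_two (by linarith)
  set M : ℝ := C * (1 + κ⁻¹) * (2 ^ δ * 2 ^ δ) with hM
  have hM0 : 0 < M := by positivity
  have hρ2 : 0 < (1 - ρ)⁻¹ := inv_pos.2 (by linarith)
  refine ⟨M * ((1 - ρ)⁻¹ * (1 - ρ)⁻¹), by positivity, fun ζ hζ f g => ?_⟩
  set A := (f.weighted δ).normL2 with hA
  set B := (g.weighted δ).normL2 with hB
  have hA0 : 0 ≤ A := SchwartzMap.normL2_nonneg _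
  have hB0 : 0 ≤ B := SchwartzMap.normL2_nonneg _
  have hpow : ∀ j : ℕ, ((2 : ℝ) ^ j) ^ κ * (√(2 ^ j) * (2 ^ j) ^ (-δ)) = ρ ^ j := fun j => by
    rw [Real.sqrt_eq_rpow, ← Real.rpow_add (by positivity), ← Real.rpow_add (by positivity), hρ,
      ← Real.rpow_natCast, ← Real.rpow_natCast, ← Real.rpow_mul (by positivity),
      ← Real.rpow_mul (by positivity), hκ]
    congr 1
    ring
  have hpiece : ∀ j k : ℕ, ‖resolventForm a m ζ (f.dyadicPiece j) (g.dyadicPiece k)‖ ≤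
      M * A * B * (ρ ^ j * ρ ^ k) := fun j k => by
    have hj : (1 : ℝ) ≤ 2 ^ j := one_le_pow₀ one_le_two
    have hk : (1 : ℝ) ≤ 2 ^ k := one_le_pow₀ one_le_two
    have hf0 := (f.dyadicPiece j).normL2_nonneg
    have hg0 := (g.dyadicPiece k).normL2_nonneg
    have hf1 := f.normL2_dyadicPiece_le hδ0.le j
    have hg1 := g.normL2_dyadicPiece_le hδ0.le k
    have hl := one_add_log_le_rpow (one_le_mul_of_one_le_of_one_le hj hk) hκ0
    calc _ ≤ _ := h ζ hζ _ _ (2 ^ j) (2 ^ k) hj hk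
          (fun x => f.norm_le_of_dyadicPiece_ne_zero j) (fun x => g.norm_le_of_dyadicPiece_ne_zero k)
      _ ≤ C * ((1 + κ⁻¹) * (2 ^ j * 2 ^ k) ^ κ) *
          ((√(2 ^ j) * (2 ^ δ * (2 ^ j) ^ (-δ) * A)) * (√(2 ^ k) * (2 ^ δ * (2 ^ k) ^ (-δ) * B))) := by
        gcongr
      _ = _ := by
        rw [← hpow j, ← hpow k, Real.mul_rpow (by positivity) (by positivity), hM]
        ring
  have hgeom : ∀ J, ∑ j ∈ Finset.range J, ρ ^ j ≤ (1 - ρ)⁻¹ := fun J => by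
    rw [← tsum_geometric_of_lt_one hρ0.le hρ1]
    exact (summable_geometric_of_lt_one hρ0.le hρ1).sum_le_tsum _ fun _ _ => by positivity
  have hgeom0 : ∀ J, 0 ≤ ∑ j ∈ Finset.range J, ρ ^ j := fun J =>
    Finset.sum_nonneg fun _ _ => by positivity
  have htrunc : ∀ J, ‖resolventForm a m ζ (f.truncation J) (g.truncation J)‖ ≤
      M * ((1 - ρ)⁻¹ * (1 - ρ)⁻¹) * A * B := fun J => by
    rw [← f.sum_dyadicPiece, ← g.sum_dyadicPiece, resolventForm_sum_sum ha hc hca hm hζ]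
    calc _ ≤ ∑ j ∈ Finset.range (J + 1), ∑ k ∈ Finset.range (J + 1),
          M * A * B * (ρ ^ j * ρ ^ k) :=
          (norm_sum_le _ _).trans (Finset.sum_le_sum fun j _ =>
            (norm_sum_le _ _).trans (Finset.sum_le_sum fun k _ => hpiece j k))
      _ = M * A * B * ((∑ j ∈ Finset.range (J + 1), ρ ^ j) *
          ∑ k ∈ Finset.range (J + 1), ρ ^ k) := by
        rw [Finset.sum_mul_sum, Finset.mul_sum]
        simp_rw [Finset.mul_sum]
      _ ≤ M * A * B * ((1 - ρ)⁻¹ * (1 - ρ)⁻¹) := by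
        have := hgeom (J + 1)
        have := hgeom0 (J + 1)
        gcongr
      _ = _ := by ring
  obtain ⟨K, hK0, hK⟩ := exists_norm_resolventForm_le_mul_normL2 hc hca hm hζ
  have hall : ∀ J : ℕ, ‖resolventForm a m ζ f g‖ ≤ M * ((1 - ρ)⁻¹ * (1 - ρ)⁻¹) * A * B +
      ((2 : ℝ) ^ (-δ)) ^ J * (K * A * g.normL2 + K * f.normL2 * B) := fun J => by
    have e : resolventForm a m ζ f g = resolventForm a m ζ (f.truncation J) (g.truncation J) +
        (resolventForm a m ζ (f - f.truncation J) g +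
          resolventForm a m ζ (f.truncation J) (g - g.truncation J)) := by
      rw [add_left_comm, ← resolventForm_add_right ha hc hca hm hζ, add_sub_cancel,
        ← resolventForm_add_left ha hc hca hm hζ, sub_add_cancel]
    have e2 : ((2 : ℝ) ^ J) ^ (-δ) = (2 ^ (-δ)) ^ J := by
      rw [← Real.rpow_natCast, ← Real.rpow_natCast, ← Real.rpow_mul (by positivity),
        ← Real.rpow_mul (by positivity), mul_comm]
    have t1 := f.normL2_sub_truncation_le hδ0.le J
    have t2 := g.normL2_sub_truncation_le hδ0.le J
    rw [e2] at t1 t2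
    have t3 := f.normL2_truncation_le J
    have g0 := g.normL2_nonneg
    have f0 := f.normL2_nonneg
    have u1 : ‖resolventForm a m ζ (f - f.truncation J) g‖ ≤
        K * ((2 ^ (-δ)) ^ J * A) * g.normL2 := (hK _ _).trans (by gcongr)
    have u2 : ‖resolventForm a m ζ (f.truncation J) (g - g.truncation J)‖ ≤
        K * f.normL2 * ((2 ^ (-δ)) ^ J * B) :=
      (hK _ _).trans (mul_le_mul (by gcongr) t2 (SchwartzMap.normL2_nonneg _) (by positivity))
    rw [e]
    refine (norm_add_le _ _).trans ((add_le_add (htrunc J) ((norm_add_le _ _).trans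
      (add_le_add u1 u2))).trans_eq ?_)
    ring
  have hlim : Filter.Tendsto (fun J : ℕ => M * ((1 - ρ)⁻¹ * (1 - ρ)⁻¹) * A * B +
      ((2 : ℝ) ^ (-δ)) ^ J * (K * A * g.normL2 + K * f.normL2 * B)) Filter.atTop
      (nhds (M * ((1 - ρ)⁻¹ * (1 - ρ)⁻¹) * A * B)) := by
    have := ((tendsto_pow_atTop_nhds_zero_of_lt_one (by positivity : (0 : ℝ) ≤ 2 ^ (-δ))
      (Real.rpow_lt_one_of_one_lt_of_neg one_lt_two (by linarith))).mul_const
      (K * A * g.normL2 + K * f.normL2 * B)).const_add (M * ((1 - ρ)⁻¹ * (1 - ρ)⁻¹) * A * B)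
    simpa using this
  exact ge_of_tendsto' hlim hall

end Dyadic

section Plancherel

open scoped FourierTransform

theorem Real.integral_fourierInv_mul_conj {V : Type*} [NormedAddCommGroup V]
    [InnerProductSpace ℝ V] [FiniteDimensional ℝ V] [MeasurableSpace V] [BorelSpace V]
    {F g : V → ℂ} (hF : Integrable F) (hg : Integrable g) :
    ∫ x, 𝓕⁻ F x * (starRingEnd ℂ) (g x) = ∫ ξ, F ξ * (starRingEnd ℂ) (𝓕 g ξ) := by
  have h := VectorFourier.integral_sesq_fourierIntegral_eq_neg_flip (μ := volume) (ν := volume)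
    (L := innerₗ V) (innerSL ℂ) Real.continuous_fourierChar continuous_inner hg hF
  rw [flip_innerₗ] at h
  exact h.symm

variable {n : ℕ}

theorem FT_eq_fourier (f : EuclideanSpace ℝ (Fin n) → ℂ) (ξ : EuclideanSpace ℝ (Fin n)) :
    FT n f ξ = ((2 * π) ^ (-(n : ℝ) / 2) : ℝ) • 𝓕 f ((2 * π)⁻¹ • ξ) := by
  rw [FT, Real.fourier_eq']
  congr 2 with x
  have hpi : (2 * π) * (2 * π)⁻¹ = 1 := mul_inv_cancel₀ (by positivity)
  rw [smul_eq_mul, real_inner_smul_right, neg_mul 2 π, neg_mul (2 * π), ← mul_assoc,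
    hpi, one_mul, Complex.ofReal_neg, neg_mul, neg_mul, mul_comm Complex.I]

theorem IFT_eq_fourierInv (F : EuclideanSpace ℝ (Fin n) → ℂ) (x : EuclideanSpace ℝ (Fin n)) :
    IFT n F x = ((2 * π) ^ (-(n : ℝ) / 2) * (2 * π) ^ n : ℝ) •
      𝓕⁻ (fun η => F ((2 * π) • η)) x := by
  have h := Measure.integral_comp_smul (volume : Measure (EuclideanSpace ℝ (Fin n)))
    (fun ξ => Complex.exp (Complex.I * ((⟪x, ξ⟫ : ℝ) : ℂ)) * F ξ) (2 * π)
  have hpos : (0 : ℝ) < (2 * π) ^ n := by positivity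
  rw [finrank_euclideanSpace_fin, abs_of_pos (inv_pos.2 hpos)] at h
  have e : 𝓕⁻ (fun η => F ((2 * π) • η)) x =
      ∫ η, Complex.exp (Complex.I * ((⟪x, (2 * π) • η⟫ : ℝ) : ℂ)) * F ((2 * π) • η) := by
    rw [Real.fourierInv_eq']
    congr 1 with η
    rw [smul_eq_mul, real_inner_smul_right, real_inner_comm, mul_comm Complex.I]
  rw [e, h, IFT, smul_smul, mul_assoc, mul_inv_cancel₀ hpos.ne', mul_one]

theorem mult_eq_fourierInv (q f : EuclideanSpace ℝ (Fin n) → ℂ) :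
    mult n q f = 𝓕⁻ (fun η => q ((2 * π) • η) * 𝓕 f η) := by
  ext x
  have hpi : (0 : ℝ) < 2 * π := by positivity
  have hc : ((2 * π) ^ (-(n : ℝ) / 2) * (2 * π) ^ n * (2 * π) ^ (-(n : ℝ) / 2) : ℝ) = 1 := by
    rw [← Real.rpow_natCast, ← Real.rpow_add hpi, ← Real.rpow_add hpi]
    ring_nf
    exact Real.rpow_zero _
  rw [mult, IFT_eq_fourierInv]
  simp only [FT_eq_fourier, smul_smul, inv_mul_cancel₀ hpi.ne', one_smul, mul_smul_comm]
  rw [Real.fourierInv_eq', Real.fourierInv_eq']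
  simp only [smul_comm _ ((2 * π) ^ (-(n : ℝ) / 2) : ℝ)]
  rw [integral_smul, smul_smul, hc, one_smul]

theorem resolventSymbol_smul {a : EuclideanSpace ℝ (Fin n) → ℝ} {m : ℝ}
    (hhom : ∀ t : ℝ, 0 < t → ∀ ξ, a (t • ξ) = t * a ξ) (hpos : ∀ ξ, ξ ≠ 0 → 0 < a ξ)
    (hm : 1 < m) {t : ℝ} (ht : 0 < t) (ζ : ℂ) (ξ : EuclideanSpace ℝ (Fin n)) :
    resolventSymbol a m ζ (t • ξ) =
      (t⁻¹ : ℝ) * resolventSymbol a m (((t ^ m)⁻¹ : ℝ) * ζ) ξ := by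
  rcases eq_or_ne ξ 0 with rfl | hξ
  · simp [resolventSymbol, Real.zero_rpow (by linarith : m - 1 ≠ 0)]
  have h1 : t ^ m ≠ 0 := (Real.rpow_pos_of_pos ht m).ne'
  have e : ζ - ((t ^ m * a ξ ^ m : ℝ) : ℂ) =
      ((t ^ m : ℝ) : ℂ) * (((t ^ m)⁻¹ : ℝ) * ζ - ((a ξ ^ m : ℝ) : ℂ)) := by
    rw [mul_sub, ← mul_assoc, ← Complex.ofReal_mul, mul_inv_cancel₀ h1, Complex.ofReal_one,
      one_mul, ← Complex.ofReal_mul]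
  have e2 : t ^ (m - 1) * (t ^ m)⁻¹ = t⁻¹ := by
    rw [Real.rpow_sub_one ht.ne']
    field_simp
  rw [resolventSymbol, resolventSymbol, hhom t ht, Real.mul_rpow ht.le (hpos ξ hξ).le, norm_smul,
    Real.norm_of_nonneg ht.le, Real.mul_rpow ht.le (norm_nonneg _), e, mul_inv, ← e2]
  push_cast
  ring

theorem integral_mult_mul_conj {a : EuclideanSpace ℝ (Fin n) → ℝ} {m : ℝ} (ha : Continuous a)
    (hhom : ∀ t : ℝ, 0 < t → ∀ ξ, a (t • ξ) = t * a ξ) (hpos : ∀ ξ, ξ ≠ 0 → 0 < a ξ)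
    (hm : 1 < m) {ζ : ℂ} (hζ : (((((2 * π) ^ m)⁻¹ : ℝ) : ℂ) * ζ).im ≠ 0)
    (f g : SchwartzMap (EuclideanSpace ℝ (Fin n)) ℂ) :
    ∫ x, mult n (resolventSymbol a m ζ) f x * (starRingEnd ℂ) (g x) =
      ((2 * π)⁻¹ : ℝ) * resolventForm a m ((((2 * π) ^ m)⁻¹ : ℝ) * ζ) f g := by
  obtain ⟨c, hc, hca⟩ := exists_le_of_homogeneous ha hhom hpos
  have hint := integrable_resolventSymbol_mul ha hc hca hm hζ (𝓕 f : SchwartzMap _ ℂ).integrable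
  rw [mult_eq_fourierInv]
  simp only [resolventSymbol_smul hhom hpos hm Real.two_pi_pos, ← SchwartzMap.fourier_coe,
    mul_assoc]
  rw [Real.integral_fourierInv_mul_conj (hint.const_mul _) g.integrable, resolventForm,
    ← integral_const_mul]
  simp only [SchwartzMap.fourier_coe, mul_assoc]

end Plancherel

theorem resolvent_type_I (n : ℕ) (hn : 2 ≤ n) (m : ℝ) (hm : 1 < m)
    (δ : ℝ) (hδ : 1 / 2 < δ)
    (a : EuclideanSpace ℝ (Fin n) → ℝ)
    (ha_cont : Continuous a)
    (ha_smooth : ContDiffOn ℝ (⊤ : ℕ∞) a {(0 : EuclideanSpace ℝ (Fin n))}ᶜ)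
    (ha_hom : ∀ t : ℝ, 0 < t → ∀ ξ, a (t • ξ) = t * a ξ)
    (ha_pos : ∀ ξ : EuclideanSpace ℝ (Fin n), ξ ≠ 0 → 0 < a ξ) :
    ∃ C > 0, ∀ ζ : ℂ, ζ.im ≠ 0 → ∀ f g : SchwartzMap (EuclideanSpace ℝ (Fin n)) ℂ,
      ‖∫ x : EuclideanSpace ℝ (Fin n),
          mult n (fun ξ => ((‖ξ‖ ^ (m - 1) : ℝ) : ℂ) * (ζ - ((a ξ ^ m : ℝ) : ℂ))⁻¹)
            (fun y => f y) x * (starRingEnd ℂ) (g x)‖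
        ≤ C * (eLpNorm (fun x => ((Real.sqrt (1 + ‖x‖ ^ 2) ^ (δ) : ℝ) : ℂ) * f x) 2 volume).toReal *
            (eLpNorm (fun x => ((Real.sqrt (1 + ‖x‖ ^ 2) ^ (δ) : ℝ) : ℂ) * g x) 2 volume).toReal := by
  obtain ⟨C, hC, h⟩ := exists_norm_resolventForm_le_weighted
    (by rwa [finrank_euclideanSpace_fin]) ha_cont ha_hom ha_pos hm hδ
  refine ⟨(2 * π)⁻¹ * C, by positivity, fun ζ hζ f g => ?_⟩
  have hs : (0 : ℝ) < ((2 * π) ^ m)⁻¹ := by positivity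
  have hζ' : (((((2 * π) ^ m)⁻¹ : ℝ) : ℂ) * ζ).im ≠ 0 := by
    rw [Complex.im_ofReal_mul]
    exact mul_ne_zero hs.ne' hζ
  simp only [← SchwartzMap.weighted_apply, SchwartzMap.toReal_eLpNorm_two]
  refine (congrArg norm
    (integral_mult_mul_conj ha_cont ha_hom ha_pos hm hζ' f g)).trans_le ?_
  rw [norm_mul, Complex.norm_real, Real.norm_of_nonneg (by positivity), mul_assoc, mul_assoc,
    ← mul_assoc C]
  exact mul_le_mul_of_nonneg_left (h _ hζ' f g) (by positivity)
end
end
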